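/- arXiv:1703.01772 — 4 statements merged into one kernel-verified Lean document; each statement's English description precedes it below -/
import Mathlib

section
/- Assume α is irrational with irrationality measure 2, i.e. for every λ > 0 there is C(λ) > 0 such that |α − u/v| ≥ C(λ)·v^(−2−λ) for all u ∈ ℤ and all positive integers v. Fix r with 1/2 < r ≤ 1, reals ε₁ > ε₂ ≥ 0 and τ > 0. Then there is a constant C such that for all B ≥ 2: |M_r(ε₁,ε₂,B) − (6(ε₁−ε₂)/(π²·max(1,α²)))·B^(2−1/r)| ≤ C·B^(1−1/(2r)+τ). -/
open Real

/-- `zoomCount α r ε₁ ε₂ B` is the number of pairs `(u,v)`, `u ∈ ℤ`, `v` a positive integer,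
with `gcd(u,v) = 1`, `max(|u|,v) ≤ B` and `ε₂·B^(−1/r) < |u/v − α| ≤ ε₁·B^(−1/r)`. -/
noncomputable def zoomCount (α r ε₁ ε₂ B : ℝ) : ℕ :=
  Set.ncard {p : ℤ × ℕ | 0 < p.2 ∧ Int.gcd p.1 (p.2 : ℤ) = 1 ∧
    ((max |p.1| (p.2 : ℤ) : ℤ) : ℝ) ≤ B ∧
    ε₂ * B ^ (-(1 / r)) < |(p.1 : ℝ) / p.2 - α| ∧
    |(p.1 : ℝ) / p.2 - α| ≤ ε₁ * B ^ (-(1 / r))}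

noncomputable def GG (x β : ℝ) (K : ℕ) : ℝ := ∑ j ∈ Finset.range K, (Int.fract (x + j*β) - 1/2)

lemma sum_res (p m : ℤ) (q : ℕ) (hq : 0 < q) (hpq : IsCoprime p (q:ℤ)) :
    ∑ j ∈ Finset.range q, ((m + j*p) % (q:ℤ)) = ∑ j ∈ Finset.range q, (j:ℤ) := by
  have hq' : (0:ℤ) < q := by exact_mod_cast hq
  have hnn : ∀ j : ℕ, 0 ≤ (m + j*p) % (q:ℤ) := fun j => Int.emod_nonneg _ hq'.ne'
  have hlt : ∀ j : ℕ, (m + j*p) % (q:ℤ) < q := fun j => Int.emod_lt_of_pos _ hq'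
  have hinj : Set.InjOn (fun j : ℕ => ((m + j*p) % (q:ℤ)).toNat) (Finset.range q : Set ℕ) := by
    intro a ha b hb hab
    simp only [Finset.coe_range, Set.mem_Iio] at ha hb
    have h1 : (m + a*p) % (q:ℤ) = (m + b*p) % (q:ℤ) := by
      have := hnn a; have := hnn b
      simp only at hab; omega
    have h2 : (q:ℤ) ∣ (a - b) * p := by
      have := Int.emod_emod_of_dvd
      have h3 := Int.ModEq.dvd (show (m + b*p) ≡ (m + a*p) [ZMOD q] from h1.symm)
      have e : m + a*p - (m + b*p) = (a - b)*p := by ring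
      rwa [e] at h3
    have h3 : (q:ℤ) ∣ (a - b) := hpq.symm.dvd_of_dvd_mul_right h2
    have := Int.eq_zero_of_abs_lt_dvd h3 (by rw [abs_lt]; constructor <;> omega)
    omega
  have himg : (Finset.range q).image (fun j : ℕ => ((m + j*p) % (q:ℤ)).toNat) = Finset.range q := by
    apply Finset.eq_of_subset_of_card_le
    · intro x hx
      simp only [Finset.mem_image, Finset.mem_range] at hx ⊢
      obtain ⟨j, hj, rfl⟩ := hx
      have := hnn j; have := hlt j; omega
    · rw [Finset.card_image_of_injOn hinj]
  conv_rhs => rw [← himg, Finset.sum_image hinj]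
  apply Finset.sum_congr rfl
  intro j _
  have := hnn j; omega

lemma sum_fract (p : ℤ) (q : ℕ) (hq : 0 < q) (hpq : IsCoprime p (q:ℤ)) (y : ℝ) :
    ∑ j ∈ Finset.range q, Int.fract (y + j*(p/q : ℝ)) = ((q:ℝ) - 1)/2 + Int.fract (q * y) := by
  have hqr : (0:ℝ) < q := by exact_mod_cast hq
  have hq' : (0:ℤ) < q := by exact_mod_cast hq
  have key : ∀ j : ℕ, Int.fract (y + j*(p/q : ℝ)) =
      (((⌊q*y⌋ + j*p) % (q:ℤ) : ℤ) : ℝ)/q + Int.fract (q*y)/q := by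
    intro j
    rw [Int.fract_eq_iff]
    have h0 := Int.emod_nonneg (⌊q*y⌋ + j*p) hq'.ne'
    have h1 := Int.emod_lt_of_pos (⌊q*y⌋ + j*p) hq'
    have h1' : (⌊q*y⌋ + j*p) % (q:ℤ) + 1 ≤ q := h1
    have h0r : (0:ℝ) ≤ (((⌊q*y⌋ + j*p) % (q:ℤ) : ℤ) : ℝ) := by exact_mod_cast h0
    have h1r : (((⌊q*y⌋ + j*p) % (q:ℤ) : ℤ) : ℝ) + 1 ≤ q := by exact_mod_cast h1'
    have f0 := Int.fract_nonneg (q*y)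
    have f1 := Int.fract_lt_one (q*y)
    refine ⟨by positivity, ?_, (⌊q*y⌋ + j*p) / (q:ℤ), ?_⟩
    · rw [← add_div, div_lt_one hqr]; linarith
    · have e := Int.emod_add_mul_ediv (⌊q*y⌋ + j*p) (q:ℤ)
      have e' : (((⌊q*y⌋ + j*p) % (q:ℤ) : ℤ) : ℝ) + q * (((⌊q*y⌋ + j*p) / (q:ℤ) : ℤ) : ℝ) = ⌊q*y⌋ + j*p := by
        exact_mod_cast e
      have e2 := Int.floor_add_fract (q*y)
      field_simp
      simp only [mul_comm y (q:ℝ)]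
      linarith
  simp_rw [key]
  rw [Finset.sum_add_distrib, ← Finset.sum_div]
  have := sum_res p ⌊q*y⌋ q hq hpq
  have h2 : ∑ j ∈ Finset.range q, ((((⌊q*y⌋ + j*p) % (q:ℤ) : ℤ)) : ℝ) = q*((q:ℝ)-1)/2 := by
    rw [← Int.cast_sum, this]
    have h3 := Finset.sum_range_id_mul_two q
    have h4 : (∑ j ∈ Finset.range q, (j:ℝ)) * 2 = q*((q:ℝ)-1) := by
      have : ((((∑ j ∈ Finset.range q, j) * 2 : ℕ)) : ℝ) = ((q*(q-1) : ℕ) : ℝ) := by rw [h3]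
      push_cast [Nat.cast_sub (show 1 ≤ q from hq)] at this
      exact this
    push_cast
    linarith
  rw [h2, Finset.sum_const, Finset.card_range, nsmul_eq_mul]
  field_simp

lemma fract_cmp (a b h : ℝ) (hab : |a - b| ≤ h) :
    -2*h + Int.fract (b + h) ≤ Int.fract a ∧ Int.fract a ≤ 2*h + Int.fract (b - h) := by
  rw [abs_le] at hab
  have h1 : ((⌊a⌋:ℤ):ℝ) ≤ ⌊b+h⌋ := by exact_mod_cast Int.floor_mono (by linarith)
  have h2 : ((⌊b-h⌋:ℤ):ℝ) ≤ ⌊a⌋ := by exact_mod_cast Int.floor_mono (by linarith)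
  unfold Int.fract
  constructor <;> linarith

lemma block (β : ℝ) (p : ℤ) (q : ℕ) (hq : 0 < q) (hpq : IsCoprime p (q:ℤ)) (H x : ℝ) (hH : 0 ≤ H)
    (h : |β - p/q| ≤ H/q^2) : |GG x β q| ≤ 2*H + 1 := by
  have hqr : (0:ℝ) < q := by exact_mod_cast hq
  have hj : ∀ j ∈ Finset.range q, |(x + j*β) - (x + j*(p/q:ℝ))| ≤ H/q := by
    intro j hj
    have : (j:ℝ) ≤ q := by exact_mod_cast (Finset.mem_range.mp hj).le
    have e : (x + j*β) - (x + j*(p/q:ℝ)) = j * (β - p/q) := by ring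
    rw [e, abs_mul, Nat.abs_cast]
    calc (j:ℝ) * |β - p/q| ≤ q * (H/q^2) := by gcongr
      _ = H/q := by field_simp
  have e1 : GG x β q = ∑ j ∈ Finset.range q, Int.fract (x + j*β) - q/2 := by
    unfold GG
    rw [Finset.sum_sub_distrib]; simp; ring
  have s1 := sum_fract p q hq hpq (x + H/q)
  have s2 := sum_fract p q hq hpq (x - H/q)
  have l : ∑ j ∈ Finset.range q, (-2*(H/q) + Int.fract ((x + H/q) + j*(p/q:ℝ))) ≤ ∑ j ∈ Finset.range q, Int.fract (x + j*β) := by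
    apply Finset.sum_le_sum
    intro j hj'
    have := (fract_cmp _ _ _ (hj j hj')).1
    rwa [show x + H/q + j*(p/q:ℝ) = x + j*(p/q:ℝ) + H/q by ring]
  have u : ∑ j ∈ Finset.range q, Int.fract (x + j*β) ≤ ∑ j ∈ Finset.range q, (2*(H/q) + Int.fract ((x - H/q) + j*(p/q:ℝ))) := by
    apply Finset.sum_le_sum
    intro j hj'
    have := (fract_cmp _ _ _ (hj j hj')).2
    rwa [show x - H/q + j*(p/q:ℝ) = x + j*(p/q:ℝ) - H/q by ring]
  rw [Finset.sum_add_distrib, s1] at l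
  rw [Finset.sum_add_distrib, s2] at u
  simp only [Finset.sum_const, Finset.card_range, nsmul_eq_mul] at l u
  have e2 : (q:ℝ) * (-2 * (H/q)) = -2*H := by field_simp
  have e3 : (q:ℝ) * (2 * (H/q)) = 2*H := by field_simp
  rw [e2] at l; rw [e3] at u
  have := Int.fract_nonneg (q * (x + H/q))
  have := Int.fract_lt_one (q * (x - H/q))
  rw [e1, abs_le]; constructor <;> linarith

lemma GG_add (x β : ℝ) (a b : ℕ) : GG x β (a + b) = GG x β a + GG (x + a*β) β b := by
  unfold GG
  rw [Finset.sum_range_add]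
  congr 1
  apply Finset.sum_congr rfl
  intro j _
  push_cast
  congr 2; ring

lemma multi (β M : ℝ) (q : ℕ) (hM : ∀ x, |GG x β q| ≤ M) (s : ℕ) (R : ℝ) (hR : ∀ x, |GG x β s| ≤ R) (a : ℕ) :
    ∀ x, |GG x β (q * a + s)| ≤ a*M + R := by
  induction a with
  | zero => intro x; simpa using hR x
  | succ a ih =>
    intro x
    rw [show q*(a+1) + s = q + (q*a+s) by ring, GG_add]
    have := abs_add_le (GG x β q) (GG (x + q*β) β (q*a+s))
    have := hM x
    have := ih (x + q*β)
    push_cast; linarith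

lemma approx (α lam C : ℝ) (hl : 0 < lam) (hC : 0 < C)
    (hm : ∀ (u : ℤ) (v : ℕ), 0 < v → |α - (u : ℝ) / v| ≥ C * (v : ℝ) ^ (-(2 + lam))) (Q : ℕ) (hQ : 0 < Q) :
    ∃ (p : ℤ) (q : ℕ), 0 < q ∧ q ≤ Q ∧ IsCoprime p (q:ℤ) ∧ |α - p/q| ≤ 1/(q:ℝ)^2 ∧ C * Q ≤ q * (Q:ℝ)^lam := by
  obtain ⟨t, h1, h2⟩ := Real.exists_rat_abs_sub_le_and_den_le α hQ
  have hqr : (0:ℝ) < t.den := by exact_mod_cast t.den_pos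
  have hQr : (0:ℝ) < Q := by exact_mod_cast hQ
  have hle : (t.den:ℝ) ≤ Q := by exact_mod_cast h2
  have e : (t:ℝ) = (t.num:ℝ)/(t.den:ℝ) := by exact_mod_cast (Rat.num_div_den t).symm
  rw [e] at h1
  have h3 := hm t.num t.den t.den_pos
  have hle2 : 1/(((Q:ℝ)+1)*t.den) ≤ 1/(Q * t.den) := by gcongr; linarith
  refine ⟨t.num, t.den, t.den_pos, h2, ?_, ?_, ?_⟩
  · rw [Int.isCoprime_iff_nat_coprime]; simpa using t.reduced
  · refine (h1.trans hle2).trans ?_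
    rw [sq]; gcongr
  · have h4 : C * (t.den : ℝ) ^ (-(2 + lam)) ≤ 1/(Q * t.den) := by linarith
    have h5 : (t.den : ℝ) ^ (-(2 + lam)) = 1/((t.den:ℝ)^2 * (t.den:ℝ)^lam) := by
      rw [Real.rpow_neg hqr.le, Real.rpow_add hqr, one_div]; norm_num
    have h6 : (t.den:ℝ)^lam ≤ (Q:ℝ)^lam := Real.rpow_le_rpow hqr.le hle hl.le
    have h7 : (0:ℝ) < (t.den:ℝ)^lam := Real.rpow_pos_of_pos hqr _
    rw [h5, mul_one_div, div_le_div_iff₀ (by positivity) (by positivity)] at h4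
    have h8 : C * Q ≤ t.den * (t.den:ℝ)^lam := by
      have : (C * Q) * t.den ≤ (t.den * (t.den:ℝ)^lam) * t.den := by nlinarith
      exact le_of_mul_le_mul_right this hqr
    refine h8.trans (by gcongr)

lemma GG_one (x β : ℝ) : |GG x β 1| ≤ 1 := by
  unfold GG
  rw [Finset.sum_range_one]
  generalize x + ((0:ℕ):ℝ)*β = y
  have := Int.fract_nonneg y
  have := Int.fract_lt_one y
  rw [abs_le]; constructor <;> linarith

lemma disc_small (α lam C H : ℝ) (hl : 0 < lam) (hC : 0 < C) (hH : 0 ≤ H)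
    (hm : ∀ (u : ℤ) (v : ℕ), 0 < v → |α - (u : ℝ) / v| ≥ C * (v : ℝ) ^ (-(2 + lam))) :
    ∃ A : ℝ, 0 < A ∧ ∀ (Q β : ℝ), |β - α| ≤ H/Q^2 → ∀ K : ℕ, (K:ℝ) ≤ Q → ∀ x, |GG x β K| ≤ A * (K:ℝ)^lam := by
  set M := 2*(1+H)+1 with hM
  have hM0 : 0 < M := by positivity
  set t : ℝ := (1/2:ℝ)^lam with ht
  have ht1 : t < 1 := Real.rpow_lt_one (by norm_num) (by norm_num) hl
  have ht0 : 0 < t := by positivity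
  refine ⟨max 1 (3*M/C/(1-t)), by positivity, ?_⟩
  set A := max 1 (3*M/C/(1-t)) with hA
  have hA1 : 1 ≤ A := le_max_left _ _
  have hA2 : 3*M/C + A*t ≤ A := by
    have : 3*M/C/(1-t) ≤ A := le_max_right _ _
    rw [div_le_iff₀ (by linarith)] at this
    linarith
  intro Q β hβ K
  induction K using Nat.strong_induction_on with
  | _ K ih =>
  intro hKQ x
  rcases Nat.lt_or_ge K 2 with h2 | h2
  · interval_cases K
    · simp [GG]; positivity
    · have := GG_one x β
      simp; linarith
  · obtain ⟨p, q, hq, hqQ, hpq, h1, h3⟩ := approx α lam C hl hC hm (K/2) (by omega)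
    have hqr : (0:ℝ) < q := by exact_mod_cast hq
    have hKr : (0:ℝ) < K := by exact_mod_cast (by omega : 0 < K)
    have hqK : (q:ℝ) ≤ K := by exact_mod_cast (by omega : q ≤ K)
    have hb : |β - p/q| ≤ (1+H)/q^2 := by
      have e : β - p/q = (β - α) + (α - p/q) := by ring
      rw [e]
      refine (abs_add_le _ _).trans ?_
      have : H/Q^2 ≤ H/q^2 := by gcongr; linarith
      rw [add_div]; linarith
    have hB := fun x => block β p q hq hpq (1+H) x (by positivity) hb
    have hs : K % q < q := Nat.mod_lt _ hq
    have hsK : ((K % q : ℕ):ℝ) ≤ K := by exact_mod_cast Nat.mod_le _ _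
    have hs2 : ((K % q : ℕ):ℝ) ≤ K * (1/2) := by
      have : 2*(K%q) ≤ K := by omega
      have : (2:ℝ)*((K%q : ℕ):ℝ) ≤ K := by exact_mod_cast this
      linarith
    have hR : ∀ x, |GG x β (K % q)| ≤ A * ((K:ℝ)^lam * t) := by
      intro x
      refine (ih _ (by omega) (by linarith) x).trans ?_
      rw [ht, ← Real.mul_rpow hKr.le (by norm_num)]
      gcongr
    have hm := multi β M q hB (K % q) _ hR (K / q) x
    rw [Nat.div_add_mod] at hm
    refine hm.trans ?_
    have ha : ((K/q : ℕ):ℝ) ≤ 3/C * (K:ℝ)^lam := by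
      have a1 : ((K/q : ℕ):ℝ) * q ≤ K := by exact_mod_cast Nat.div_mul_le_self K q
      have a2 : (K:ℝ) ≤ 3 * ((K/2 : ℕ):ℝ) := by exact_mod_cast (by omega : K ≤ 3*(K/2))
      have a3 : ((K/2 : ℕ):ℝ)^lam ≤ (K:ℝ)^lam := by
        apply Real.rpow_le_rpow (by positivity) _ hl.le
        exact_mod_cast Nat.div_le_self _ _
      have a4 : C * ((K/2 : ℕ):ℝ) ≤ q * (K:ℝ)^lam := h3.trans (by gcongr)
      have a5 : C * (((K/q : ℕ):ℝ) * q) ≤ 3*(q * (K:ℝ)^lam) := by nlinarith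
      rw [div_mul_eq_mul_div, le_div_iff₀ hC]
      refine le_of_mul_le_mul_right (a := (q:ℝ)) ?_ hqr
      linarith
    have hKl : 0 < (K:ℝ)^lam := by positivity
    calc ((K/q : ℕ):ℝ) * M + A * ((K:ℝ)^lam * t) ≤ (3/C * (K:ℝ)^lam)*M + A * ((K:ℝ)^lam * t) := by gcongr
      _ = (3*M/C + A*t) * (K:ℝ)^lam := by ring
      _ ≤ A * (K:ℝ)^lam := by gcongr

lemma disc (α lam C H : ℝ) (hl : 0 < lam) (hC : 0 < C) (hH : 0 ≤ H)
    (hm : ∀ (u : ℤ) (v : ℕ), 0 < v → |α - (u : ℝ) / v| ≥ C * (v : ℝ) ^ (-(2 + lam))) :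
    ∃ A : ℝ, 0 < A ∧ ∀ (Q β : ℝ), 1 ≤ Q → |β - α| ≤ H/Q^2 → ∀ K : ℕ, ∀ x, |GG x β K| ≤ A * (K/Q + 1) * Q^lam := by
  obtain ⟨A, hA, h⟩ := disc_small α lam C H hl hC hH hm
  set M := 2*(1+H)+1 with hM
  have hM0 : 0 < M := by positivity
  refine ⟨max A (2*M/C), by positivity, ?_⟩
  intro Q β hQ hβ K x
  have hQ0 : 0 < Q := by linarith
  have hf : 0 < ⌊Q⌋₊ := Nat.floor_pos.mpr hQ
  have hfQ : (⌊Q⌋₊:ℝ) ≤ Q := Nat.floor_le hQ0.le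
  have hfQ2 : Q ≤ 2 * (⌊Q⌋₊:ℝ) := by
    have := Nat.lt_floor_add_one Q
    have : (1:ℝ) ≤ ⌊Q⌋₊ := by exact_mod_cast hf
    linarith
  obtain ⟨p, q, hq, hqQ, hpq, h1, h3⟩ := approx α lam C hl hC hm ⌊Q⌋₊ hf
  have hqr : (0:ℝ) < q := by exact_mod_cast hq
  have hqK : (q:ℝ) ≤ Q := le_trans (by exact_mod_cast hqQ) hfQ
  have hb : |β - p/q| ≤ (1+H)/q^2 := by
    have e : β - p/q = (β - α) + (α - p/q) := by ring
    rw [e]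
    refine (abs_add_le _ _).trans ?_
    have : H/Q^2 ≤ H/q^2 := by gcongr
    rw [add_div]; linarith
  have hB := fun x => block β p q hq hpq (1+H) x (by positivity) hb
  have hs : K % q < q := Nat.mod_lt _ hq
  have hs' : ((K % q : ℕ):ℝ) ≤ Q := le_trans (by exact_mod_cast hs.le) hqK
  have hR : ∀ x, |GG x β (K % q)| ≤ A * Q^lam := by
    intro x
    refine (h Q β hβ _ hs' x).trans ?_
    gcongr
  have hm := multi β M q hB (K % q) _ hR (K / q) x
  rw [Nat.div_add_mod] at hm
  refine hm.trans ?_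
  have ha : ((K/q : ℕ):ℝ) ≤ 2/C * (K/Q) * Q^lam := by
    have a1 : ((K/q : ℕ):ℝ) * q ≤ K := by exact_mod_cast Nat.div_mul_le_self K q
    have a3 : (⌊Q⌋₊:ℝ)^lam ≤ Q^lam := Real.rpow_le_rpow (by positivity) hfQ hl.le
    have a4 : C * Q ≤ 2 * (q * Q^lam) := by
      have : (q:ℝ) * (⌊Q⌋₊:ℝ)^lam ≤ q * Q^lam := by gcongr
      nlinarith
    rw [show 2/C * (K/Q) * Q^lam = (2 * K * Q^lam)/(C*Q) by field_simp, le_div_iff₀ (by positivity)]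
    have a5 : ((K/q : ℕ):ℝ) * (C*Q) ≤ ((K/q : ℕ):ℝ) * (2 * (q * Q^lam)) := by gcongr
    have a6 : ((K/q : ℕ):ℝ) * q * Q^lam ≤ K * Q^lam := by gcongr
    linarith
  have hKl : 0 < Q^lam := by positivity
  calc ((K/q : ℕ):ℝ) * M + A * Q^lam ≤ (2/C * (K/Q) * Q^lam)*M + A * Q^lam := by gcongr
      _ = ((2*M/C) * (K/Q) + A*1) * Q^lam := by ring
      _ ≤ (max A (2*M/C) * (K/Q) + max A (2*M/C) * 1) * Q^lam := by
        gcongr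
        · exact le_max_right _ _
        · exact le_max_left _ _
      _ = _ := by ring

noncomputable def TT (α δ : ℝ) (n : ℕ) : Finset (ℤ × ℕ) :=
  (Finset.range n).biUnion fun j =>
    (Finset.Icc ⌈((j:ℝ)+1)*(α-δ)⌉ ⌊((j:ℝ)+1)*(α+δ)⌋).image (fun u => (u, j+1))

lemma mem_TT (α δ : ℝ) (n : ℕ) (p : ℤ × ℕ) : p ∈ TT α δ n ↔
    1 ≤ p.2 ∧ p.2 ≤ n ∧ (p.2:ℝ)*(α-δ) ≤ p.1 ∧ (p.1:ℝ) ≤ p.2*(α+δ) := by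
  unfold TT
  simp only [Finset.mem_biUnion, Finset.mem_range, Finset.mem_image, Finset.mem_Icc, Int.ceil_le, Int.le_floor]
  constructor
  · rintro ⟨j, hj, u, ⟨h1, h2⟩, rfl⟩
    refine ⟨Nat.le_add_left 1 j, Nat.succ_le_of_lt hj, ?_, ?_⟩ <;> push_cast <;> assumption
  · rintro ⟨h1, h2, h3, h4⟩
    refine ⟨p.2 - 1, by omega, p.1, ?_, ?_⟩
    · rw [Nat.cast_sub h1]; push_cast; simp only [sub_add_cancel]; exact ⟨h3, h4⟩
    · ext <;> simp; omega

lemma card_TT (α δ : ℝ) (hδ : 0 ≤ δ) (n : ℕ) : ((TT α δ n).card : ℝ) =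
    δ * n * (n+1) - GG (α+δ) (α+δ) n - GG (δ-α) (δ-α) n := by
  unfold TT
  rw [Finset.card_biUnion]
  · have h : ∀ j : ℕ, (((Finset.Icc ⌈((j:ℝ)+1)*(α-δ)⌉ ⌊((j:ℝ)+1)*(α+δ)⌋).image (fun u => (u, j+1))).card : ℝ)
      = 2*δ*((j:ℝ)+1) - (Int.fract ((α+δ) + j*(α+δ)) - 1/2) - (Int.fract ((δ-α) + j*(δ-α)) - 1/2) := by
      intro j
      rw [Finset.card_image_of_injective _ (fun a b hab => by simpa using hab), Int.card_Icc]
      have e : ⌈((j:ℝ)+1)*(α-δ)⌉ = -⌊(δ-α) + j*(δ-α)⌋ := by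
        rw [← Int.ceil_neg]; congr 1; ring
      have e2 : ((j:ℝ)+1)*(α+δ) = (α+δ) + j*(α+δ) := by ring
      have hle : ⌈((j:ℝ)+1)*(α-δ)⌉ ≤ ⌊((j:ℝ)+1)*(α+δ)⌋ + 1 := by
        rw [Int.ceil_le]
        have := Int.lt_floor_add_one (((j:ℝ)+1)*(α+δ))
        push_cast
        have : 0 ≤ (j:ℝ) * δ := by positivity
        nlinarith
      have e3 : (((⌊((j:ℝ)+1)*(α+δ)⌋ + 1 - ⌈((j:ℝ)+1)*(α-δ)⌉).toNat : ℤ) : ℝ) =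
         ((⌊((j:ℝ)+1)*(α+δ)⌋ + 1 - ⌈((j:ℝ)+1)*(α-δ)⌉ : ℤ) : ℝ) := by
        rw [Int.toNat_of_nonneg (by omega)]
      rw [← Int.cast_natCast, e3, e, e2]
      unfold Int.fract
      push_cast; ring
    push_cast
    rw [Finset.sum_congr rfl (fun j _ => h j), Finset.sum_sub_distrib, Finset.sum_sub_distrib]
    unfold GG
    congr 2
    induction n with
    | zero => simp
    | succ n ih => rw [Finset.sum_range_succ, ih]; push_cast; ring
  · intro a _ b _ hab
    rw [Function.onFun, Finset.disjoint_left]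
    intro p hp hp'
    simp only [Finset.mem_image] at hp hp'
    obtain ⟨_, _, rfl⟩ := hp
    obtain ⟨_, _, h⟩ := hp'
    simp at h
    omega

lemma card_dvd (α δ : ℝ) (n d : ℕ) (hd : 0 < d) :
    ((TT α δ n).filter (fun p => d ∣ Int.gcd p.1 p.2)).card = (TT α δ (n/d)).card := by
  symm
  have hdr : (0:ℝ) < d := by exact_mod_cast hd
  apply Finset.card_nbij (fun p : ℤ × ℕ => ((d:ℤ) * p.1, d * p.2))
  · intro p hp
    simp only [Finset.mem_coe, Finset.mem_filter, mem_TT] at hp ⊢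
    obtain ⟨h1, h2, h3, h4⟩ := hp
    refine ⟨⟨Nat.mul_pos hd h1, ?_, ?_, ?_⟩, ?_⟩
    · calc d * p.2 ≤ d * (n/d) := Nat.mul_le_mul_left _ h2
        _ ≤ n := Nat.mul_div_le n d
    · push_cast; rw [mul_assoc]; gcongr
    · push_cast; rw [mul_assoc]; gcongr
    · apply Int.dvd_gcd
      · exact dvd_mul_right _ _
      · push_cast; exact dvd_mul_right _ _
  · intro p _ q _ h
    simp only [Prod.mk.injEq] at h
    have := hd.ne'
    ext
    · have h1 := h.1
      exact mul_left_cancel₀ (by exact_mod_cast this) h1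
    · exact Nat.eq_of_mul_eq_mul_left hd h.2
  · intro p hp
    simp only [Finset.mem_coe, Finset.mem_filter, mem_TT] at hp
    obtain ⟨⟨h1, h2, h3, h4⟩, h5⟩ := hp
    have h6 : (d:ℤ) ∣ p.1 := (Int.natCast_dvd_natCast.mpr h5).trans (Int.gcd_dvd_left _ _)
    have h7 : (d:ℤ) ∣ p.2 := (Int.natCast_dvd_natCast.mpr h5).trans (Int.gcd_dvd_right _ _)
    rw [Int.natCast_dvd_natCast] at h7
    obtain ⟨a, ha⟩ := h6
    obtain ⟨b, hb⟩ := h7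
    refine ⟨(a, b), ?_, ?_⟩
    · simp only [Finset.mem_coe, mem_TT]
      rw [ha, hb] at h3 h4
      rw [hb] at h1 h2
      push_cast at h3 h4
      refine ⟨Nat.pos_of_mul_pos_left h1, ?_, ?_, ?_⟩
      · rw [Nat.le_div_iff_mul_le hd]; linarith
      · rw [mul_assoc] at h3; exact le_of_mul_le_mul_left h3 hdr
      · rw [mul_assoc] at h4; exact le_of_mul_le_mul_left h4 hdr
    · ext <;> simp [ha, hb]

lemma sum_mu (g : ℕ) : ∑ d ∈ g.divisors, ArithmeticFunction.moebius d = if g = 1 then 1 else 0 := by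
  rw [← ArithmeticFunction.coe_mul_zeta_apply, ArithmeticFunction.moebius_mul_coe_zeta, ArithmeticFunction.one_apply]

lemma moeb (α δ : ℝ) (n N : ℕ) (hN : ∀ d, N < d → TT α δ (n/d) = ∅) :
    (((TT α δ n).filter (fun p => Int.gcd p.1 p.2 = 1)).card : ℤ) =
      ∑ d ∈ Finset.Icc 1 N, ArithmeticFunction.moebius d * ((TT α δ (n/d)).card : ℤ) := by
  rw [Finset.card_filter]
  push_cast
  have h1 : ∀ p ∈ TT α δ n, (if Int.gcd p.1 p.2 = 1 then (1:ℤ) else 0) =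
      ∑ d ∈ Finset.Icc 1 N, if d ∣ Int.gcd p.1 p.2 then ArithmeticFunction.moebius d else 0 := by
    intro p hp
    rw [← sum_mu, ← Finset.sum_filter]
    have hp1 := ((mem_TT _ _ _ _).mp hp).1
    have hg : Int.gcd p.1 p.2 ≠ 0 := by
      intro h
      have := (Int.gcd_eq_zero_iff.mp h).2
      omega
    apply Finset.sum_congr _ (fun _ _ => rfl)
    ext d
    simp only [Nat.mem_divisors, Finset.mem_filter, Finset.mem_Icc]
    constructor
    · rintro ⟨h, _⟩
      have hd : 0 < d := Nat.pos_of_dvd_of_pos h (Nat.pos_of_ne_zero hg)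
      refine ⟨⟨hd, ?_⟩, h⟩
      by_contra hcon
      have e := hN d (by omega)
      rw [← Finset.card_eq_zero, ← card_dvd α δ n d hd, Finset.card_eq_zero] at e
      have : p ∈ (TT α δ n).filter (fun p => d ∣ Int.gcd p.1 p.2) := Finset.mem_filter.mpr ⟨hp, h⟩
      rw [e] at this
      simp at this
    · rintro ⟨_, h⟩; exact ⟨h, hg⟩
  rw [Finset.sum_congr rfl h1, Finset.sum_comm]
  apply Finset.sum_congr rfl
  intro d hd
  rw [← card_dvd α δ n d (Finset.mem_Icc.mp hd).1, ← Finset.sum_filter, Finset.sum_const, nsmul_eq_mul, mul_comm]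

lemma mu_summable : Summable (fun d : ℕ => (ArithmeticFunction.moebius d : ℝ) / (d:ℝ)^2) := by
  apply Summable.of_norm_bounded (g := fun d : ℕ => 1/(d:ℝ)^2) (Real.summable_one_div_nat_pow.mpr (by norm_num))
  intro d
  rw [norm_div, Real.norm_eq_abs, Real.norm_eq_abs, abs_of_nonneg (by positivity : (0:ℝ) ≤ (d:ℝ)^2)]
  gcongr
  exact_mod_cast ArithmeticFunction.abs_moebius_le_one

lemma mu_tsum : ∑' d : ℕ, (ArithmeticFunction.moebius d : ℝ) / (d:ℝ)^2 = 6/π^2 := by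
  have h := ArithmeticFunction.LSeries_zeta_mul_Lseries_moebius (s := 2) (by norm_num)
  rw [ArithmeticFunction.LSeries_zeta_eq_riemannZeta (by norm_num), riemannZeta_two] at h
  have h2 : LSeries (fun n => ((ArithmeticFunction.moebius n : ℤ) : ℂ)) 2 = ((∑' d : ℕ, (ArithmeticFunction.moebius d : ℝ) / (d:ℝ)^2 : ℝ) : ℂ) := by
    rw [LSeries, Complex.ofReal_tsum]
    congr 1
    ext d
    rcases eq_or_ne d 0 with rfl | hd
    · simp
    · rw [LSeries.term_of_ne_zero hd]
      push_cast
      norm_num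
  rw [h2] at h
  have h3 : π^2/6 * (∑' d : ℕ, (ArithmeticFunction.moebius d : ℝ) / (d:ℝ)^2) = 1 := by exact_mod_cast h
  have := Real.pi_pos
  field_simp at h3 ⊢
  linarith

lemma mu_tail (N : ℕ) (hN : 0 < N) :
    |∑ d ∈ Finset.Icc 1 N, (ArithmeticFunction.moebius d : ℝ) / (d:ℝ)^2 - 6/π^2| ≤ 1/(N:ℝ) := by
  have ht := mu_summable.hasSum.tendsto_sum_nat
  rw [mu_tsum] at ht
  have ht' : Filter.Tendsto (fun m => |∑ d ∈ Finset.Icc 1 N, (ArithmeticFunction.moebius d : ℝ) / (d:ℝ)^2 - ∑ d ∈ Finset.range m, (ArithmeticFunction.moebius d : ℝ) / (d:ℝ)^2|)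
     Filter.atTop (nhds |∑ d ∈ Finset.Icc 1 N, (ArithmeticFunction.moebius d : ℝ) / (d:ℝ)^2 - 6/π^2|) :=
    (tendsto_const_nhds.sub ht).abs
  refine le_of_tendsto ht' ?_
  filter_upwards [Filter.eventually_ge_atTop (N+1)] with m hm
  have e : ∑ d ∈ Finset.range m, (ArithmeticFunction.moebius d : ℝ) / (d:ℝ)^2 =
     ∑ d ∈ Finset.Icc 1 N, (ArithmeticFunction.moebius d : ℝ) / (d:ℝ)^2 + ∑ d ∈ Finset.Ioc N (m-1), (ArithmeticFunction.moebius d : ℝ) / (d:ℝ)^2 := by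
    rw [← Finset.sum_union]
    · symm
      apply Finset.sum_subset
      · intro x; simp; omega
      · intro x h1 h2
        have : x = 0 := by simp at h1 h2; omega
        simp [this]
    · rw [Finset.disjoint_left]; intro x; simp; omega
  rw [e, sub_add_cancel_left, abs_neg]
  refine (Finset.abs_sum_le_sum_abs _ _).trans ?_
  have := sum_Ioc_inv_sq_le_sub (α := ℝ) (k := N) (n := m-1) hN.ne' (by omega)
  calc _ ≤ ∑ i ∈ Finset.Ioc N (m-1), ((i:ℝ)^2)⁻¹ := by
        apply Finset.sum_le_sum
        intro d _
        rw [abs_div, abs_of_nonneg (by positivity : (0:ℝ) ≤ (d:ℝ)^2), ← one_div]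
        gcongr
        exact_mod_cast ArithmeticFunction.abs_moebius_le_one
    _ ≤ _ := this
    _ ≤ 1/N := by rw [one_div]; simp

lemma TT_abs (α δ : ℝ) (n : ℕ) (p : ℤ × ℕ) : p ∈ TT α δ n ↔
    1 ≤ p.2 ∧ p.2 ≤ n ∧ |(p.1:ℝ)/p.2 - α| ≤ δ := by
  rw [mem_TT]
  refine and_congr_right fun h1 => and_congr_right fun _ => ?_
  have hv : (0:ℝ) < p.2 := by exact_mod_cast h1
  rw [abs_le, neg_le_sub_iff_le_add, sub_le_iff_le_add, ← sub_le_iff_le_add, le_div_iff₀ hv, div_le_iff₀ hv]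
  constructor <;> rintro ⟨a, b⟩ <;> constructor <;> linarith

lemma TT_empty (α lam C ε : ℝ) (hl : 0 < lam) (hC : 0 < C) (hε : 0 ≤ ε)
    (hm : ∀ (u : ℤ) (v : ℕ), 0 < v → |α - (u : ℝ) / v| ≥ C * (v : ℝ) ^ (-(2 + lam)))
    (B Q : ℝ) (hQ : 1 ≤ Q) (k : ℕ) (hk : (k:ℝ) ≤ B) (h : ε * k^2 * B^lam < C * Q^2) :
    TT α (ε/Q^2) k = ∅ := by
  rw [Finset.eq_empty_iff_forall_notMem]
  intro p hp
  rw [TT_abs] at hp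
  obtain ⟨h1, h2, h3⟩ := hp
  have hv : (0:ℝ) < p.2 := by exact_mod_cast h1
  have hvk : (p.2:ℝ) ≤ k := by exact_mod_cast h2
  have h4 := hm p.1 p.2 h1
  rw [abs_sub_comm] at h4
  have h5 : C * (p.2:ℝ)^(-(2+lam)) ≤ ε/Q^2 := by linarith
  have h6 : (p.2 : ℝ) ^ (-(2 + lam)) = 1/((p.2:ℝ)^2 * (p.2:ℝ)^lam) := by
    rw [Real.rpow_neg hv.le, Real.rpow_add hv, one_div]; norm_num
  have h7 : 0 < (p.2:ℝ)^lam := by positivity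
  rw [h6, mul_one_div, div_le_div_iff₀ (by positivity) (by positivity)] at h5
  have h8 : ε * ((p.2:ℝ)^2 * (p.2:ℝ)^lam) ≤ ε * (k^2 * B^lam) := by
    gcongr
    linarith
  linarith

lemma kk_aux (k x B : ℝ) (hk0 : 0 ≤ k) (h1 : k ≤ x) (h2 : x ≤ k + 1) (h3 : x ≤ B) (hB : 1 ≤ B) :
    |k*(k+1) - x^2| ≤ 2*B := by
  rw [abs_le]; constructor <;> nlinarith

lemma harm (N : ℕ) : ∑ d ∈ Finset.Icc 1 N, 1/(d:ℝ) ≤ 1 + Real.log N := by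
  have := harmonic_le_one_add_log N
  rw [harmonic_eq_sum_Icc] at this
  push_cast at this
  simpa [one_div] using this

set_option maxHeartbeats 1000000 in
lemma prim_est (α lam C ε : ℝ) (hl : 0 < lam) (hC : 0 < C) (hε : 0 ≤ ε)
    (hm : ∀ (u : ℤ) (v : ℕ), 0 < v → |α - (u : ℝ) / v| ≥ C * (v : ℝ) ^ (-(2 + lam))) :
    ∃ K' : ℝ, ∀ B Q : ℝ, 1 ≤ Q → Q ≤ B → B ≤ Q^2 → ∀ n : ℕ, (n:ℝ) ≤ B →
      |(((TT α (ε/Q^2) n).filter (fun p => Int.gcd p.1 p.2 = 1)).card : ℝ) - 6/π^2 * (ε/Q^2) * (n:ℝ)^2|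
        ≤ K' * (B/Q) * (B^lam)^2 := by
  obtain ⟨A1, hA1, hd1⟩ := disc α lam C ε hl hC hε hm
  obtain ⟨A2, hA2, hd2⟩ := disc (-α) lam C ε hl hC hε (by
    intro u v hv
    have := hm (-u) v hv
    rw [show -α - (u:ℝ)/v = -(α - ((-u:ℤ):ℝ)/v) by push_cast; ring, abs_neg]
    exact this)
  set K := 1 + ε/C with hK
  have hK1 : 1 ≤ K := by rw [hK]; have : 0 ≤ ε/C := by positivity
                         linarith
  set A := A1 + A2 with hA
  set c := 1 + Real.log (2*K) + (1+lam)/lam with hc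
  have hlog : 0 ≤ Real.log (2*K) := Real.log_nonneg (by linarith)
  refine ⟨2*K*(2*ε+A) + A*c + ε, ?_⟩
  intro B Q hQ hQB hBQ n hn
  have hB : 1 ≤ B := hQ.trans hQB
  have hQ0 : 0 < Q := by linarith
  have hB0 : 0 < B := by linarith
  set X := B/Q with hX
  set Y := B^lam with hY
  have hX1 : 1 ≤ X := by rw [hX, le_div_iff₀ hQ0]; linarith
  have hXB : X ≤ B := div_le_self hB0.le hQ
  have hY1 : 1 ≤ Y := Real.one_le_rpow hB hl.le
  have hQY : Q^lam ≤ Y := by rw [hY]; gcongr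
  set δ := ε/Q^2 with hδ
  have hδ0 : 0 ≤ δ := by positivity
  have hδB : δ * B ≤ ε := by
    rw [hδ, div_mul_eq_mul_div, div_le_iff₀ (by positivity)]; gcongr
  set N := ⌈K*X*Y⌉₊ with hN
  have hKXY : 1 ≤ K*X*Y := by
    exact one_le_mul_of_one_le_of_one_le (one_le_mul_of_one_le_of_one_le hK1 hX1) hY1
  have hN1 : K*X*Y ≤ N := Nat.le_ceil _
  have hN2 : (N:ℝ) ≤ 2*(K*X*Y) := by
    have := Nat.ceil_lt_add_one (show 0 ≤ K*X*Y by linarith)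
    linarith
  have hNX : X ≤ N := by
    have : X ≤ K*X*Y := by
      have h1 : 1 ≤ K*Y := one_le_mul_of_one_le_of_one_le hK1 hY1
      have h2 : X * 1 ≤ X * (K*Y) := mul_le_mul_of_nonneg_left h1 (by linarith)
      linarith
    linarith
  have hNpos : 0 < N := by
    have : (0:ℝ) < N := by linarith
    exact_mod_cast this
  have hNr : (0:ℝ) < N := by exact_mod_cast hNpos
  have hempty : ∀ d, N < d → TT α δ (n/d) = ∅ := by
    intro d hd
    have hdr : (N:ℝ) < d := by exact_mod_cast hd
    have hd0 : (0:ℝ) < d := by linarith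
    have hkd : ((n/d : ℕ):ℝ) ≤ B/d := Nat.cast_div_le.trans (by gcongr)
    have hkB : ((n/d : ℕ):ℝ) ≤ B := hkd.trans (div_le_self hB0.le (by linarith))
    apply TT_empty α lam C ε hl hC hε hm B Q hQ _ hkB
    calc ε * ((n/d : ℕ):ℝ)^2 * B^lam ≤ ε * (B/d)^2 * Y := by gcongr
      _ = ε * Y * (X * Q / d)^2 := by rw [hX]; field_simp
      _ = (ε * Y * X^2) * Q^2 / d^2 := by ring
      _ < C * Q^2 := by
        rw [div_lt_iff₀ (by positivity)]
        have h1 : (K*X*Y)^2 < (d:ℝ)^2 := by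
          apply pow_lt_pow_left₀ (by linarith) (by positivity) (by norm_num)
        have h2 : ε * Y * X^2 ≤ C * (K*X*Y)^2 := by
          have h3 : ε ≤ C * K^2 := by
            have : ε ≤ C*K := by rw [hK]; field_simp; linarith
            refine this.trans ?_
            gcongr
            exact le_self_pow₀ hK1 (by norm_num)
          have h4 : Y ≤ Y^2 := le_self_pow₀ hY1 (by norm_num)
          calc ε * Y * X^2 ≤ (C*K^2)*Y^2*X^2 := by gcongr
            _ = _ := by ring
        have h5 : ε * Y * X^2 < C * d^2 := h2.trans_lt (mul_lt_mul_of_pos_left h1 hC)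
        have h6 := mul_lt_mul_of_pos_right h5 (sq_pos_of_pos hQ0)
        linarith
  have hmo := moeb α δ n N hempty
  have hmo' : (((TT α δ n).filter (fun p => Int.gcd p.1 p.2 = 1)).card : ℝ) =
      ∑ d ∈ Finset.Icc 1 N, (ArithmeticFunction.moebius d : ℝ) * ((TT α δ (n/d)).card : ℝ) := by exact_mod_cast hmo
  have hterm : ∀ d ∈ Finset.Icc 1 N, |((TT α δ (n/d)).card : ℝ) - δ * n^2/d^2| ≤ (2*ε + A*Y) + A*X*Y*(1/d) := by
    intro d hd
    have hdd : 1 ≤ d := (Finset.mem_Icc.mp hd).1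
    have hd1r : (1:ℝ) ≤ d := by exact_mod_cast hdd
    have hd0 : (0:ℝ) < d := by linarith
    set k := n/d with hk
    have hkd : (k:ℝ) ≤ (n:ℝ)/d := Nat.cast_div_le
    have hkd2 : (n:ℝ)/d ≤ k + 1 := by
      rw [div_le_iff₀ hd0]
      have : n < (n/d+1)*d := by
        have := Nat.lt_div_mul_add (a := n) hdd
        linarith
      exact_mod_cast this.le
    have hnd : (n:ℝ)/d ≤ B := (div_le_self (by positivity) hd1r).trans hn
    have hndB : (n:ℝ)/d ≤ B/d := by gcongr
    have hk0 : (0:ℝ) ≤ k := by positivity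
    rw [card_TT α δ hδ0]
    have b1 := hd1 Q (α+δ) hQ (by rw [add_sub_cancel_left, abs_of_nonneg hδ0]) k (α+δ)
    have b2 := hd2 Q (δ-α) hQ (by rw [sub_neg_eq_add, sub_add_cancel, abs_of_nonneg hδ0]) k (δ-α)
    have hkQ : (k:ℝ)/Q + 1 ≤ X*(1/d) + 1 := by
      have : (k:ℝ)/Q ≤ (B/d)/Q := by gcongr; linarith
      have e : (B/d)/Q = X*(1/d) := by rw [hX]; field_simp
      linarith
    have b1' : A1 * (k/Q+1) * Q^lam ≤ A1 * (X*(1/d)+1) * Y := by gcongr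
    have b2' : A2 * (k/Q+1) * Q^lam ≤ A2 * (X*(1/d)+1) * Y := by gcongr
    set x := (n:ℝ)/d with hx
    have e1 : δ * n^2/d^2 = δ * x^2 := by rw [hx]; ring
    have m1 : |δ * k * (k+1) - δ * x^2| ≤ 2*ε := by
      have : |(k:ℝ)*(k+1) - x^2| ≤ 2*B := kk_aux _ _ _ hk0 hkd hkd2 hnd hB
      rw [show δ * k * (k+1) - δ * x^2 = δ * ((k:ℝ)*(k+1) - x^2) by ring, abs_mul, abs_of_nonneg hδ0]
      have := mul_le_mul_of_nonneg_left this hδ0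
      linarith
    rw [e1]
    rw [abs_le] at b1 b2 m1 ⊢
    have e2 : A1 * (X*(1/d)+1) * Y + A2 * (X*(1/d)+1) * Y = A*Y + A*X*Y*(1/d) := by rw [hA]; ring
    constructor <;> linarith
  have hmain : |∑ d ∈ Finset.Icc 1 N, (ArithmeticFunction.moebius d : ℝ) * ((TT α δ (n/d)).card : ℝ)
      - δ * n^2 * ∑ d ∈ Finset.Icc 1 N, (ArithmeticFunction.moebius d : ℝ)/(d:ℝ)^2| ≤ N * (2*ε+A*Y) + A*X*Y*(1 + Real.log N) := by
    rw [Finset.mul_sum, ← Finset.sum_sub_distrib]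
    refine (Finset.abs_sum_le_sum_abs _ _).trans ?_
    calc _ ≤ ∑ d ∈ Finset.Icc 1 N, ((2*ε + A*Y) + A*X*Y*(1/(d:ℝ))) := by
          apply Finset.sum_le_sum
          intro d hd
          rw [show (ArithmeticFunction.moebius d : ℝ) * ((TT α δ (n/d)).card : ℝ) - δ * n^2 * ((ArithmeticFunction.moebius d : ℝ)/(d:ℝ)^2)
             = (ArithmeticFunction.moebius d : ℝ) * (((TT α δ (n/d)).card : ℝ) - δ * n^2/d^2) by ring, abs_mul]
          have hmu : |(ArithmeticFunction.moebius d : ℝ)| ≤ 1 := by exact_mod_cast ArithmeticFunction.abs_moebius_le_one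
          refine le_trans ?_ (hterm d hd)
          exact mul_le_of_le_one_left (abs_nonneg _) hmu
      _ = N * (2*ε+A*Y) + A*X*Y*(∑ d ∈ Finset.Icc 1 N, 1/(d:ℝ)) := by
          rw [Finset.sum_add_distrib, ← Finset.mul_sum]; simp; ring
      _ ≤ _ := by
          have := harm N
          have : 0 ≤ A*X*Y := by positivity
          gcongr
  have htail : |δ * n^2 * ∑ d ∈ Finset.Icc 1 N, (ArithmeticFunction.moebius d : ℝ)/(d:ℝ)^2 - 6/π^2 * δ * n^2| ≤ ε * X := by
    rw [show δ * n^2 * ∑ d ∈ Finset.Icc 1 N, (ArithmeticFunction.moebius d : ℝ)/(d:ℝ)^2 - 6/π^2 * δ * n^2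
      = δ * n^2 * (∑ d ∈ Finset.Icc 1 N, (ArithmeticFunction.moebius d : ℝ)/(d:ℝ)^2 - 6/π^2) by ring, abs_mul, abs_of_nonneg (by positivity : 0 ≤ δ * (n:ℝ)^2)]
    calc _ ≤ δ * B^2 * (1/N) := by
          gcongr
          exact mu_tail N hNpos
      _ ≤ δ * B^2 * (1/X) := by gcongr
      _ = ε * X := by rw [hδ, hX]; field_simp
  have hlogN : 1 + Real.log N ≤ c * Y := by
    have h1 : Real.log N ≤ Real.log (2*K) + (1+lam) * Real.log B := by
      have : (N:ℝ) ≤ 2*K * (B * Y) := by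
        have : K*X*Y ≤ K*B*Y := by gcongr
        linarith
      refine (Real.log_le_log hNr this).trans ?_
      rw [Real.log_mul (x := 2*K) (by positivity) (by positivity), Real.log_mul (x := B) (by positivity) (by positivity), hY, Real.log_rpow hB0]
      linarith
    have h2 : Real.log B ≤ Y/lam := Real.log_le_rpow_div hB0.le hl
    have h3 : (1+lam) * Real.log B ≤ (1+lam)/lam * Y := by
      calc _ ≤ (1+lam) * (Y/lam) := by gcongr
        _ = _ := by ring
    have h4 : 1 + Real.log (2*K) ≤ (1 + Real.log (2*K)) * Y := le_mul_of_one_le_right (by linarith) hY1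
    rw [hc]
    linarith
  rw [hmo']
  have hAp : 0 < A := by positivity
  have f1 : N * (2*ε+A*Y) ≤ 2*K*(2*ε+A) * X * Y^2 := by
    calc N * (2*ε+A*Y) ≤ (2*(K*X*Y)) * (2*ε*Y+A*Y) := by
          have : 2*ε ≤ 2*ε*Y := le_mul_of_one_le_right (by positivity) hY1
          gcongr
      _ = _ := by ring
  have f2 : A*X*Y*(1 + Real.log N) ≤ A*c*X*Y^2 := by
    calc _ ≤ A*X*Y*(c*Y) := by gcongr
      _ = _ := by ring
  have f3 : ε * X ≤ ε * X * Y^2 := by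
    apply le_mul_of_one_le_right (by positivity)
    exact one_le_pow₀ hY1
  rw [abs_le] at hmain htail ⊢
  constructor <;> linarith

noncomputable def WW (α x : ℝ) (E : ℕ) : Finset (ℤ × ℕ) :=
  ((Finset.Icc (-(E:ℤ)) E) ×ˢ (Finset.Icc (-(E:ℤ)) E)).image
    (fun p => (⌊α * ((⌊x⌋ + p.1 : ℤ) : ℝ)⌋ + p.2, (⌊x⌋ + p.1).toNat))

lemma WW_card (α x : ℝ) (E : ℕ) : (WW α x E).card ≤ (2*E+1)*(2*E+1) := by
  unfold WW
  refine Finset.card_image_le.trans ?_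
  rw [Finset.card_product, Int.card_Icc]
  have : ((E:ℤ) + 1 - -E).toNat = 2*E+1 := by omega
  rw [this]

lemma mem_WW (α x ε : ℝ) (E : ℕ) (hE : ε + 1 ≤ E) (p : ℤ × ℕ) (h1 : |(p.2:ℝ) - x| ≤ ε)
    (h2 : |(p.1:ℝ) - α * p.2| ≤ ε) : p ∈ WW α x E := by
  unfold WW
  rw [Finset.mem_image]
  rw [abs_le] at h1 h2
  have f1 := Int.floor_le x
  have f2 := Int.lt_floor_add_one x
  have g1 := Int.floor_le (α * p.2)
  have g2 := Int.lt_floor_add_one (α * p.2)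
  refine ⟨(p.2 - ⌊x⌋, p.1 - ⌊α * p.2⌋), ?_, ?_⟩
  · simp only [Finset.mem_product, Finset.mem_Icc]
    refine ⟨⟨?_, ?_⟩, ?_, ?_⟩
    · have : (((-(E:ℤ)) : ℤ):ℝ) ≤ ((p.2 - ⌊x⌋ : ℤ):ℝ) := by push_cast; linarith
      exact_mod_cast this
    · have : ((p.2 - ⌊x⌋ : ℤ):ℝ) ≤ ((E:ℤ):ℝ) := by push_cast; linarith
      exact_mod_cast this
    · have : (((-(E:ℤ)) : ℤ):ℝ) ≤ ((p.1 - ⌊α * p.2⌋ : ℤ):ℝ) := by push_cast; linarith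
      exact_mod_cast this
    · have : ((p.1 - ⌊α * p.2⌋ : ℤ):ℝ) ≤ ((E:ℤ):ℝ) := by push_cast; linarith
      exact_mod_cast this
  · ext <;> simp

lemma zoom_cmp (α r ε₁ ε₂ B Q : ℝ) (E : ℕ) (hE : ε₁ + 1 ≤ E) (hε : ε₂ < ε₁) (hε₂ : 0 ≤ ε₂) (hQ : 1 ≤ Q) (hB : 0 < B)
    (hBQ : B ≤ Q^2) (hr : B ^ (-(1 / r)) = 1/Q^2) :
    |(zoomCount α r ε₁ ε₂ B : ℝ) -
      ((((TT α (ε₁/Q^2) ⌊B / max 1 |α|⌋₊).filter (fun p => Int.gcd p.1 p.2 = 1)).card : ℝ) -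
       (((TT α (ε₂/Q^2) ⌊B / max 1 |α|⌋₊).filter (fun p => Int.gcd p.1 p.2 = 1)).card : ℝ))| ≤ (2*E+1)*(2*E+1) := by
  unfold zoomCount
  rw [hr]
  simp only [mul_one_div]
  set m := max 1 |α| with hm
  have hm1 : 1 ≤ m := le_max_left _ _
  have hm0 : 0 < m := by linarith
  have hmα : |α| ≤ m := le_max_right _ _
  set F1 := (TT α (ε₁/Q^2) ⌊B / m⌋₊).filter (fun p => Int.gcd p.1 p.2 = 1) with hF1
  set F2 := (TT α (ε₂/Q^2) ⌊B / m⌋₊).filter (fun p => Int.gcd p.1 p.2 = 1) with hF2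
  set Z : Set (ℤ × ℕ) := {p : ℤ × ℕ | 0 < p.2 ∧ Int.gcd p.1 (p.2 : ℤ) = 1 ∧
    ((max |p.1| (p.2 : ℤ) : ℤ) : ℝ) ≤ B ∧
    ε₂ / Q^2 < |(p.1 : ℝ) / p.2 - α| ∧
    |(p.1 : ℝ) / p.2 - α| ≤ ε₁ / Q^2} with hZ
  have hδ : ε₂/Q^2 ≤ ε₁/Q^2 := by gcongr
  have hsub : F2 ⊆ F1 := by
    intro p hp
    simp only [hF1, hF2, Finset.mem_filter, TT_abs] at hp ⊢
    exact ⟨⟨hp.1.1, hp.1.2.1, hp.1.2.2.trans hδ⟩, hp.2⟩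
  set W := WW α (B/m) E with hW
  have hcl : ∀ p : ℤ × ℕ, 0 < p.2 → (p.2:ℝ) ≤ B → |(p.1 : ℝ) / p.2 - α| ≤ ε₁ / Q^2 → |(p.1:ℝ) - α * p.2| ≤ ε₁ := by
    intro p h1 h2 h3
    have hv : (0:ℝ) < p.2 := by exact_mod_cast h1
    have e : (p.1:ℝ) - α * p.2 = p.2 * ((p.1 : ℝ) / p.2 - α) := by field_simp
    rw [e, abs_mul, abs_of_pos hv]
    calc p.2 * |(p.1 : ℝ) / p.2 - α| ≤ B * (ε₁/Q^2) := by gcongr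
      _ = ε₁ * (B/Q^2) := by ring
      _ ≤ ε₁ * 1 := by
        have : 0 ≤ ε₁ := by linarith
        gcongr
        rw [div_le_one (by positivity)]; exact hBQ
      _ = ε₁ := by ring
  have hε₁ : 0 < ε₁ := by linarith
  have hεm : ε₁/m ≤ ε₁ := div_le_self hε₁.le hm1
  have hZX : Z ⊆ ((F1 \ F2 ∪ W : Finset (ℤ × ℕ)) : Set (ℤ × ℕ)) := by
    rintro p ⟨h1, h2, h3, h4, h5⟩
    rw [Finset.mem_coe, Finset.mem_union]
    push_cast at h3
    have h3a : |(p.1:ℝ)| ≤ B := (le_max_left _ _).trans h3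
    have h3b : (p.2:ℝ) ≤ B := (le_max_right _ _).trans h3
    have h6 := hcl p h1 h3b h5
    have hv : (0:ℝ) < p.2 := by exact_mod_cast h1
    by_cases hle : p.2 ≤ ⌊B/m⌋₊
    · left
      simp only [hF1, hF2, Finset.mem_sdiff, Finset.mem_filter, TT_abs]
      refine ⟨⟨⟨h1, hle, h5⟩, h2⟩, ?_⟩
      rintro ⟨⟨_, _, h⟩, _⟩
      linarith
    · right
      apply mem_WW α (B/m) ε₁ E hE p _ h6
      have h7 : B/m < p.2 := (Nat.floor_lt (by positivity)).mp (by omega)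
      have h8 : m * p.2 ≤ B + ε₁ := by
        rcases max_choice 1 |α| with h | h
        · rw [hm, h]; linarith
        · rw [hm, h]
          have e : |α| * p.2 = |α * p.2| := by rw [abs_mul, abs_of_pos hv]
          have := abs_sub_abs_le_abs_sub (α * p.2) p.1
          rw [abs_sub_comm] at this
          linarith
      have h9 : (p.2:ℝ) ≤ B/m + ε₁/m := by
        rw [← add_div, le_div_iff₀ hm0]; linarith
      rw [abs_le]; constructor <;> linarith
  have hfin : Z.Finite := (Finset.finite_toSet _).subset hZX
  have hXZ : F1 \ F2 ⊆ hfin.toFinset ∪ W := by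
    intro p hp
    simp only [hF1, hF2, Finset.mem_sdiff, Finset.mem_filter, TT_abs] at hp
    obtain ⟨⟨⟨h1, h2, h3⟩, h4⟩, h5⟩ := hp
    have hv : (0:ℝ) < p.2 := by exact_mod_cast h1
    have h6 : (p.2:ℝ) ≤ B/m := (Nat.le_floor_iff (by positivity)).mp h2
    have h7 : (p.2:ℝ) ≤ B := h6.trans (div_le_self hB.le hm1)
    have h8 : ε₂ / Q^2 < |(p.1 : ℝ) / p.2 - α| := by
      by_contra hcon
      exact h5 ⟨⟨h1, h2, not_lt.mp hcon⟩, h4⟩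
    rw [Finset.mem_union, Set.Finite.mem_toFinset]
    by_cases hu : |(p.1:ℝ)| ≤ B
    · left
      refine ⟨h1, h4, ?_, h8, h3⟩
      push_cast
      exact max_le hu h7
    · right
      have h9 := hcl p h1 h7 h3
      apply mem_WW α (B/m) ε₁ E hE p _ h9
      have e : |α| * p.2 = |α * p.2| := by rw [abs_mul, abs_of_pos hv]
      have := abs_sub_abs_le_abs_sub (p.1:ℝ) (α * p.2)
      have h10 : |α| * p.2 ≤ m * p.2 := by gcongr
      have h11 : B/m - ε₁/m ≤ (p.2:ℝ) := by
        rw [← sub_div, div_le_iff₀ hm0]; linarith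
      rw [abs_le]; constructor <;> linarith
  have hWc : (W.card:ℝ) ≤ (2*E+1)*(2*E+1) := by exact_mod_cast WW_card α (B/m) E
  have c1 : Z.ncard ≤ (F1 \ F2).card + W.card := by
    refine (Set.ncard_le_ncard hZX (Finset.finite_toSet _)).trans ?_
    rw [Set.ncard_coe_finset]
    exact Finset.card_union_le _ _
  have c2 : (F1 \ F2).card ≤ Z.ncard + W.card := by
    rw [Set.ncard_eq_toFinset_card Z hfin]
    exact (Finset.card_le_card hXZ).trans (Finset.card_union_le _ _)
  have c3 : ((F1 \ F2).card : ℝ) = F1.card - F2.card := by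
    rw [Finset.card_sdiff_of_subset hsub, Nat.cast_sub (Finset.card_le_card hsub)]
  have c1' : (Z.ncard:ℝ) ≤ (F1 \ F2).card + W.card := by exact_mod_cast c1
  have c2' : ((F1 \ F2).card:ℝ) ≤ Z.ncard + W.card := by exact_mod_cast c2
  rw [← c3, abs_le]
  constructor <;> linarith

lemma nn_aux (k x B : ℝ) (hk0 : 0 ≤ k) (h1 : k ≤ x) (h2 : x ≤ k + 1) (h3 : x ≤ B) :
    |k^2 - x^2| ≤ 2*B := by
  have h4 : 0 ≤ (1 - (x - k)) * (x + k) := mul_nonneg (by linarith) (by linarith)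
  have h5 : 0 ≤ (x - k) * (x + k) := mul_nonneg (by linarith) (by linarith)
  rw [abs_le]; constructor <;> nlinarith

/-- Sub-critical zoom at a real number `α` of irrationality measure `2`, for `1/2 < r ≤ 1`:
`M_r(ε₁,ε₂,B) = (6(ε₁−ε₂)/(π²·max(1,α²)))·B^(2−1/r) + O(B^(1−1/(2r)+τ))`. -/
theorem stmt_4 (α : ℝ) (hirr : Irrational α)
    (hmeas : ∀ lam : ℝ, 0 < lam → ∃ C : ℝ, 0 < C ∧
      ∀ (u : ℤ) (v : ℕ), 0 < v → |α - (u : ℝ) / v| ≥ C * (v : ℝ) ^ (-(2 + lam)))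
    (r : ℝ) (hr₁ : 1 / 2 < r) (hr₂ : r ≤ 1)
    (ε₁ ε₂ : ℝ) (hε : ε₁ > ε₂) (hε₂ : ε₂ ≥ 0) (τ : ℝ) (hτ : 0 < τ) :
    ∃ C : ℝ, ∀ B : ℝ, B ≥ 2 →
      |(zoomCount α r ε₁ ε₂ B : ℝ) -
          6 * (ε₁ - ε₂) / (π ^ 2 * max 1 (α ^ 2)) * B ^ (2 - 1 / r)| ≤
        C * B ^ (1 - 1 / (2 * r) + τ) := by
  obtain ⟨C, hC, hm⟩ := hmeas (τ/2) (by positivity)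
  have hε₁ : 0 ≤ ε₁ := by linarith
  obtain ⟨K1, hK1⟩ := prim_est α (τ/2) C ε₁ (by positivity) hC hε₁ hm
  obtain ⟨K2, hK2⟩ := prim_est α (τ/2) C ε₂ (by positivity) hC hε₂ hm
  obtain ⟨E, hE⟩ := exists_nat_ge (ε₁ + 1)
  refine ⟨(2*E+1)*(2*E+1) + K1 + K2 + 2*(6/π^2*(ε₁ - ε₂)), ?_⟩
  intro B hB2
  have hB0 : 0 < B := by linarith
  have hB1 : 1 ≤ B := by linarith
  have hr0 : 0 < r := by linarith
  set Q := B^(1/(2*r)) with hQ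
  have hQ1 : 1 ≤ Q := Real.one_le_rpow hB1 (by positivity)
  have hQ0 : 0 < Q := by linarith
  have hQB : Q ≤ B := by
    rw [hQ]
    conv_rhs => rw [← Real.rpow_one B]
    apply Real.rpow_le_rpow_of_exponent_le hB1
    rw [div_le_one (by positivity)]; linarith
  have hQ2 : Q^2 = B^(1/r) := by
    rw [hQ, ← Real.rpow_natCast, ← Real.rpow_mul hB0.le]; congr 1; push_cast; field_simp
  have hBQ : B ≤ Q^2 := by
    rw [hQ2]
    conv_lhs => rw [← Real.rpow_one B]
    apply Real.rpow_le_rpow_of_exponent_le hB1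
    rw [le_div_iff₀ hr0]; linarith
  have hr : B ^ (-(1 / r)) = 1/Q^2 := by
    rw [hQ2, Real.rpow_neg hB0.le, ← one_div (B^(1/r))]
  have e1 : B ^ (2 - 1/r) = B^2/Q^2 := by
    rw [hQ2, Real.rpow_sub hB0]; norm_num
  have e2 : B ^ (1 - 1 / (2 * r) + τ) = (B/Q) * (B^(τ/2))^2 := by
    rw [Real.rpow_add hB0, Real.rpow_sub hB0, Real.rpow_one, ← Real.rpow_natCast (B^(τ/2)), ← Real.rpow_mul hB0.le]
    congr 2; push_cast; ring
  have hX1 : 1 ≤ B/Q := by rw [le_div_iff₀ hQ0]; linarith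
  have hY1 : 1 ≤ (B^(τ/2))^2 := one_le_pow₀ (Real.one_le_rpow hB1 (by positivity))
  have hR1 : 1 ≤ (B/Q) * (B^(τ/2))^2 := by nlinarith
  set m := max 1 |α| with hmdef
  have hm1 : 1 ≤ m := le_max_left _ _
  have hm0 : 0 < m := by linarith
  have hm2 : max 1 (α^2) = m^2 := by
    rw [hmdef]
    rcases le_total 1 |α| with h | h
    · rw [max_eq_right h, max_eq_right, sq_abs]
      rw [← sq_abs]; exact one_le_pow₀ h
    · rw [max_eq_left h, max_eq_left, one_pow]
      rw [← sq_abs]; exact pow_le_one₀ (abs_nonneg _) h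
  set n := ⌊B/m⌋₊ with hn
  have hnx : (n:ℝ) ≤ B/m := Nat.floor_le (by positivity)
  have hnx2 : B/m < n + 1 := Nat.lt_floor_add_one _
  have hxB : B/m ≤ B := div_le_self hB0.le hm1
  have hnB : (n:ℝ) ≤ B := hnx.trans hxB
  have z := zoom_cmp α r ε₁ ε₂ B Q E hE hε hε₂ hQ1 hB0 hBQ hr
  have k1 := hK1 B Q hQ1 hQB hBQ n hnB
  have k2 := hK2 B Q hQ1 hQB hBQ n hnB
  rw [e1, e2, hm2]
  set R := (B/Q) * (B^(τ/2))^2 with hR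
  rw [mul_assoc K1, ← hR] at k1
  rw [mul_assoc K2, ← hR] at k2
  have t : |6/π^2 * (ε₁/Q^2) * (n:ℝ)^2 - 6/π^2 * (ε₂/Q^2) * (n:ℝ)^2 - 6 * (ε₁ - ε₂) / (π ^ 2 * m^2) * (B^2/Q^2)|
      ≤ 2*(6/π^2*(ε₁ - ε₂)) := by
    have hc : 0 ≤ 6/π^2*(ε₁ - ε₂) := mul_nonneg (by positivity) (by linarith)
    have e : 6/π^2 * (ε₁/Q^2) * (n:ℝ)^2 - 6/π^2 * (ε₂/Q^2) * (n:ℝ)^2 - 6 * (ε₁ - ε₂) / (π ^ 2 * m^2) * (B^2/Q^2)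
      = 6/π^2*(ε₁ - ε₂) * (((n:ℝ)^2 - (B/m)^2)/Q^2) := by
      have := Real.pi_pos
      field_simp
    rw [e, abs_mul, abs_of_nonneg hc, mul_comm 2]
    gcongr
    rw [abs_div, abs_of_pos (by positivity : 0 < Q^2), div_le_iff₀ (by positivity)]
    have : |(n:ℝ)^2 - (B/m)^2| ≤ 2*B := by
      have hn0 : (0:ℝ) ≤ n := by positivity
      exact nn_aux _ _ _ hn0 hnx hnx2.le hxB
    linarith
  have hc : 0 ≤ 6/π^2*(ε₁ - ε₂) := mul_nonneg (by positivity) (by linarith)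
  have t' : 2*(6/π^2*(ε₁ - ε₂)) ≤ 2*(6/π^2*(ε₁ - ε₂)) * R := le_mul_of_one_le_right (by positivity) hR1
  have z' : ((2*E+1)*(2*E+1):ℝ) ≤ (2*E+1)*(2*E+1) * R := le_mul_of_one_le_right (by positivity) hR1
  rw [abs_le] at z k1 k2 t ⊢
  constructor <;> linarith
end

section
/- Fix ε > 0 and r with 1/2 < r < 7/10. There is a constant C, depending only on a, b, ε and r, such that the following holds. Let Λ ⊆ ℤ² be a subgroup of finite index d(Λ) = [ℤ² : Λ] containing at least one pair with coprime coordinates, let K > 0, and let B ≥ 2 satisfy K²·b ≤ (2²¹·162·(b/a)·ε²)^(−2/5)·B^((4/5)(1/r − 1) − (3/5)(2 − 1/r)) and b·d(Λ)² ≤ K²·B^(2−1/r). Set Θ(Λ) = (6/π²)·d(Λ)⁻¹·∏_{p prime, p ∣ d(Λ)} (1 + 1/p)⁻¹ and S = #{(u,v) ∈ Λ : u, v positive integers, gcd(u,v) = 1, 0 < u/v − √(b/a) ≤ ε·B^(−1/r), v ≤ K·B}. Then |S − (Θ(Λ)·ε·K²/2)·B^(2−1/r)| ≤ C·(K^(3/2)·b^(1/4)·d(Λ)^(1/2)·B^((3/4)(2−1/r))·log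 B + K·b^(3/2)·B^(1−1/(2r))·log B). -/
open Real

open MeasureTheory in
lemma tri_vol (p1 p2 q1 q2 δ c e w : ℝ) (hD : p1*q2-p2*q1 ≠ 0) (hδ : 0 < δ)
    (hs : 0 ≤ δ*w-e-c) :
    volume {x : ℝ × ℝ | c < p1*x.1+p2*x.2 ∧ p1*x.1+p2*x.2 < δ*(q1*x.1+q2*x.2) - e ∧
      q1*x.1+q2*x.2 ≤ w} = ENNReal.ofReal ((δ*w-e-c)^2/(2*δ*|p1*q2-p2*q1|)) := by
  set A : Matrix (Fin 2) (Fin 2) ℝ := !![q1, q2; p1, p2] with hA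
  set f : (ℝ × ℝ) →ₗ[ℝ] (ℝ × ℝ) := Matrix.toLin (Module.Basis.finTwoProd ℝ) (Module.Basis.finTwoProd ℝ) A with hf
  have hdet : LinearMap.det f = -(p1*q2-p2*q1) := by
    rw [hf, LinearMap.det_toLin, hA, Matrix.det_fin_two_of]; ring
  have hdet0 : LinearMap.det f ≠ 0 := by rw [hdet]; exact neg_ne_zero.mpr hD
  have hq0 : (c+e)/δ ≤ w := by
    rw [div_le_iff₀ hδ]; nlinarith
  have hset : {x : ℝ × ℝ | c < p1*x.1+p2*x.2 ∧ p1*x.1+p2*x.2 < δ*(q1*x.1+q2*x.2) - e ∧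
      q1*x.1+q2*x.2 ≤ w} = f ⁻¹' (regionBetween (fun _ => c) (fun q => δ*q - e)
        (Set.Ioc ((c+e)/δ) w)) := by
    ext ⟨x, y⟩
    simp only [Set.mem_ofPred_eq, Set.mem_preimage, regionBetween, hf, hA,
      Matrix.toLin_finTwoProd_apply, Set.mem_Ioc, Set.mem_Ioo]
    constructor
    · rintro ⟨h1, h2, h3⟩
      refine ⟨⟨?_, h3⟩, h1, h2⟩
      rw [div_lt_iff₀ hδ]; linarith
    · rintro ⟨⟨_, h3⟩, h1, h2⟩
      exact ⟨h1, h2, h3⟩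
  rw [hset, Measure.addHaar_preimage_linearMap _ hdet0]
  have hreg : volume (regionBetween (fun _ => c) (fun q => δ*q - e)
        (Set.Ioc ((c+e)/δ) w)) = ENNReal.ofReal ((δ*w-e-c)^2/(2*δ)) := by
    rw [Measure.volume_eq_prod, volume_regionBetween_eq_integral]
    · congr 1
      rw [← intervalIntegral.integral_of_le hq0]
      change (∫ q in ((c+e)/δ)..w, (δ*q-e-c)) = _
      have : ∀ x ∈ Set.uIcc ((c+e)/δ) w, HasDerivAt (fun q => δ*q^2/2 - (e+c)*q) (δ*x-e-c) x := by
        intro x _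
        have h1 := ((hasDerivAt_pow 2 x).const_mul δ).div_const 2
        have h2 := (hasDerivAt_id x).const_mul (e+c)
        exact (h1.sub h2).congr_deriv (by push_cast; ring)
      rw [intervalIntegral.integral_eq_sub_of_hasDerivAt this]
      · field_simp; ring
      · apply Continuous.intervalIntegrable; fun_prop
    · exact (continuous_const.integrableOn_Ioc)
    · exact Continuous.integrableOn_Ioc (by fun_prop)
    · exact measurableSet_Ioc
    · intro x hx
      have := hx.1
      rw [div_lt_iff₀ hδ] at this
      linarith
  rw [hreg, hdet, ← ENNReal.ofReal_mul (abs_nonneg _)]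
  congr 1
  rw [abs_inv, abs_neg]
  have : |p1*q2-p2*q1| ≠ 0 := abs_ne_zero.mpr hD
  field_simp

def cell (z : ℤ × ℤ) : Set (ℝ × ℝ) := Set.Ico (z.1:ℝ) (z.1+1) ×ˢ Set.Ico (z.2:ℝ) (z.2+1)

lemma mem_cell (z : ℤ × ℤ) (x : ℝ × ℝ) : x ∈ cell z ↔ z = (⌊x.1⌋, ⌊x.2⌋) := by
  obtain ⟨i, j⟩ := z
  simp only [cell, Set.mem_prod, Set.mem_Ico, Prod.mk.injEq]
  rw [← Int.floor_eq_iff, ← Int.floor_eq_iff]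
  tauto

open MeasureTheory in
lemma cell_vol (F : Finset (ℤ × ℤ)) : volume (⋃ z ∈ F, cell z) = (F.card : ENNReal) := by
  rw [measure_biUnion_finset]
  · have : ∀ z ∈ F, volume (cell z) = 1 := by
      intro z _
      rw [cell, Measure.volume_eq_prod, Measure.prod_prod]
      simp
    rw [Finset.sum_congr rfl this]; simp
  · intro z _ z' _ hne
    simp only [Function.onFun]
    rw [Set.disjoint_left]
    intro x hx hx'
    rw [mem_cell] at hx hx'
    exact hne (hx.trans hx'.symm)
  · intro z _
    exact measurableSet_Ico.prod measurableSet_Ico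

lemma lin_near (p1 p2 μ x y : ℝ) (hp : |p1|+|p2| < μ) :
    |(p1*x+p2*y) - (p1*⌊x⌋+p2*⌊y⌋)| < μ := by
  have h : (p1*x+p2*y) - (p1*⌊x⌋+p2*⌊y⌋) = p1 * Int.fract x + p2 * Int.fract y := by
    rw [← Int.self_sub_floor, ← Int.self_sub_floor]; ring
  rw [h]
  have h1 := Int.fract_nonneg x
  have h2 := (Int.fract_lt_one x).le
  have h3 := Int.fract_nonneg y
  have h4 := (Int.fract_lt_one y).le
  calc _ ≤ |p1 * Int.fract x| + |p2 * Int.fract y| := abs_add_le _ _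
    _ = |p1| * Int.fract x + |p2| * Int.fract y := by
      rw [abs_mul, abs_mul, abs_of_nonneg h1, abs_of_nonneg h3]
    _ ≤ |p1| * 1 + |p2| * 1 := by gcongr
    _ < μ := by linarith

open MeasureTheory in
lemma core (p1 p2 q1 q2 δ W μ ν : ℝ) (hD : p1*q2-p2*q1 ≠ 0) (hδ : 0 < δ) (hW : 0 ≤ W)
    (hp : |p1|+|p2| < μ) (hq : |q1|+|q2| < ν) (S : Set (ℤ × ℤ))
    (hS : S = {z : ℤ × ℤ | 0 < p1*z.1+p2*z.2 ∧ p1*z.1+p2*z.2 ≤ δ*(q1*z.1+q2*z.2) ∧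
      q1*z.1+q2*z.2 ≤ W}) :
    S.Finite ∧ |(S.ncard:ℝ) - δ*W^2/(2*|p1*q2-p2*q1|)| ≤
      2/(δ*|p1*q2-p2*q1|)*(δ*W*(μ+δ*ν) + (μ+δ*ν)^2) := by
  have hDp : 0 < |p1*q2-p2*q1| := abs_pos.mpr hD
  set D := |p1*q2-p2*q1| with hDdef
  have hμ : 0 < μ := lt_of_le_of_lt (by positivity) hp
  have hν : 0 < ν := lt_of_le_of_lt (by positivity) hq
  have hδν : 0 < δ * ν := by positivity
  set κ := μ+δ*ν with hκ
  have hκ0 : 0 < κ := by positivity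
  have hsp : 0 ≤ δ*(W+ν)-(-(μ+δ*ν))-(-μ) := by nlinarith [mul_nonneg hδ.le hW]
  have hup := tri_vol p1 p2 q1 q2 δ (-μ) (-(μ+δ*ν)) (W+ν) hD hδ hsp
  have hfin : ∀ F : Finset (ℤ × ℤ), (↑F ⊆ S) → (F.card : ℝ) ≤ (δ*W+2*κ)^2/(2*δ*D) := by
    intro F hF
    have hsub : (⋃ z ∈ F, cell z) ⊆ {x : ℝ × ℝ | -μ < p1*x.1+p2*x.2 ∧
        p1*x.1+p2*x.2 < δ*(q1*x.1+q2*x.2) - (-(μ+δ*ν)) ∧ q1*x.1+q2*x.2 ≤ W+ν} := by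
      intro x hx
      simp only [Set.mem_iUnion] at hx
      obtain ⟨z, hz, hxz⟩ := hx
      have hzS := hF hz
      rw [mem_cell] at hxz
      rw [hS, hxz] at hzS
      obtain ⟨h1, h2, h3⟩ := hzS
      have a1 := abs_lt.mp (lin_near p1 p2 μ x.1 x.2 hp)
      have a2 := abs_lt.mp (lin_near q1 q2 ν x.1 x.2 hq)
      simp only at h1 h2 h3
      have a3 := mul_lt_mul_of_pos_left a2.1 hδ
      refine ⟨by linarith, by nlinarith, by linarith⟩
    have h := measure_mono (μ := volume) hsub
    rw [cell_vol, hup] at h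
    rw [← ENNReal.ofReal_natCast, ENNReal.ofReal_le_ofReal_iff (by positivity)] at h
    calc _ ≤ _ := h
      _ = _ := by rw [hκ]; congr 1; ring
  have hSfin : S.Finite := by
    by_contra hinf
    obtain ⟨F, hF, hc⟩ := Set.Infinite.exists_subset_card_eq hinf (⌊(δ*W+2*κ)^2/(2*δ*D)⌋₊+1)
    have := hfin F hF
    rw [hc] at this
    have h2 := Nat.lt_floor_add_one ((δ*W+2*κ)^2/(2*δ*D))
    push_cast at this
    linarith
  refine ⟨hSfin, ?_⟩
  have hcard : S.ncard = hSfin.toFinset.card := Set.ncard_eq_toFinset_card S hSfin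
  have hU : (S.ncard : ℝ) ≤ (δ*W+2*κ)^2/(2*δ*D) := by
    rw [hcard]; apply hfin; simp
  have hUeq : (δ*W+2*κ)^2/(2*δ*D) - δ*W^2/(2*D) = 2/(δ*D)*(δ*W*κ + κ^2) := by
    field_simp; ring
  have hLow : δ*W^2/(2*D) - 2/(δ*D)*(δ*W*κ + κ^2) ≤ (S.ncard : ℝ) := by
    by_cases hs : 0 ≤ δ*W - 2*κ
    · have hsm : 0 ≤ δ*(W-ν)-(μ+δ*ν)-μ := by rw [hκ] at hs; linarith
      have hlo := tri_vol p1 p2 q1 q2 δ μ (μ+δ*ν) (W-ν) hD hδ hsm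
      have hsub : {x : ℝ × ℝ | μ < p1*x.1+p2*x.2 ∧
        p1*x.1+p2*x.2 < δ*(q1*x.1+q2*x.2) - (μ+δ*ν) ∧ q1*x.1+q2*x.2 ≤ W-ν} ⊆
          (⋃ z ∈ hSfin.toFinset, cell z) := by
        intro x hx
        obtain ⟨h1, h2, h3⟩ := hx
        simp only [Set.mem_iUnion]
        refine ⟨(⌊x.1⌋, ⌊x.2⌋), ?_, by rw [mem_cell]⟩
        rw [Set.Finite.mem_toFinset, hS]
        have a1 := abs_lt.mp (lin_near p1 p2 μ x.1 x.2 hp)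
        have a2 := abs_lt.mp (lin_near q1 q2 ν x.1 x.2 hq)
        have a3 := mul_lt_mul_of_pos_left a2.2 hδ
        refine ⟨by simp only; linarith, by simp only; nlinarith, by simp only; linarith⟩
      have h := measure_mono (μ := volume) hsub
      rw [cell_vol, hlo, ← ENNReal.ofReal_natCast,
        ENNReal.ofReal_le_ofReal_iff (by positivity)] at h
      rw [hcard]
      refine le_trans ?_ h
      have e1 : (δ*(W-ν)-(μ+δ*ν)-μ)^2/(2*δ*D) - (δ*W^2/(2*D) - 2/(δ*D)*(δ*W*κ + κ^2))
          = 4*κ^2/(δ*D) := by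
        rw [hκ]; field_simp; ring
      have e2 : 0 ≤ 4*κ^2/(δ*D) := by positivity
      linarith
    · push Not at hs
      have e1 : δ*W^2/(2*D) - 2/(δ*D)*(δ*W*κ + κ^2) =
          (δ*W*(δ*W-4*κ) - 4*κ^2)/(2*δ*D) := by field_simp; ring
      rw [e1]
      refine le_trans ?_ (Nat.cast_nonneg _)
      apply div_nonpos_of_nonpos_of_nonneg _ (by positivity)
      nlinarith [mul_nonneg hδ.le hW, sq_nonneg κ]
  rw [abs_le]
  constructor <;> linarith

/-- Hermite basis of `{m ∣ p1*y - p2*x}`. -/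
lemma hermite (m : ℕ) (hm : 0 < m) (p1 p2 : ℤ) (hc : IsCoprime p1 p2) :
    ∃ h c g : ℤ, 0 < h ∧ 0 ≤ c ∧ c < h ∧ 0 < g ∧ h * g = m ∧
      ∀ x y : ℤ, (m:ℤ) ∣ p1*y - p2*x ↔ ∃ i j : ℤ, x = h*i + c*j ∧ y = g*j := by
  have hg0 : (Int.gcd p2 m : ℤ) ≠ 0 := by
    have : 0 < Int.gcd p2 m := Int.gcd_pos_of_ne_zero_right _ (by exact_mod_cast hm.ne')
    exact_mod_cast this.ne'
  set g : ℤ := (Int.gcd p2 m : ℤ) with hg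
  have hgpos : 0 < g := lt_of_le_of_ne (by rw [hg]; positivity) (Ne.symm hg0)
  obtain ⟨q, hq⟩ : g ∣ p2 := Int.gcd_dvd_left _ _
  obtain ⟨h, hh⟩ : g ∣ (m:ℤ) := Int.gcd_dvd_right _ _
  have hhpos : 0 < h := by
    have : 0 < g * h := by rw [← hh]; exact_mod_cast hm
    exact pos_of_mul_pos_right this hgpos.le
  have hbez : ∃ s t : ℤ, s * q + t * h = 1 := by
    have := Int.gcd_eq_gcd_ab p2 m
    rw [← hg] at this
    refine ⟨Int.gcdA p2 m, Int.gcdB p2 m, ?_⟩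
    apply mul_left_cancel₀ hg0
    rw [hq, hh] at this
    rw [← hq, ← hh] at this
    have e : g = p2 * Int.gcdA p2 m + m * Int.gcdB p2 m := this
    generalize Int.gcdA p2 m = A at *
    generalize Int.gcdB p2 m = Bq at *
    rw [hh, hq] at e
    linear_combination -e
  obtain ⟨s, t, hst⟩ := hbez
  obtain ⟨e, f, hef⟩ := hc
  have hqh : IsCoprime h q := ⟨t, s, by linarith⟩
  have hgp1 : IsCoprime g p1 := ⟨f * q, e, by rw [hq] at hef; linear_combination hef⟩
  set c := (s * p1) % h with hcdef
  have hcq : h ∣ p1 - q * c := by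
    have : c = s * p1 - h * ((s*p1)/h) := by rw [hcdef, Int.emod_def]
    rw [this]
    refine ⟨t * p1 + q * ((s*p1)/h), ?_⟩
    linear_combination (-p1) * hst
  refine ⟨h, c, g, hhpos, Int.emod_nonneg _ hhpos.ne', Int.emod_lt_of_pos _ hhpos, hgpos,
    by rw [hh]; ring, ?_⟩
  intro x y
  obtain ⟨k, hk⟩ := hcq
  constructor
  · intro hd
    have h1 : g ∣ y := by
      have : g ∣ p1 * y - p2 * x := (Dvd.intro _ hh.symm).trans hd
      have h2 : g ∣ p1 * y := by
        have h3 : g ∣ p2 * x := (Dvd.intro _ hq.symm).mul_right x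
        simpa using dvd_add this h3
      exact hgp1.dvd_of_dvd_mul_left h2
    obtain ⟨j, rfl⟩ := h1
    have h2 : h ∣ q * (x - c*j) := by
      rw [hh, hq] at hd
      obtain ⟨l, hl⟩ := hd
      refine ⟨k * j - l, ?_⟩
      apply mul_left_cancel₀ hg0
      linear_combination -hl + g * j * hk
    obtain ⟨i, hi⟩ := hqh.dvd_of_dvd_mul_left h2
    exact ⟨i, j, by linarith, rfl⟩
  · rintro ⟨i, j, rfl, rfl⟩
    rw [hh, hq]
    refine ⟨k * j - q * i, ?_⟩
    linear_combination g * j * hk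

lemma pell_unit (a b : ℕ) (ha : 0 < a) (hab : a < b) (hnsq : ¬ IsSquare (a * b)) :
    ∃ η : ℝ, 1 < η ∧ ∀ n : ℕ, ∃ t s : ℤ, 0 < t ∧ 0 ≤ s ∧ t^2 - a*b*s^2 = 1 ∧
      (t:ℝ) + s * √((a:ℝ)*b) = η^n := by
  have h1 : (0:ℤ) < (a:ℤ)*b := by
    have : 0 < b := by omega
    positivity
  have h2 : ¬ IsSquare ((a:ℤ)*b) := by
    intro h
    apply hnsq
    obtain ⟨k, hk⟩ := h
    refine ⟨k.natAbs, ?_⟩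
    zify
    rw [hk]; exact (abs_mul_abs_self k).symm
  obtain ⟨x, y, hxy, hy⟩ := Pell.exists_of_not_isSquare h1 h2
  have hy1 : 1 ≤ |y| := Int.one_le_abs hy
  have hx0 : x ≠ 0 := by
    rintro rfl
    nlinarith [sq_nonneg y, mul_nonneg h1.le (sq_nonneg y)]
  have hx1 : 1 ≤ |x| := Int.one_le_abs hx0
  have hroot : (√((a:ℝ)*b))^2 = a*b := Real.sq_sqrt (by positivity)
  have hrpos : 0 < √((a:ℝ)*b) := Real.sqrt_pos.mpr (by have : 0 < b := by omega
                                                       positivity)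
  refine ⟨(|x|:ℤ) + (|y|:ℤ) * √((a:ℝ)*b), ?_, ?_⟩
  · have e1 : (1:ℝ) ≤ (|x|:ℤ) := by exact_mod_cast hx1
    have e2 : (1:ℝ) ≤ (|y|:ℤ) := by exact_mod_cast hy1
    nlinarith
  · intro n
    induction n with
    | zero => exact ⟨1, 0, by simp⟩
    | succ n ih =>
      obtain ⟨t, s, ht, hs, hn, he⟩ := ih
      have hX : |x|^2 - a*b*|y|^2 = 1 := by rw [sq_abs, sq_abs]; linarith
      refine ⟨t*|x| + a*b*(s*|y|), t*|y|+s*|x|, by positivity, by positivity, ?_, ?_⟩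
      · linear_combination (t^2-a*b*s^2)*hX + hn
      · rw [pow_succ, ← he]
        push_cast
        linear_combination (-(s:ℝ) * |(y:ℝ)|) * hroot

lemma lattice_basis (a b : ℕ) (ha : 0 < a) (hab : a < b) (hnsq : ¬ IsSquare (a * b)) (ε : ℝ)
    (hε : 0 < ε) : ∃ C : ℝ, 0 < C ∧ ∀ δ : ℝ, 0 < δ → δ ≤ ε → ∀ m : ℕ, 0 < m → ∀ p1 p2 : ℤ,
      IsCoprime p1 p2 → ∃ u1 v1 u2 v2 : ℤ, (|u1*v2 - u2*v1| = m) ∧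
      (∀ u v : ℤ, (m:ℤ) ∣ p1*v - p2*u ↔ ∃ i j : ℤ, u = u1*i+u2*j ∧ v = v1*i+v2*j) ∧
      |(u1:ℝ) - √((b:ℝ)/a)*v1| + |(u2:ℝ) - √((b:ℝ)/a)*v2| < C * m * √δ ∧
      δ * (|(v1:ℝ)| + |(v2:ℝ)|) < C * m * √δ := by
  obtain ⟨η, hη, hpell⟩ := pell_unit a b ha hab hnsq
  set α := √((b:ℝ)/a) with hα
  have hb : 0 < b := by omega
  have ha' : (0:ℝ) < a := by exact_mod_cast ha
  have hb' : (0:ℝ) < b := by exact_mod_cast hb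
  have hα0 : 0 < α := Real.sqrt_pos.mpr (by positivity)
  have hαa : √((a:ℝ)*b) = α * a := by
    rw [hα]
    rw [show (a:ℝ)*b = (b/a) * a^2 by field_simp, Real.sqrt_mul (by positivity),
      Real.sqrt_sq ha'.le]
  have hαb : α^2 * a = b := by
    rw [hα, Real.sq_sqrt (by positivity)]; field_simp
  have hα1 : 1 ≤ α := by
    rw [hα, Real.one_le_sqrt, one_le_div ha']; exact_mod_cast hab.le
  refine ⟨(2+α)*η/√ε + 3*√ε+1, by positivity, ?_⟩
  intro δ hδ hδε m hm p1 p2 hcop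
  have hsδ : 0 < √δ := Real.sqrt_pos.mpr hδ
  have hsε : 0 < √ε := Real.sqrt_pos.mpr hε
  obtain ⟨n, hn1, hn2⟩ := exists_nat_pow_near (x := √ε/√δ)
    (by rw [one_le_div hsδ]; exact Real.sqrt_le_sqrt hδε) hη
  obtain ⟨t, s, ht, hs, hts, hη'⟩ := hpell n
  set l := η^n with hl
  have hl0 : 0 < l := by positivity
  have htsR : (t:ℝ)^2 - a*b*s^2 = 1 := by exact_mod_cast hts
  rw [hαa] at hη'
  have hinv : (t:ℝ) - α*a*s = l⁻¹ := by
    apply eq_inv_of_mul_eq_one_left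
    rw [← hη']
    linear_combination htsR - (a*s^2:ℝ) * hαb
  have hsR : (0:ℝ) ≤ s := by exact_mod_cast hs
  have htR : (0:ℝ) < t := by exact_mod_cast ht
  have htl : (t:ℝ) ≤ l := by rw [← hη']; nlinarith [mul_nonneg hsR (mul_pos hα0 ha').le]
  have hsl : (a:ℝ)*s ≤ l := by
    rw [← hη']; nlinarith [mul_nonneg hsR ha'.le]
  -- new functional
  have hcop' : IsCoprime (p1*t - p2*b*s) (p2*t - p1*a*s) := by
    obtain ⟨e, f, hef⟩ := hcop
    refine ⟨e*t+f*a*s, e*b*s+f*t, ?_⟩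
    linear_combination (t^2 - a*b*s^2) * hef + hts
  obtain ⟨h, c, g, hh, hc0, hch, hg, hhg, hiff⟩ := hermite m hm _ _ hcop'
  have hhm : h ≤ m := by nlinarith
  have hgm : g ≤ m := by nlinarith
  have hhR : (0:ℝ) < h := by exact_mod_cast hh
  have hgR : (0:ℝ) < g := by exact_mod_cast hg
  have hcR : (0:ℝ) ≤ c := by exact_mod_cast hc0
  have hhmR : (h:ℝ) ≤ m := by exact_mod_cast hhm
  have hgmR : (g:ℝ) ≤ m := by exact_mod_cast hgm
  have hcmR : (c:ℝ) ≤ m := by exact_mod_cast (hch.le.trans hhm)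
  have hmR : (0:ℝ) < m := by exact_mod_cast hm
  refine ⟨t*h, a*s*h, t*c+b*s*g, a*s*c+t*g, ?_, ?_, ?_, ?_⟩
  · have : t*h*(a*s*c+t*g) - (t*c+b*s*g)*(a*s*h) = m := by
      linear_combination h*g*hts + hhg
    rw [this]; simp
  · intro u v
    have key : p1*v - p2*u = (p1*t - p2*b*s)*(t*v - a*s*u) - (p2*t - p1*a*s)*(t*u-b*s*v) := by
      linear_combination (-(p1*v-p2*u))*hts
    rw [key, hiff]
    constructor
    · rintro ⟨i, j, h1, h2⟩
      refine ⟨i, j, ?_, ?_⟩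
      · linear_combination t*h1 + b*s*h2 - u*hts
      · linear_combination a*s*h1 + t*h2 - v*hts
    · rintro ⟨i, j, rfl, rfl⟩
      refine ⟨i, j, ?_, ?_⟩
      · linear_combination (h*i+c*j)*hts
      · linear_combination (g*j)*hts
  · have e1 : ((t*h:ℤ):ℝ) - α*((a*s*h:ℤ):ℝ) = h*l⁻¹ := by
      push_cast; rw [← hinv]; ring
    have e2 : ((t*c+b*s*g:ℤ):ℝ) - α*((a*s*c+t*g:ℤ):ℝ) = l⁻¹*(c - α*g) := by
      push_cast; rw [← hinv]; linear_combination (-(s*g:ℝ))*hαb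
    rw [e1, e2]
    have hli : l⁻¹ ≤ η*√δ/√ε := by
      rw [inv_le_comm₀ hl0 (by positivity), inv_div, mul_comm, ← div_div, div_le_iff₀ (by positivity),
        ← pow_succ]
      exact hn2.le
    have b1 : |(h:ℝ)*l⁻¹| ≤ m*l⁻¹ := by
      rw [abs_mul, abs_of_pos hhR, abs_of_pos (inv_pos.mpr hl0)]
      gcongr
    have b2 : |l⁻¹*((c:ℝ) - α*g)| ≤ l⁻¹*(m+α*m) := by
      rw [abs_mul, abs_of_pos (inv_pos.mpr hl0)]
      gcongr
      calc |(c:ℝ) - α*g| ≤ |(c:ℝ)| + |α*g| := abs_sub _ _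
        _ = c + α*g := by rw [abs_of_nonneg hcR, abs_of_pos (by positivity)]
        _ ≤ _ := by gcongr
    calc _ ≤ (2+α)*m*l⁻¹ := by linarith
      _ ≤ (2+α)*m*(η*√δ/√ε) := by gcongr
      _ = ((2+α)*η/√ε)*m*√δ := by ring
      _ < ((2+α)*η/√ε + 3*√ε+1)*m*√δ := by gcongr; linarith
  · push_cast
    have b1 : |(a:ℝ)*s*h| ≤ l*m := by
      rw [abs_of_nonneg (by positivity)]; gcongr
    have b2 : |(a:ℝ)*s*c+t*g| ≤ l*m+l*m := by
      rw [abs_of_nonneg (by positivity)]; gcongr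
    have hld : l*√δ ≤ √ε := by rwa [le_div_iff₀ hsδ] at hn1
    calc _ ≤ δ*(3*l*m) := by gcongr; linarith
      _ = 3*(l*√δ)*m*√δ := by
        nth_rewrite 1 [← Real.mul_self_sqrt hδ.le]; ring
      _ ≤ 3*√ε*m*√δ := by gcongr
      _ < _ := by
        gcongr
        have : 0 < (2+α)*η/√ε := by positivity
        linarith

noncomputable def fE (d : ℕ) (n : ℕ) : ℝ := (ArithmeticFunction.moebius n : ℝ) * (Nat.gcd n d) / (n:ℝ)^2

lemma fE_bound (d : ℕ) (hd : 0 < d) (n : ℕ) : |fE d n| ≤ d * (1/(n:ℝ)^2) := by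
  have h1 : |(ArithmeticFunction.moebius n : ℝ)| ≤ 1 := by
    exact_mod_cast ArithmeticFunction.abs_moebius_le_one
  have h2 : ((Nat.gcd n d : ℕ):ℝ) ≤ d := by exact_mod_cast Nat.gcd_le_right n hd
  rw [fE, abs_div, abs_mul, Nat.abs_cast, abs_of_nonneg (by positivity : (0:ℝ) ≤ (n:ℝ)^2),
    mul_one_div]
  gcongr
  calc _ ≤ 1 * (d:ℝ) := by gcongr
    _ = d := one_mul _

lemma fE_summable (d : ℕ) (hd : 0 < d) : Summable (fun n => ‖fE d n‖) := by
  refine Summable.of_nonneg_of_le (fun _ => norm_nonneg _) (fun n => fE_bound d hd n) ?_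
  exact hasSum_zeta_two.summable.mul_left _

noncomputable def sqInv : ℕ →*₀ ℝ where
  toFun n := 1/(n:ℝ)^2
  map_zero' := by simp
  map_one' := by simp
  map_mul' x y := by push_cast; field_simp

lemma fE_sum (d : ℕ) (hd : 0 < d) :
    ∑' n, fE d n = 6/π^2 * ∏ p ∈ d.primeFactors, (1 + 1/(p:ℝ))⁻¹ := by
  have h1 : HasProd ({p | Nat.Prime p}.mulIndicator fun p => ∑' (e : ℕ), fE d (p ^ e))
      (∑' n, fE d n) := by
    apply EulerProduct.eulerProduct_hasProd_mulIndicator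
    · simp [fE]
    · intro m n hmn
      simp only [fE]
      rw [ArithmeticFunction.isMultiplicative_moebius.map_mul_of_coprime hmn,
        Nat.gcd_comm (m*n), Nat.Coprime.gcd_mul d hmn, Nat.gcd_comm d m, Nat.gcd_comm d n]
      push_cast
      ring
    · exact fE_summable d hd
    · simp [fE]
  have h2 : HasProd ({p | Nat.Prime p}.mulIndicator fun p : ℕ => (1 - sqInv p)⁻¹) (π^2/6) := by
    have h := EulerProduct.eulerProduct_completely_multiplicative_hasProd (f := sqInv) (by
      simp [sqInv])
    have e : ∑' n, sqInv n = π^2/6 := hasSum_zeta_two.tsum_eq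
    rw [e] at h
    exact (hasProd_subtype_iff_mulIndicator (s := {p | Nat.Prime p})
      (f := fun p : ℕ => (1 - sqInv p)⁻¹)).mp h
  have h3 := h1.mul h2
  have hloc : ∀ p : ℕ, Nat.Prime p → ∑' e : ℕ, fE d (p^e) = 1 - (Nat.gcd p d : ℝ)/(p:ℝ)^2 := by
    intro p hp
    rw [tsum_eq_sum (s := Finset.range 2)]
    · rw [Finset.sum_range_succ, Finset.sum_range_one]
      simp [fE, ArithmeticFunction.moebius_apply_prime hp]
      ring
    · intro e he
      have he2 : 2 ≤ e := by
        rw [Finset.mem_range] at he; omega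
      simp only [fE]
      rw [ArithmeticFunction.moebius_apply_prime_pow hp (by omega)]
      rw [if_neg (by omega)]; simp
  have h4 : HasProd (fun p : ℕ => if p ∈ d.primeFactors then (1 + 1/(p:ℝ))⁻¹ else 1)
      (∏ p ∈ d.primeFactors, (1 + 1/(p:ℝ))⁻¹) := by
    have := hasProd_prod_of_ne_finset_one (L := SummationFilter.unconditional ℕ)
      (f := fun p : ℕ => if p ∈ d.primeFactors then (1 + 1/(p:ℝ))⁻¹ else 1)
      (s := d.primeFactors) (by intro b hb; simp only [if_neg hb])
    convert this using 1
    apply Finset.prod_congr rfl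
    intro p hp
    simp only [if_pos hp]
  have h5 : (∑' n, fE d n) * (π^2/6) = ∏ p ∈ d.primeFactors, (1 + 1/(p:ℝ))⁻¹ := by
    apply h3.unique
    convert h4 using 1
    ext p
    by_cases hp : Nat.Prime p
    · rw [Set.mulIndicator_of_mem (by exact hp), Set.mulIndicator_of_mem (by exact hp), hloc p hp]
      have hp1 : (1:ℝ) < p := by exact_mod_cast hp.one_lt
      have hne : (p:ℝ)^2 - 1 ≠ 0 := by nlinarith
      have e : sqInv p = 1/(p:ℝ)^2 := rfl
      rw [e]
      by_cases hpd : p ∣ d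
      · rw [if_pos (Nat.mem_primeFactors.mpr ⟨hp, hpd, hd.ne'⟩), Nat.gcd_eq_left hpd]
        have : (1:ℝ) - 1/(p:ℝ)^2 = (1+1/p)*(1-1/p) := by ring
        have h7 : (1:ℝ) - 1/p ≠ 0 := by
          have : (1:ℝ)/p < 1 := by rw [div_lt_one (by linarith)]; exact hp1
          linarith
        rw [this, mul_inv, show (p:ℝ)/(p:ℝ)^2 = 1/p by field_simp]
        rw [mul_left_comm, mul_inv_cancel₀ h7, mul_one]
      · have hg : Nat.gcd p d = 1 := (Nat.Prime.coprime_iff_not_dvd hp).mpr hpd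
        rw [if_neg (by simp [hpd]), hg, Nat.cast_one]
        apply mul_inv_cancel₀
        rw [one_sub_div (by positivity)]
        exact div_ne_zero hne (by positivity)
    · rw [Set.mulIndicator_of_notMem (by exact hp), Set.mulIndicator_of_notMem (by exact hp),
        if_neg (by simp [hp])]
      simp
  rw [← h5]
  field_simp

lemma fE_tail (d : ℕ) (hd : 0 < d) (Y : ℕ) (hY : 0 < Y) :
    |∑' n, fE d n - ∑ n ∈ Finset.Ioc 0 Y, fE d n| ≤ d / Y := by
  have hs : Summable (fE d) := (fE_summable d hd).of_norm
  have hs0 : fE d 0 = 0 := by simp [fE]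
  have ht := (hs.hasSum.tendsto_sum_nat).comp (Filter.tendsto_add_atTop_nat 1)
  have ht2 : Filter.Tendsto (fun N => |∑ n ∈ Finset.range (N+1), fE d n -
      ∑ n ∈ Finset.Ioc 0 Y, fE d n|) Filter.atTop
      (nhds |∑' n, fE d n - ∑ n ∈ Finset.Ioc 0 Y, fE d n|) := (ht.sub_const _).abs
  apply le_of_tendsto ht2
  filter_upwards [Filter.eventually_ge_atTop Y] with N hN
  have e : ∑ n ∈ Finset.range (N+1), fE d n - ∑ n ∈ Finset.Ioc 0 Y, fE d n
      = ∑ n ∈ Finset.Ioc Y N, fE d n := by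
    rw [Finset.sum_range_succ', hs0, add_zero, sub_eq_iff_eq_add, add_comm,
      Finset.sum_Ioc_consecutive _ (Nat.zero_le _) hN, Finset.range_eq_Ico,
      Finset.sum_Ico_add' (fE d) 0 N 1]
    rfl
  rw [e]
  calc _ ≤ ∑ n ∈ Finset.Ioc Y N, |fE d n| := Finset.abs_sum_le_sum_abs _ _
    _ ≤ ∑ n ∈ Finset.Ioc Y N, d * ((n:ℝ)^2)⁻¹ := by
      apply Finset.sum_le_sum; intro n _; rw [← one_div]; exact fE_bound d hd n
    _ = d * ∑ n ∈ Finset.Ioc Y N, ((n:ℝ)^2)⁻¹ := by rw [Finset.mul_sum]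
    _ ≤ d * ((Y:ℝ)⁻¹ - (N:ℝ)⁻¹) := by gcongr; exact sum_Ioc_inv_sq_le_sub hY.ne' hN
    _ ≤ d * (Y:ℝ)⁻¹ := by gcongr; simp
    _ = _ := rfl

def Tset (α δ W : ℝ) : Set (ℤ × ℤ) :=
  {z | 0 < (z.1:ℝ) - α*z.2 ∧ (z.1:ℝ) - α*z.2 ≤ δ*z.2 ∧ (z.2:ℝ) ≤ W}

lemma lat_count (a b : ℕ) (ha : 0 < a) (hab : a < b) (hnsq : ¬ IsSquare (a * b)) (ε : ℝ)
    (hε : 0 < ε) : ∃ C : ℝ, 0 < C ∧ ∀ δ : ℝ, 0 < δ → δ ≤ ε → ∀ W : ℝ, 0 ≤ W → ∀ m : ℕ, 0 < m →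
      ∀ p1 p2 : ℤ, IsCoprime p1 p2 →
      {z : ℤ × ℤ | (m:ℤ) ∣ p1*z.2 - p2*z.1 ∧ z ∈ Tset (√((b:ℝ)/a)) δ W}.Finite ∧
      |({z : ℤ × ℤ | (m:ℤ) ∣ p1*z.2 - p2*z.1 ∧ z ∈ Tset (√((b:ℝ)/a)) δ W}.ncard : ℝ)
        - δ*W^2/(2*m)| ≤ C*(√δ*W+m) := by
  obtain ⟨C, hC, h⟩ := lattice_basis a b ha hab hnsq ε hε
  refine ⟨4*C+8*C^2, by positivity, ?_⟩
  intro δ hδ hδε W hW m hm p1 p2 hcop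
  obtain ⟨u1, v1, u2, v2, hdet, hiff, hP, hQ⟩ := h δ hδ hδε m hm p1 p2 hcop
  set α := √((b:ℝ)/a)
  have hmR : (0:ℝ) < m := by exact_mod_cast hm
  have hdetR : |((u1:ℝ) - α*v1)*v2 - ((u2:ℝ)-α*v2)*v1| = m := by
    have : |(u1:ℝ)*v2 - u2*v1| = m := by exact_mod_cast hdet
    rw [← this]; congr 1; ring
  have hD0 : ((u1:ℝ) - α*v1)*v2 - ((u2:ℝ)-α*v2)*v1 ≠ 0 := by
    rw [← abs_pos, hdetR]; exact hmR
  have hdet0 : u1*v2 - u2*v1 ≠ 0 := by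
    rw [← abs_pos, hdet]; exact_mod_cast hm
  have hQ' : |(v1:ℝ)| + |(v2:ℝ)| < C*m*√δ/δ := by
    rw [lt_div_iff₀ hδ]; linarith
  obtain ⟨hfin, hb⟩ := core _ _ _ _ δ W _ _ hD0 hδ hW hP hQ' _ rfl
  set S' := {z : ℤ × ℤ | 0 < ((u1:ℝ) - α*v1)*z.1 + ((u2:ℝ)-α*v2)*z.2 ∧
    ((u1:ℝ) - α*v1)*z.1 + ((u2:ℝ)-α*v2)*z.2 ≤ δ*(v1*z.1+v2*z.2) ∧ v1*z.1+v2*z.2 ≤ W} with hS'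
  let φ : ℤ × ℤ → ℤ × ℤ := fun z => (u1*z.1+u2*z.2, v1*z.1+v2*z.2)
  have hφ : Function.Injective φ := by
    rintro ⟨i, j⟩ ⟨i', j'⟩ hij
    simp only [φ, Prod.mk.injEq] at hij
    obtain ⟨h1, h2⟩ := hij
    ext
    · apply mul_left_cancel₀ hdet0
      linear_combination v2*h1 - u2*h2
    · apply mul_left_cancel₀ hdet0
      linear_combination u1*h2 - v1*h1
  have himg : {z : ℤ × ℤ | (m:ℤ) ∣ p1*z.2 - p2*z.1 ∧ z ∈ Tset α δ W} = φ '' S' := by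
    have aux : ∀ i j : ℤ, φ (i,j) ∈ Tset α δ W ↔ (i,j) ∈ S' := by
      intro i j
      have e : ((u1*i+u2*j:ℤ):ℝ) - α*((v1*i+v2*j:ℤ):ℝ) =
        ((u1:ℝ) - α*v1)*i + ((u2:ℝ)-α*v2)*j := by push_cast; ring
      have e2 : ((v1*i+v2*j:ℤ):ℝ) = v1*i+v2*j := by push_cast; ring
      simp only [Tset, φ, hS', Set.mem_ofPred_eq]
      rw [e, e2]
    ext ⟨u, v⟩
    constructor
    · rintro ⟨h1, h2⟩
      obtain ⟨i, j, rfl, rfl⟩ := (hiff u v).mp h1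
      exact ⟨(i,j), (aux i j).mp h2, rfl⟩
    · rintro ⟨⟨i, j⟩, h1, h2⟩
      rw [← h2]
      exact ⟨(hiff _ _).mpr ⟨i, j, rfl, rfl⟩, (aux i j).mpr h1⟩
  rw [himg]
  refine ⟨hfin.image _, ?_⟩
  rw [Set.ncard_image_of_injective _ hφ]
  rw [hdetR] at hb
  refine hb.trans ?_
  have hs : √δ*√δ = δ := Real.mul_self_sqrt hδ.le
  have hsδ : 0 < √δ := Real.sqrt_pos.mpr hδ
  have e : C*m*√δ + δ*(C*m*√δ/δ) = 2*C*m*√δ := by field_simp; ring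
  rw [e]
  have e2 : 2/(δ*m)*(δ*W*(2*C*m*√δ) + (2*C*m*√δ)^2) = 4*C*(√δ*W) + 8*C^2*m := by
    rw [mul_pow, Real.sq_sqrt hδ.le]; field_simp; ring
  rw [e2]
  have : 0 ≤ √δ*W := by positivity
  nlinarith [mul_pos hC hmR, mul_nonneg (sq_nonneg C) this]

lemma lat_struct (Λ : AddSubgroup (ℤ × ℤ)) (hp : ∃ p ∈ Λ, Int.gcd p.1 p.2 = 1) :
    ∃ p1 p2 : ℤ, IsCoprime p1 p2 ∧ ∀ z : ℤ × ℤ, z ∈ Λ ↔ (Λ.index : ℤ) ∣ p1*z.2 - p2*z.1 := by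
  obtain ⟨⟨p1, p2⟩, hpΛ, hg⟩ := hp
  have hcop : IsCoprime p1 p2 := Int.isCoprime_iff_gcd_eq_one.mpr hg
  refine ⟨p1, p2, hcop, ?_⟩
  let f : ℤ × ℤ →+ ℤ :=
    { toFun := fun z => p1*z.2 - p2*z.1
      map_zero' := by simp
      map_add' := by intro x y; simp only [Prod.fst_add, Prod.snd_add]; ring }
  have hf : ∀ z, f z = p1*z.2 - p2*z.1 := fun _ => rfl
  obtain ⟨s, t, hst⟩ := hcop
  have hsurj : Function.Surjective f := by
    intro n
    refine ⟨(-t*n, s*n), ?_⟩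
    rw [hf]; linear_combination n*hst
  have hker : f.ker ≤ Λ := by
    rintro ⟨x, y⟩ hz
    rw [AddMonoidHom.mem_ker, hf] at hz
    simp only at hz
    have : ((x, y) : ℤ × ℤ) = (s*x+t*y) • (p1, p2) := by
      ext
      · simp only [Prod.smul_mk, smul_eq_mul]; linear_combination (-x)*hst - t*hz
      · simp only [Prod.smul_mk, smul_eq_mul]; linear_combination (-y)*hst + s*hz
    rw [this]
    exact Λ.zsmul_mem hpΛ _
  have hcm : (Λ.map f).comap f = Λ := AddSubgroup.comap_map_eq_self hker
  obtain ⟨n, hn⟩ := Int.subgroup_cyclic (Λ.map f)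
  rw [← AddSubgroup.zmultiples_eq_closure] at hn
  have hidx : Λ.index = n.natAbs := by
    rw [← hcm, AddSubgroup.index_comap_of_surjective _ hsurj, hn, Int.index_zmultiples]
  intro z
  rw [hidx, Int.natAbs_dvd, ← hf, ← Int.mem_zmultiples_iff, ← hn]
  conv_lhs => rw [← hcm]
  rfl

lemma T_low (a b : ℕ) (ha : 0 < a) (hnsq : ¬ IsSquare (a * b)) (ε δ W : ℝ)
    (hδ : 0 < δ) (hδε : δ ≤ ε) (z : ℤ × ℤ)
    (hz : z ∈ Tset (√((b:ℝ)/a)) δ W) : 1 ≤ a*(2*√((b:ℝ)/a)+ε)*(δ*W^2) := by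
  obtain ⟨h1, h2, h3⟩ := hz
  obtain ⟨u, v⟩ := z
  simp only at h1 h2 h3
  have ha' : (0:ℝ) < a := by exact_mod_cast ha
  set α := √((b:ℝ)/a) with hα
  have hα0 : 0 ≤ α := Real.sqrt_nonneg _
  have hαb : α^2 * a = b := by
    rw [hα, Real.sq_sqrt (by positivity)]; field_simp
  have hv : (0:ℝ) < v := by
    by_contra hv
    push Not at hv
    nlinarith
  have hsum : (u:ℝ) + α*v ≤ (2*α+ε)*v := by nlinarith
  have hsum0 : 0 < (u:ℝ) + α*v := by nlinarith [mul_nonneg hα0 hv.le]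
  have hint : (1:ℝ) ≤ a*((u - α*v)*(u+α*v)) := by
    have e : (a:ℝ)*((u - α*v)*(u+α*v)) = ((a*u^2 - b*v^2 : ℤ):ℝ) := by
      push_cast; linear_combination (-(v^2:ℝ))*hαb
    have hp : 0 < (a:ℝ)*((u - α*v)*(u+α*v)) := by positivity
    rw [e] at hp ⊢
    have : 0 < (a*u^2 - b*v^2 : ℤ) := by exact_mod_cast hp
    exact_mod_cast this
  calc (1:ℝ) ≤ a*((u - α*v)*(u+α*v)) := hint
    _ ≤ a*((δ*v)*((2*α+ε)*v)) := by gcongr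
    _ = a*(2*α+ε)*(δ*(v:ℝ)^2) := by ring
    _ ≤ _ := by
      have : 0 ≤ 2*α+ε := by linarith
      gcongr

lemma sum_inv_le (Y : ℕ) : ∑ k ∈ Finset.Ioc 0 Y, (1:ℝ)/k ≤ 2*√Y := by
  induction Y with
  | zero => simp
  | succ n ih =>
    rw [Finset.sum_Ioc_succ_top (Nat.zero_le n)]
    have h1 : (√((n+1:ℕ):ℝ))^2 = n+1 := by rw [Real.sq_sqrt (by positivity)]; push_cast; rfl
    have h2 : (√(n:ℝ))^2 = n := Real.sq_sqrt (by positivity)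
    have h3 : 1 ≤ √((n+1:ℕ):ℝ) := by rw [Real.one_le_sqrt]; push_cast; linarith [Nat.cast_nonneg (α := ℝ) n]
    have h4 := Real.sqrt_nonneg (n:ℝ)
    have h5 : √(n:ℝ) ≤ √((n+1:ℕ):ℝ) := Real.sqrt_le_sqrt (by push_cast; linarith)
    set s := √((n+1:ℕ):ℝ)
    have : (1:ℝ)/((n+1:ℕ):ℝ) ≤ 2*s - 2*√n := by
      rw [Nat.cast_succ, ← h1, div_le_iff₀ (by positivity)]
      have e : (s-√n)*(s+√n) = 1 := by linear_combination h1 - h2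
      have : s - √n ≥ 0 := by linarith
      nlinarith
    linarith

lemma moebius_ind (g Y : ℕ) (hg : 0 < g) (hgY : g ≤ Y) :
    ∑ k ∈ Finset.Ioc 0 Y, (if k ∣ g then (ArithmeticFunction.moebius k : ℝ) else 0)
      = if g = 1 then 1 else 0 := by
  rw [← Finset.sum_filter]
  have : (Finset.Ioc 0 Y).filter (fun k => k ∣ g) = g.divisors := by
    ext k
    simp only [Finset.mem_filter, Finset.mem_Ioc, Nat.mem_divisors]
    constructor
    · rintro ⟨_, h⟩; exact ⟨h, hg.ne'⟩
    · rintro ⟨h, _⟩; exact ⟨⟨Nat.pos_of_dvd_of_pos h hg, (Nat.le_of_dvd hg h).trans hgY⟩, h⟩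
  rw [this]
  have h2 := congrArg (fun f => f g) (ArithmeticFunction.moebius_mul_coe_zeta)
  simp only [ArithmeticFunction.coe_mul_zeta_apply, ArithmeticFunction.one_apply] at h2
  exact_mod_cast h2

lemma T_scale (α δ V : ℝ) (k : ℕ) (hk : 0 < k) (z : ℤ × ℤ) :
    ((k:ℤ)*z.1, (k:ℤ)*z.2) ∈ Tset α δ V ↔ z ∈ Tset α δ (V/k) := by
  have hk' : (0:ℝ) < k := by exact_mod_cast hk
  simp only [Tset, Set.mem_ofPred_eq]
  push_cast
  rw [show (k:ℝ)*z.1 - α*(k*z.2) = k*(z.1-α*z.2) by ring, show δ*(k*z.2) = k*(δ*z.2) by ring,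
    mul_pos_iff_of_pos_left hk', mul_le_mul_iff_right₀ hk', le_div_iff₀' hk']

lemma main_est (a b : ℕ) (ha : 0 < a) (hab : a < b) (hnsq : ¬ IsSquare (a * b)) (ε : ℝ)
    (hε : 0 < ε) : ∃ C : ℝ, 0 < C ∧ ∀ Λ : AddSubgroup (ℤ × ℤ), Λ.index ≠ 0 →
      (∃ p ∈ Λ, Int.gcd p.1 p.2 = 1) → ∀ δ V x : ℝ, 0 < δ → δ ≤ ε → 0 < V → 0 < x →
      δ*V^2 = ε*x^2 → (Λ.index:ℝ) ≤ x →
      |({z : ℤ × ℤ | z ∈ Λ ∧ Int.gcd z.1 z.2 = 1 ∧ z ∈ Tset (√((b:ℝ)/a)) δ V}.ncard : ℝ)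
        - (6 / π ^ 2 * (Λ.index : ℝ)⁻¹ *
              ∏ p ∈ (Λ.index).primeFactors, (1 + 1 / (p : ℝ))⁻¹) * (δ*V^2) / 2| ≤
        C*(x*√x*√(Λ.index)) := by
  obtain ⟨C, hC, hcount⟩ := lat_count a b ha hab hnsq ε hε
  set α := √((b:ℝ)/a) with hα
  have hα0 : 0 ≤ α := Real.sqrt_nonneg _
  set c1 := a*(2*α+ε)+1/ε with hc1
  have ha' : (0:ℝ) < a := by exact_mod_cast ha
  have hc1p : 0 < c1 := by positivity
  set c2 := c1*ε with hc2
  have hc2p : 1 ≤ c2 := by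
    have : c2 = a*(2*α+ε)*ε + 1 := by rw [hc2, hc1]; field_simp
    rw [this]
    have : 0 ≤ a*(2*α+ε)*ε := by positivity
    linarith
  have hsc : 1 ≤ √c2 := by rwa [Real.one_le_sqrt]
  refine ⟨C*(2*√ε*√(√c2)+√c2)+ε, by positivity, ?_⟩
  intro Λ hidx hprim δ V x hδ hδε hV hx hA hdx
  obtain ⟨p1, p2, hcop, hmem⟩ := lat_struct Λ hprim
  set d := Λ.index with hd
  have hd0 : 0 < d := Nat.pos_of_ne_zero hidx
  have hdR : (1:ℝ) ≤ d := by exact_mod_cast hd0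
  have hx1 : 1 ≤ x := hdR.trans hdx
  set Y := ⌊√c2*x⌋₊ with hY
  have hY1 : 1 ≤ √c2*x := by nlinarith
  have hYp : 0 < Y := Nat.floor_pos.mpr hY1
  have hYu : (Y:ℝ) ≤ √c2*x := Nat.floor_le (by positivity)
  have hYl : x/2 ≤ Y := by
    have h1 := Nat.lt_floor_add_one (√c2*x)
    rw [← hY] at h1
    have h2 : (1:ℝ) ≤ Y := by exact_mod_cast hYp
    nlinarith
  have hYR : (0:ℝ) < Y := by exact_mod_cast hYp
  -- finite set
  have hTfin : {z : ℤ × ℤ | (d:ℤ) ∣ p1*z.2 - p2*z.1 ∧ z ∈ Tset α δ V}.Finite :=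
    (hcount δ hδ hδε V hV.le d hd0 p1 p2 hcop).1
  set T := hTfin.toFinset with hT
  have hTmem : ∀ z, z ∈ T ↔ (z ∈ Λ ∧ z ∈ Tset α δ V) := by
    intro z; rw [hT, Set.Finite.mem_toFinset, hmem z]; rfl
  have hpos : ∀ z ∈ T, 0 < Int.gcd z.1 z.2 ∧ Int.gcd z.1 z.2 ≤ Y := by
    intro z hz
    have hzT := ((hTmem z).mp hz).2
    have hg : 0 < Int.gcd z.1 z.2 := by
      apply Nat.pos_of_ne_zero
      intro h0
      rw [Int.gcd_eq_zero_iff] at h0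
      obtain ⟨h1, _, _⟩ := hzT
      rw [h0.1, h0.2] at h1
      simp at h1
    refine ⟨hg, ?_⟩
    set g := Int.gcd z.1 z.2 with hgdef
    obtain ⟨u, hu⟩ : (g:ℤ) ∣ z.1 := Int.gcd_dvd_left _ _
    obtain ⟨v, hv⟩ : (g:ℤ) ∣ z.2 := Int.gcd_dvd_right _ _
    have hz' : z = ((g:ℤ)*(u,v).1, (g:ℤ)*(u,v).2) := Prod.ext hu hv
    rw [hz', T_scale _ _ _ _ hg] at hzT
    have h1 := T_low a b ha hnsq ε δ (V/g) hδ hδε _ hzT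
    have hgR : (0:ℝ) < g := by exact_mod_cast hg
    apply Nat.le_floor
    refine (pow_le_pow_iff_left₀ (by positivity) (by positivity) two_ne_zero).mp ?_
    rw [mul_pow, Real.sq_sqrt (by linarith), hc2, mul_assoc, ← hA]
    rw [div_pow, mul_div_assoc', mul_div_assoc', le_div_iff₀ (by positivity), one_mul] at h1
    have : 0 ≤ 1/ε*(δ*V^2) := by positivity
    rw [hc1, add_mul]
    linarith
  -- inclusion exclusion
  let N : ℕ → ℝ := fun k => ((T.filter (fun z => k ∣ Int.gcd z.1 z.2)).card : ℝ)
  have hS : ({z : ℤ × ℤ | z ∈ Λ ∧ Int.gcd z.1 z.2 = 1 ∧ z ∈ Tset α δ V}.ncard : ℝ)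
      = ∑ k ∈ Finset.Ioc 0 Y, (ArithmeticFunction.moebius k : ℝ) * N k := by
    have h1 : {z : ℤ × ℤ | z ∈ Λ ∧ Int.gcd z.1 z.2 = 1 ∧ z ∈ Tset α δ V} =
        ↑(T.filter (fun z => Int.gcd z.1 z.2 = 1)) := by
      ext z
      simp only [Finset.coe_filter, Set.mem_ofPred_eq, hTmem]
      tauto
    rw [h1, Set.ncard_coe_finset, Finset.card_filter]
    push_cast
    have h2 : ∀ k, N k = ∑ z ∈ T, if k ∣ Int.gcd z.1 z.2 then (1:ℝ) else 0 := by
      intro k; simp only [N]; rw [Finset.card_filter]; push_cast; rfl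
    simp_rw [h2, Finset.mul_sum]
    rw [Finset.sum_comm]
    apply Finset.sum_congr rfl
    intro z hz
    rw [← moebius_ind _ Y (hpos z hz).1 (hpos z hz).2]
    apply Finset.sum_congr rfl
    intro k _
    split_ifs <;> simp
  have hN : ∀ k ∈ Finset.Ioc 0 Y, |N k - (δ*V^2)/(2*d) * (Nat.gcd k d / (k:ℝ)^2)| ≤
      C*(√ε*x*(1/k) + d) := by
    intro k hk
    have hk0 : 0 < k := (Finset.mem_Ioc.mp hk).1
    have hkR : (0:ℝ) < k := by exact_mod_cast hk0
    obtain ⟨m, hm⟩ : Nat.gcd k d ∣ d := Nat.gcd_dvd_right _ _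
    obtain ⟨k', hk'⟩ : Nat.gcd k d ∣ k := Nat.gcd_dvd_left _ _
    have hgp : 0 < Nat.gcd k d := Nat.gcd_pos_of_pos_left _ hk0
    have hm0 : 0 < m := Nat.pos_of_ne_zero (by rintro rfl; omega)
    have hmd : m ≤ d := Nat.le_of_dvd hd0 (Dvd.intro_left _ hm.symm)
    have hcopm : IsCoprime (m:ℤ) (k':ℤ) := by
      rw [Nat.isCoprime_iff_coprime]
      have := Nat.coprime_div_gcd_div_gcd (m := k) (n := d) hgp
      rw [Nat.div_eq_of_eq_mul_right hgp hk', Nat.div_eq_of_eq_mul_right hgp hm] at this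
      exact this.symm
    have hdvd : ∀ n : ℤ, (d:ℤ) ∣ k*n ↔ (m:ℤ) ∣ n := by
      intro n
      have e1 : (d:ℤ) = (Nat.gcd k d : ℕ)*m := by exact_mod_cast hm
      have e2 : (k:ℤ) = (Nat.gcd k d : ℕ)*k' := by exact_mod_cast hk'
      have hg0 : ((Nat.gcd k d : ℕ):ℤ) ≠ 0 := by exact_mod_cast hgp.ne'
      generalize ((Nat.gcd k d : ℕ):ℤ) = G at *
      rw [e1, e2, mul_assoc, mul_dvd_mul_iff_left hg0]
      exact ⟨fun h => hcopm.dvd_of_dvd_mul_left h, fun h => h.mul_left _⟩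
    have hNk : N k = ({z : ℤ × ℤ | (m:ℤ) ∣ p1*z.2 - p2*z.1 ∧ z ∈ Tset α δ (V/k)}.ncard : ℝ) := by
      simp only [N]
      rw [← Set.ncard_coe_finset]
      have hinj : Function.Injective (fun z : ℤ × ℤ => ((k:ℤ)*z.1, (k:ℤ)*z.2)) := by
        intro z w h
        have hkz : (k:ℤ) ≠ 0 := by exact_mod_cast hk0.ne'
        simp only [Prod.mk.injEq] at h
        exact Prod.ext (mul_left_cancel₀ hkz h.1) (mul_left_cancel₀ hkz h.2)
      rw [← Set.ncard_image_of_injective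
        {z : ℤ × ℤ | (m:ℤ) ∣ p1*z.2 - p2*z.1 ∧ z ∈ Tset α δ (V/k)} hinj]
      congr 2
      have key : ∀ z : ℤ × ℤ, ((k:ℤ)*z.1, (k:ℤ)*z.2) ∈ T ↔
          ((m:ℤ) ∣ p1*z.2 - p2*z.1 ∧ z ∈ Tset α δ (V/k)) := by
        intro z
        rw [hTmem, T_scale _ _ _ _ hk0, hmem, ← hdvd]
        simp only
        rw [show p1*((k:ℤ)*z.2) - p2*(k*z.1) = k*(p1*z.2-p2*z.1) by ring]
      ext z
      simp only [Finset.coe_filter, Set.mem_ofPred_eq, Set.mem_image]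
      constructor
      · rintro ⟨h1, h2⟩
        have h2' : (k:ℤ) ∣ (Int.gcd z.1 z.2 : ℤ) := by exact_mod_cast h2
        obtain ⟨u, hu⟩ := h2'.trans (Int.gcd_dvd_left z.1 z.2)
        obtain ⟨v, hv⟩ := h2'.trans (Int.gcd_dvd_right z.1 z.2)
        have hz' : z = ((k:ℤ)*(u,v).1, (k:ℤ)*(u,v).2) := Prod.ext hu hv
        refine ⟨(u,v), ?_, hz'.symm⟩
        rw [← key, ← hz']; exact h1
      · rintro ⟨w, hw, rfl⟩
        refine ⟨(key w).mpr hw, ?_⟩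
        have : (k:ℤ) ∣ (Int.gcd (k*w.1) (k*w.2) : ℤ) :=
          Int.dvd_coe_gcd (Dvd.intro _ rfl) (Dvd.intro _ rfl)
        exact_mod_cast this
    have hc := (hcount δ hδ hδε (V/k) (by positivity) m hm0 p1 p2 hcop).2
    rw [← hNk] at hc
    have hdR' : (d:ℝ) = (Nat.gcd k d : ℕ)*m := by exact_mod_cast hm
    have hgR : (0:ℝ) < (Nat.gcd k d : ℕ) := by exact_mod_cast hgp
    have hmR : (0:ℝ) < m := by exact_mod_cast hm0
    have e : δ*(V/k)^2/(2*m) = (δ*V^2)/(2*d) * (Nat.gcd k d / (k:ℝ)^2) := by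
      have hd' : (d:ℝ) ≠ 0 := by positivity
      rw [div_pow, mul_div_assoc', div_div, div_mul_div_comm, div_eq_div_iff (by positivity)
        (by positivity)]
      rw [hdR']
      generalize ((Nat.gcd k d : ℕ):ℝ) = G at *
      ring
    rw [← e]
    refine hc.trans ?_
    have e3 : √δ*(V/k) = √ε*x*(1/k) := by
      have : √δ*V = √ε*x := by
        rw [← Real.sqrt_sq hV.le, ← Real.sqrt_mul hδ.le, hA, Real.sqrt_mul hε.le, Real.sqrt_sq hx.le]
      rw [mul_div_assoc', this, mul_one_div]
    rw [e3]
    have : (m:ℝ) ≤ d := by exact_mod_cast hmd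
    gcongr
  have hpart : |∑ k ∈ Finset.Ioc 0 Y, (ArithmeticFunction.moebius k : ℝ) * N k -
      (δ*V^2)/(2*d) * ∑ k ∈ Finset.Ioc 0 Y, fE d k| ≤ C*(√ε*x*(2*√Y) + d*Y) := by
    rw [Finset.mul_sum, ← Finset.sum_sub_distrib]
    calc _ ≤ ∑ k ∈ Finset.Ioc 0 Y, |(ArithmeticFunction.moebius k : ℝ) * N k - (δ*V^2)/(2*d) * fE d k| :=
          Finset.abs_sum_le_sum_abs _ _
      _ ≤ ∑ k ∈ Finset.Ioc 0 Y, C*(√ε*x*(1/k) + d) := by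
        apply Finset.sum_le_sum
        intro k hk
        have e : (ArithmeticFunction.moebius k : ℝ) * N k - (δ*V^2)/(2*d) * fE d k =
          (ArithmeticFunction.moebius k : ℝ) * (N k - (δ*V^2)/(2*d) * (Nat.gcd k d / (k:ℝ)^2)) := by
          rw [fE]; ring
        rw [e, abs_mul]
        have h1 : |(ArithmeticFunction.moebius k : ℝ)| ≤ 1 := by
          exact_mod_cast ArithmeticFunction.abs_moebius_le_one
        calc _ ≤ 1 * (C*(√ε*x*(1/k) + d)) := mul_le_mul h1 (hN k hk) (abs_nonneg _) zero_le_one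
          _ = _ := one_mul _
      _ = C*(√ε*x*(∑ k ∈ Finset.Ioc 0 Y, (1:ℝ)/k) + d*Y) := by
        rw [← Finset.mul_sum, Finset.sum_add_distrib, ← Finset.mul_sum]
        simp
        left; ring
      _ ≤ _ := by
        gcongr
        exact sum_inv_le Y
  have htail := fE_tail d hd0 Y hYp
  have hsum := fE_sum d hd0
  rw [hS]
  have emain : (6 / π ^ 2 * (d : ℝ)⁻¹ * ∏ p ∈ d.primeFactors, (1 + 1 / (p : ℝ))⁻¹) * (δ*V^2) / 2
      = (δ*V^2)/(2*d) * ∑' n, fE d n := by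
    rw [hsum]; field_simp
  rw [emain]
  have hmt : |(δ*V^2)/(2*d) * (∑' n, fE d n - ∑ k ∈ Finset.Ioc 0 Y, fE d k)| ≤ ε*x := by
    rw [abs_mul, abs_of_nonneg (by positivity), hA]
    calc _ ≤ ε*x^2/(2*d)*(d/Y) := by gcongr
      _ = ε*x^2/(2*Y) := by field_simp
      _ ≤ ε*x^2/(2*(x/2)) := by gcongr
      _ = ε*x := by field_simp
  have htri : ∀ A B D E : ℝ, |A - D * E| ≤ |A - D*B| + |D*(E-B)| := by
    intro A B D E
    have : A - D*E = (A-D*B) - D*(E-B) := by ring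
    rw [this]; exact abs_sub _ _
  refine (htri _ (∑ k ∈ Finset.Ioc 0 Y, fE d k) _ _).trans ?_
  refine (add_le_add hpart hmt).trans ?_
  set Z := x*√x*√d with hZ
  have hsd1 : 1 ≤ √(d:ℝ) := by rwa [Real.one_le_sqrt]
  have hsx1 : 1 ≤ √x := by rwa [Real.one_le_sqrt]
  have hsdx : √(d:ℝ) ≤ √x := Real.sqrt_le_sqrt hdx
  have z1 : x*√x ≤ Z := by
    rw [hZ]; exact le_mul_of_one_le_right (by positivity) hsd1
  have z2 : x ≤ Z := (le_mul_of_one_le_right hx.le hsx1).trans z1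
  have z3 : d*x ≤ Z := by
    calc (d:ℝ)*x = x*√d*√d := by rw [mul_assoc, Real.mul_self_sqrt (by positivity)]; ring
      _ ≤ x*√x*√d := by gcongr
  have hsY : √(Y:ℝ) ≤ √(√c2)*√x := by
    rw [← Real.sqrt_mul (by positivity)]; exact Real.sqrt_le_sqrt hYu
  calc _ ≤ C*(√ε*x*(2*(√(√c2)*√x)) + d*(√c2*x)) + ε*x := by gcongr
    _ = C*(2*√ε*√(√c2)*(x*√x) + √c2*(d*x)) + ε*x := by ring
    _ ≤ C*(2*√ε*√(√c2)*Z + √c2*Z) + ε*Z := by gcongr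
    _ = _ := by ring

/-- Equidistribution count on a finite-index lattice `Λ ⊆ ℤ²` for the zoom at the quadratic
irrational `√(b/a)`: with `Θ(Λ) = (6/π²)·d(Λ)⁻¹·∏_{p ∣ d(Λ)}(1+1/p)⁻¹` and
`S = #{(u,v) ∈ Λ : u,v > 0, gcd(u,v)=1, 0 < u/v − √(b/a) ≤ ε·B^(−1/r), v ≤ K·B}`, one has
`S = (Θ(Λ)·ε·K²/2)·B^(2−1/r) + O(K^(3/2)·b^(1/4)·d(Λ)^(1/2)·B^((3/4)(2−1/r))·log B
  + K·b^(3/2)·B^(1−1/(2r))·log B)`, uniformly in `Λ`, `K`, `B` subject to the stated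
constraints, the implied constant depending only on `a`, `b`, `ε`, `r`. -/
theorem stmt_8 (a b : ℕ) (ha : 0 < a) (hab : a < b) (hcop : Nat.Coprime a b)
    (hnsq : ¬ IsSquare (a * b)) (ε r : ℝ) (hε : 0 < ε)
    (hr₁ : 1 / 2 < r) (hr₂ : r < 7 / 10) :
    ∃ C : ℝ, ∀ Λ : AddSubgroup (ℤ × ℤ), Λ.index ≠ 0 →
      (∃ p ∈ Λ, Int.gcd p.1 p.2 = 1) →
      ∀ K B : ℝ, 0 < K → B ≥ 2 →
      K ^ 2 * (b : ℝ) ≤ (2 ^ 21 * 162 * ((b : ℝ) / a) * ε ^ 2) ^ (-(2 / 5 : ℝ)) *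
        B ^ ((4 / 5) * (1 / r - 1) - (3 / 5) * (2 - 1 / r)) →
      (b : ℝ) * (Λ.index : ℝ) ^ 2 ≤ K ^ 2 * B ^ (2 - 1 / r) →
      |(Set.ncard {p : ℤ × ℤ | p ∈ Λ ∧ 0 < p.1 ∧ 0 < p.2 ∧ Int.gcd p.1 p.2 = 1 ∧
            0 < (p.1 : ℝ) / p.2 - Real.sqrt ((b : ℝ) / a) ∧
            (p.1 : ℝ) / p.2 - Real.sqrt ((b : ℝ) / a) ≤ ε * B ^ (-(1 / r)) ∧
            (p.2 : ℝ) ≤ K * B} : ℝ) -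
          (6 / π ^ 2 * (Λ.index : ℝ)⁻¹ *
              ∏ p ∈ (Λ.index).primeFactors, (1 + 1 / (p : ℝ))⁻¹) * ε * K ^ 2 / 2 *
            B ^ (2 - 1 / r)| ≤
        C * (K ^ ((3 : ℝ) / 2) * (b : ℝ) ^ ((1 : ℝ) / 4) * (Λ.index : ℝ) ^ ((1 : ℝ) / 2) *
              B ^ ((3 / 4) * (2 - 1 / r)) * Real.log B +
            K * (b : ℝ) ^ ((3 : ℝ) / 2) * B ^ (1 - 1 / (2 * r)) * Real.log B) := by
  obtain ⟨C, hC, hmain⟩ := main_est a b ha hab hnsq ε hε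
  refine ⟨C / Real.log 2, ?_⟩
  intro Λ hidx hprim K B hK hB _ hd
  have hB0 : 0 < B := by linarith
  have hb1 : (1:ℝ) ≤ b := by
    have : 1 ≤ b := by omega
    exact_mod_cast this
  have hr0 : 0 < r := by linarith
  set δ := ε * B ^ (-(1 / r)) with hδdef
  have hδ : 0 < δ := by positivity
  have hδε : δ ≤ ε := by
    rw [hδdef]
    apply mul_le_of_le_one_right hε.le
    apply Real.rpow_le_one_of_one_le_of_nonpos (by linarith)
    rw [neg_nonpos]; positivity
  set x := K * B ^ ((2 - 1 / r)/2) with hx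
  have hx0 : 0 < x := by positivity
  have hx2 : x^2 = K^2 * B ^ (2 - 1/r) := by
    rw [hx, mul_pow, ← Real.rpow_natCast (B ^ _), ← Real.rpow_mul hB0.le]
    congr 2; push_cast; ring
  have hA : δ*(K*B)^2 = ε*x^2 := by
    rw [hx2, hδdef, sub_eq_neg_add, Real.rpow_add hB0, Real.rpow_two]; ring
  have hdx : (Λ.index:ℝ) ≤ x := by
    refine (pow_le_pow_iff_left₀ (by positivity) hx0.le two_ne_zero).mp ?_
    rw [hx2]
    refine le_trans ?_ hd
    exact le_mul_of_one_le_left (by positivity) hb1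
  have h := hmain Λ hidx hprim δ (K*B) x hδ hδε (by positivity) hx0 hA hdx
  have hset : {p : ℤ × ℤ | p ∈ Λ ∧ 0 < p.1 ∧ 0 < p.2 ∧ Int.gcd p.1 p.2 = 1 ∧
            0 < (p.1 : ℝ) / p.2 - Real.sqrt ((b : ℝ) / a) ∧
            (p.1 : ℝ) / p.2 - Real.sqrt ((b : ℝ) / a) ≤ δ ∧
            (p.2 : ℝ) ≤ K * B} =
      {z : ℤ × ℤ | z ∈ Λ ∧ Int.gcd z.1 z.2 = 1 ∧ z ∈ Tset (√((b:ℝ)/a)) δ (K*B)} := by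
    set α := √((b:ℝ)/a) with hα
    have hα0 : 0 ≤ α := Real.sqrt_nonneg _
    ext ⟨u, v⟩
    simp only [Tset, Set.mem_ofPred_eq]
    have key : (0:ℝ) < v → ((0 < (u:ℝ)/v - α ↔ 0 < (u:ℝ) - α*v) ∧
        ((u:ℝ)/v - α ≤ δ ↔ (u:ℝ) - α*v ≤ δ*v)) := by
      intro hv
      have e : (u:ℝ)/v - α = (u - α*v)/v := by field_simp
      rw [e, div_le_iff₀ hv]
      refine ⟨?_, Iff.rfl⟩
      rw [div_pos_iff_of_pos_right hv]
    constructor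
    · rintro ⟨h1, h2, h3, h4, h5, h6, h7⟩
      have hv : (0:ℝ) < v := by exact_mod_cast h3
      exact ⟨h1, h4, (key hv).1.mp h5, (key hv).2.mp h6, h7⟩
    · rintro ⟨h1, h4, h5, h6, h7⟩
      have hv : (0:ℝ) < v := by
        by_contra hv
        push Not at hv
        nlinarith
      have hu : (0:ℝ) < u := by nlinarith [mul_nonneg hα0 hv.le]
      exact ⟨h1, by exact_mod_cast hu, by exact_mod_cast hv, h4, (key hv).1.mpr h5,
        (key hv).2.mpr h6, h7⟩
  rw [hset]
  have hlog2 : 0 < Real.log 2 := Real.log_pos (by norm_num)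
  have hlogB : Real.log 2 ≤ Real.log B := Real.log_le_log (by norm_num) hB
  have e1 : (6 / π ^ 2 * (Λ.index : ℝ)⁻¹ *
              ∏ p ∈ (Λ.index).primeFactors, (1 + 1 / (p : ℝ))⁻¹) * ε * K ^ 2 / 2 *
            B ^ (2 - 1 / r) = (6 / π ^ 2 * (Λ.index : ℝ)⁻¹ *
              ∏ p ∈ (Λ.index).primeFactors, (1 + 1 / (p : ℝ))⁻¹) * (δ*(K*B)^2) / 2 := by
    rw [hA, hx2]; ring
  rw [e1]
  refine h.trans ?_
  have e2 : x*√x = K ^ ((3 : ℝ) / 2) * B ^ ((3 / 4) * (2 - 1 / r)) := by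
    have : x*√x = x^((3:ℝ)/2) := by
      rw [Real.sqrt_eq_rpow, ← Real.rpow_one_add' hx0.le (by norm_num)]; norm_num
    rw [this, hx, Real.mul_rpow hK.le (by positivity), ← Real.rpow_mul hB0.le]
    congr 2; ring
  have hb4 : 1 ≤ (b:ℝ) ^ ((1:ℝ)/4) := Real.one_le_rpow hb1 (by norm_num)
  rw [e2, Real.sqrt_eq_rpow]
  have hsec : 0 ≤ K * (b : ℝ) ^ ((3 : ℝ) / 2) * B ^ (1 - 1 / (2 * r)) * Real.log B := by
    have : 0 ≤ Real.log B := hlog2.le.trans hlogB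
    positivity
  set Z := K ^ ((3 : ℝ) / 2) * B ^ ((3 / 4) * (2 - 1 / r)) * (Λ.index:ℝ) ^ ((1:ℝ)/2) with hZ
  have hZ0 : 0 ≤ Z := by positivity
  have hfirst : Z * Real.log 2 ≤ K ^ ((3 : ℝ) / 2) * (b : ℝ) ^ ((1 : ℝ) / 4) *
      (Λ.index : ℝ) ^ ((1 : ℝ) / 2) * B ^ ((3 / 4) * (2 - 1 / r)) * Real.log B := by
    calc Z * Real.log 2 ≤ (Z * (b:ℝ) ^ ((1:ℝ)/4)) * Real.log B := by
          gcongr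
          exact le_mul_of_one_le_right hZ0 hb4
      _ = _ := by rw [hZ]; ring
  calc C * Z = C / Real.log 2 * (Z * Real.log 2) := by field_simp
    _ ≤ _ := by
      gcongr
      linarith
end

section
/- Let D ≥ 2 be a squarefree integer and m a nonzero integer. In the ring ℤ[√D] with norm N(x + y√D) = x² − D·y², let U = {u ∈ ℤ[√D] : N(u) = 1} (a group under multiplication) act on S = {z ∈ ℤ[√D] : N(z) = m} by multiplication. Then this action is free, and the set of orbits of U on S is finite of cardinality at most 3·τ(|m|), where τ denotes the number-of-divisors function. -/
theorem locA (D : ℤ) (p : ℕ) (hp : p.Prime) (k : ℕ) : ∀ x y : ℤ, (p:ℤ)^k ∣ x^2-D*y^2 →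
    ¬ (p:ℤ)^(k+1) ∣ x^2-D*y^2 → ∃ (j i : ℕ) (x' y' r : ℤ), 2*j+i=k ∧ x = p^j*x' ∧ y=p^j*y' ∧
      (p:ℤ)^i ∣ x'-r*y' ∧ (p:ℤ)^i ∣ r^2-D := by
  have hpi : Prime (p:ℤ) := Nat.prime_iff_prime_int.mp hp
  have hp0 : (p:ℤ) ≠ 0 := hpi.ne_zero
  induction k using Nat.strong_induction_on with
  | _ k ih =>
  intro x y h1 h2
  rcases Nat.eq_zero_or_pos k with hk | hk
  · subst hk
    exact ⟨0, 0, x, y, 0, by simp⟩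
  by_cases hy : (p:ℤ) ∣ y
  · have hx : (p:ℤ) ∣ x := by
      have h3 : (p:ℤ) ∣ x^2-D*y^2 := (dvd_pow_self _ hk.ne').trans h1
      have h4 : (p:ℤ) ∣ x^2 := by
        have : (p:ℤ) ∣ D*y^2 := (hy.trans (dvd_pow_self y two_ne_zero)).mul_left D
        simpa using dvd_add h3 this
      exact hpi.dvd_of_dvd_pow h4
    obtain ⟨a, rfl⟩ := hx
    obtain ⟨b, rfl⟩ := hy
    have e : ((p:ℤ)*a)^2-D*((p:ℤ)*b)^2 = (p:ℤ)^2*(a^2-D*b^2) := by ring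
    rw [e] at h1 h2
    have hk2 : 2 ≤ k := by
      by_contra hlt
      have : k = 1 := by omega
      subst this
      exact h2 (dvd_mul_right _ _)
    obtain ⟨l, rfl⟩ := Nat.exists_eq_add_of_le hk2
    rw [pow_add] at h1
    rw [add_assoc, pow_add] at h2
    have h1' := (mul_dvd_mul_iff_left (pow_ne_zero 2 hp0)).mp h1
    have h2' := fun h => h2 ((mul_dvd_mul_iff_left (pow_ne_zero 2 hp0)).mpr h)
    obtain ⟨j, i, x', y', r, hji, hx, hy, h5, h6⟩ := ih l (by omega) a b h1' h2'
    refine ⟨j+1, i, x', y', r, by omega, ?_, ?_, h5, h6⟩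
    · rw [hx]; ring
    · rw [hy]; ring
  · have hc : IsCoprime ((p:ℤ)^k) y := ((hpi.coprime_iff_not_dvd).mpr hy).pow_left
    obtain ⟨u, v, huv⟩ := hc
    refine ⟨0, k, x, y, x*v, by simp, by simp, by simp, ?_, ?_⟩
    · exact ⟨x*u, by linear_combination (-x) * huv⟩
    · obtain ⟨c, hc⟩ := h1
      refine ⟨v^2*c - D*u*(1+v*y), ?_⟩
      linear_combination v^2*hc + D*(1+v*y)*huv

theorem locKey (D P Q X Y X' Y' r : ℤ) (h1 : Q ∣ X - r*Y) (h2 : Q ∣ X' - r*Y')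
    (h3 : Q ∣ r^2-D) :
    (P^2*Q) ∣ (P*X)*(P*X') - D*(P*Y)*(P*Y') ∧ P^2*Q ∣ (P*X')*(P*Y) - (P*X)*(P*Y') := by
  obtain ⟨a, ha⟩ := h1
  obtain ⟨b, hb⟩ := h2
  obtain ⟨c, hc⟩ := h3
  constructor
  · refine ⟨a*X' + r*Y*b+c*Y*Y', ?_⟩
    linear_combination P^2*X'*ha + P^2*r*Y*hb + P^2*Y*Y'*hc
  · refine ⟨b*Y - a*Y', ?_⟩
    linear_combination P^2*Y*hb - P^2*Y'*ha

theorem noD (D : ℤ) (hsf : Squarefree D) (p : ℕ) (hp : p.Prime) (i : ℕ) (hi : 2 ≤ i) (r : ℤ)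
    (h : (p:ℤ)^i ∣ r^2-D) : ¬ (p:ℤ) ∣ r := by
  have hpi : Prime (p:ℤ) := Nat.prime_iff_prime_int.mp hp
  intro hr
  have h2 : (p:ℤ)^2 ∣ r^2 - D := (pow_dvd_pow _ hi).trans h
  have h3 : (p:ℤ)^2 ∣ D := by
    have := dvd_sub (pow_dvd_pow_of_dvd hr 2) h2
    simpa using this
  exact hpi.not_isUnit (hsf _ (by rwa [← sq]))

theorem rootOdd (D : ℤ) (hsf : Squarefree D) (p : ℕ) (hp : p.Prime) (h2 : p ≠ 2) (i : ℕ) :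
    ∃ ρ : ℤ, ∀ r : ℤ, (p:ℤ)^i ∣ r^2-D → ((p:ℤ)^i ∣ r - ρ ∨ (p:ℤ)^i ∣ r + ρ) := by
  have hpi : Prime (p:ℤ) := Nat.prime_iff_prime_int.mp hp
  by_cases h : ∃ ρ : ℤ, (p:ℤ)^i ∣ ρ^2-D
  swap
  · exact ⟨0, fun r hr => absurd ⟨r, hr⟩ h⟩
  obtain ⟨ρ, hρ⟩ := h
  refine ⟨ρ, fun r hr => ?_⟩
  have hm : (p:ℤ)^i ∣ (r-ρ)*(r+ρ) := by
    have := dvd_sub hr hρ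
    rwa [show r^2-D-(ρ^2-D) = (r-ρ)*(r+ρ) by ring] at this
  rcases Nat.lt_or_ge i 2 with hi | hi
  · interval_cases i
    · simp
    · simp only [pow_one] at hm ⊢
      exact hpi.dvd_or_dvd hm
  have hnr := noD D hsf p hp i hi r hr
  by_cases ha : (p:ℤ) ∣ r - ρ
  · left
    have hb : ¬ (p:ℤ) ∣ r + ρ := by
      intro hb
      have h3 : (p:ℤ) ∣ 2 * r := by
        have := dvd_add ha hb
        rwa [show r-ρ+(r+ρ) = 2*r by ring] at this
      rcases hpi.dvd_or_dvd h3 with h4 | h4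
      · have : p ∣ 2 := by exact_mod_cast h4
        exact h2 ((Nat.prime_dvd_prime_iff_eq hp Nat.prime_two).mp this)
      · exact hnr h4
    exact (((hpi.coprime_iff_not_dvd).mpr hb).pow_left).dvd_of_dvd_mul_right hm
  · right
    exact (((hpi.coprime_iff_not_dvd).mpr ha).pow_left).dvd_of_dvd_mul_left hm

theorem rootTwo (D : ℤ) (hsf : Squarefree D) (i : ℕ) :
    ∃ ρ : ℕ → ℤ, ∀ r : ℤ, (2:ℤ)^i ∣ r^2-D → ∃ s < 4, (2:ℤ)^i ∣ r - ρ s := by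
  by_cases h : ∃ ρ : ℤ, (2:ℤ)^i ∣ ρ^2-D
  swap
  · exact ⟨0, fun r hr => absurd ⟨r, hr⟩ h⟩
  obtain ⟨ρ, hρ⟩ := h
  rcases Nat.lt_or_ge i 2 with hi | hi
  · refine ⟨fun s => s, fun r hr => ?_⟩
    interval_cases i
    · exact ⟨0, by simp⟩
    · rcases Int.even_or_odd' r with ⟨c, hc | hc⟩
      · exact ⟨0, by norm_num, c, by simp [hc]⟩
      · exact ⟨1, by norm_num, c, by simp [hc]⟩
  obtain ⟨l, rfl⟩ := Nat.exists_eq_add_of_le hi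
  have odd : ∀ r : ℤ, (2:ℤ)^(2+l) ∣ r^2-D → ∃ c, r = 2*c+1 := by
    intro r hr
    have := noD D hsf 2 Nat.prime_two (2+l) hi r (by exact_mod_cast hr)
    push_cast at this
    exact ⟨r/2, by omega⟩
  have key : ∀ a : ℤ, (2:ℤ)^(1+l) ∣ a → (2:ℤ)^(2+l) ∣ a ∨ (2:ℤ)^(2+l) ∣ a - 2^(1+l) := by
    rintro a ⟨c, rfl⟩
    rcases Int.even_or_odd' c with ⟨d, rfl | rfl⟩
    · left; exact ⟨d, by ring⟩
    · right; exact ⟨d, by ring⟩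
  refine ⟨fun s => if s = 0 then ρ else if s = 1 then ρ + 2^(1+l) else
    if s = 2 then -ρ else -ρ + 2^(1+l), fun r hr => ?_⟩
  obtain ⟨a, ha⟩ := odd r hr
  obtain ⟨b, hb⟩ := odd ρ hρ
  have hm : (2:ℤ)^l ∣ (a-b)*(a+b+1) := by
    have := dvd_sub hr hρ
    have e : r^2-D-(ρ^2-D) = 2^2*((a-b)*(a+b+1)) := by rw [ha, hb]; ring
    rw [e, pow_add] at this
    exact (mul_dvd_mul_iff_left (by norm_num)).mp this
  have hor : (2:ℤ)^l ∣ a-b ∨ (2:ℤ)^l ∣ a+b+1 := by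
    by_cases h2 : (2:ℤ) ∣ a-b
    · left
      have : ¬ (2:ℤ) ∣ a+b+1 := by omega
      exact (((Int.prime_two.coprime_iff_not_dvd).mpr this).pow_left).dvd_of_dvd_mul_right hm
    · right
      exact (((Int.prime_two.coprime_iff_not_dvd).mpr h2).pow_left).dvd_of_dvd_mul_left hm
  rcases hor with ⟨c, hc⟩ | ⟨c, hc⟩
  · have : (2:ℤ)^(1+l) ∣ r-ρ := ⟨c, by rw [ha, hb]; rw [pow_add]; linear_combination 2*hc⟩
    rcases key _ this with h | h
    · exact ⟨0, by norm_num, by simpa using h⟩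
    · exact ⟨1, by norm_num, by simpa [sub_sub] using h⟩
  · have : (2:ℤ)^(1+l) ∣ r+ρ := ⟨c, by rw [ha, hb]; rw [pow_add]; linear_combination 2*hc⟩
    rcases key _ this with h | h
    · exact ⟨2, by norm_num, by simpa using h⟩
    · refine ⟨3, by norm_num, ?_⟩
      have e : r + ρ - 2^(1+l) = r - (-ρ + 2^(1+l)) := by ring
      rw [e] at h
      simpa using h

/-- labels -/
def Lab (D : ℤ) (p k j : ℕ) (R : ℤ) (x y : ℤ) : Prop :=
  ∃ (i : ℕ) (x' y' : ℤ), 2*j+i=k ∧ x = p^j*x' ∧ y=p^j*y' ∧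
      (p:ℤ)^i ∣ x'-R*y' ∧ (p:ℤ)^i ∣ R^2-D

theorem Lab.key {D : ℤ} {p k j : ℕ} {R x y x' y' : ℤ} (h : Lab D p k j R x y)
    (h' : Lab D p k j R x' y') :
    (p:ℤ)^k ∣ x*x'-D*y*y' ∧ (p:ℤ)^k ∣ x'*y-x*y' := by
  obtain ⟨i, a, b, h1, rfl, rfl, h4, h5⟩ := h
  obtain ⟨i', a', b', h1', rfl, rfl, h4', h5'⟩ := h'
  obtain rfl : i' = i := by omega
  have := locKey D ((p:ℤ)^j) ((p:ℤ)^i') a b a' b' R h4 h4' h5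
  rw [← h1, pow_add, mul_comm 2 j, pow_mul]
  exact this

theorem Lab.change {D : ℤ} {p k j i : ℕ} {x y x' y' r R : ℤ} (h : 2*j+i=k) (hx : x = p^j*x')
    (hy : y=p^j*y') (h1 : (p:ℤ)^i ∣ x'-r*y') (h2 : (p:ℤ)^i ∣ r^2-D) (h3 : (p:ℤ)^i ∣ r-R) :
    Lab D p k j R x y := by
  refine ⟨i, x', y', h, hx, hy, ?_, ?_⟩
  · have := dvd_add h1 (h3.mul_right y')
    rwa [show x'-r*y'+(r-R)*y' = x'-R*y' by ring] at this
  · have := dvd_sub h2 (h3.mul_right (r+R))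
    rwa [show r^2-D-(r-R)*(r+R) = R^2-D by ring] at this

def cc (p : ℕ) : ℕ := if p = 2 then 3 else 1

theorem loc (D : ℤ) (hsf : Squarefree D) (p : ℕ) (hp : p.Prime) (k : ℕ) (hk : 0 < k) :
    ∃ P : ℕ → ℤ → ℤ → Prop,
      (∀ x y : ℤ, (p:ℤ)^k ∣ x^2-D*y^2 → ¬ (p:ℤ)^(k+1) ∣ x^2-D*y^2 →
        ∃ n < cc p * (k+1), P n x y) ∧
      (∀ n x y x' y', P n x y → P n x' y' →
        (p:ℤ)^k ∣ x*x'-D*y*y' ∧ (p:ℤ)^k ∣ x'*y-x*y') := by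
  by_cases h2 : p = 2
  · subst h2
    choose ρ hρ using rootTwo D hsf
    refine ⟨fun n x y => Lab D 2 k (n/4) (ρ (k-2*(n/4)) (n%4)) x y, ?_, ?_⟩
    · intro x y h h'
      obtain ⟨j, i, a, b, r, e, hx, hy, h1, h2⟩ := locA D 2 hp k x y h h'
      obtain ⟨s, hs, h3⟩ := hρ i r (by exact_mod_cast h2)
      refine ⟨4*j+s, by simp only [cc, if_true]; omega, ?_⟩
      have e1 : (4*j+s)/4 = j := by omega
      have e2 : (4*j+s)%4 = s := by omega
      have e3 : k-2*j = i := by omega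
      simp only [e1, e2, e3]
      exact Lab.change e hx hy h1 h2 (by exact_mod_cast h3)
    · intro n x y x' y' h h'
      exact h.key h'
  · choose ρ hρ using rootOdd D hsf p hp h2
    refine ⟨fun n x y => if 2*n ≤ k then Lab D p k n (ρ (k-2*n)) x y else
      Lab D p k (k-n) (-ρ (k-2*(k-n))) x y, ?_, ?_⟩
    · intro x y h h'
      obtain ⟨j, i, a, b, r, e, hx, hy, h1, h2'⟩ := locA D p hp k x y h h'
      have e3 : k-2*j = i := by omega
      have hcc : cc p = 1 := by simp [cc, h2]
      rw [hcc]
      by_cases hA : (p:ℤ)^i ∣ r - ρ i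
      · refine ⟨j, by omega, ?_⟩
        simp only [show 2*j ≤ k by omega, if_true, e3]
        exact Lab.change e hx hy h1 h2' hA
      · have hB := (hρ i r h2').resolve_left hA
        have hi : i ≠ 0 := by
          rintro rfl
          simp at hA
        refine ⟨k-j, by omega, ?_⟩
        have e4 : k-(k-j) = j := by omega
        simp only [show ¬ 2*(k-j) ≤ k by omega, if_false, e4, e3]
        exact Lab.change e hx hy h1 h2' (by simpa using hB)
    · intro n x y x' y' h h'
      by_cases hn : 2*n ≤ k
      · simp only [hn, if_true] at h h'
        exact h.key h'
      · simp only [hn, if_false] at h h'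
        exact h.key h'

theorem prod_cc (s : Finset ℕ) : ∏ p ∈ s, cc p ≤ 3 := by
  unfold cc
  rw [Finset.prod_ite_eq' s 2 (fun _ => 3)]
  split_ifs <;> norm_num

theorem dvd_glob (m a : ℤ) (hm : m ≠ 0)
    (h : ∀ p ∈ m.natAbs.primeFactors, (p:ℤ)^(m.natAbs.factorization p) ∣ a) : m ∣ a := by
  rw [← Int.natAbs_dvd_natAbs, Nat.dvd_iff_prime_pow_dvd_dvd]
  intro p k hp hk
  rcases Nat.eq_zero_or_pos k with rfl | hk0
  · simp
  have hm' : m.natAbs ≠ 0 := by simpa using hm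
  have hpm : p ∈ m.natAbs.primeFactors :=
    Nat.mem_primeFactors.mpr ⟨hp, (dvd_pow_self p hk0.ne').trans hk, hm'⟩
  have h1 := h p hpm
  have h2 : p^(m.natAbs.factorization p) ∣ a.natAbs := by
    rw [← Int.natCast_dvd]; exact_mod_cast h1
  exact (pow_dvd_pow p ((hp.pow_dvd_iff_le_factorization hm').mp hk)).trans h2

/-- In `ℤ[√D]` (`D ≥ 2` squarefree), the group of norm-one elements acts freely by
multiplication on the set of elements of norm `m ≠ 0`, and the number of orbits of this
action is finite and at most `3·τ(|m|)`. -/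
theorem stmt_10 (D : ℤ) (hD : 2 ≤ D) (hsf : Squarefree D) (m : ℤ) (hm : m ≠ 0) :
    (∀ u : ℤ√D, u.norm = 1 → (∃ z : ℤ√D, z.norm = m ∧ u * z = z) → u = 1) ∧
    Finite (Quot fun z w : {z : ℤ√D // z.norm = m} =>
      ∃ u : ℤ√D, u.norm = 1 ∧ (w : ℤ√D) = u * (z : ℤ√D)) ∧
    Nat.card (Quot fun z w : {z : ℤ√D // z.norm = m} =>
      ∃ u : ℤ√D, u.norm = 1 ∧ (w : ℤ√D) = u * (z : ℤ√D)) ≤ 3 * m.natAbs.divisors.card := by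
  have hm' : m.natAbs ≠ 0 := by simpa using hm
  constructor
  · rintro u - ⟨z, hz, huz⟩
    have h1 : u * (m : ℤ√D) = (m : ℤ√D) := by
      rw [← hz, Zsqrtd.norm_eq_mul_conj, ← mul_assoc, huz]
    have hre := congrArg Zsqrtd.re h1
    have him := congrArg Zsqrtd.im h1
    simp at hre him
    ext
    · simpa [hm] using hre
    · simpa [hm] using him
  set T := Quot fun z w : {z : ℤ√D // z.norm = m} =>
      ∃ u : ℤ√D, u.norm = 1 ∧ (w : ℤ√D) = u * (z : ℤ√D) with hT
  have hloc : ∀ p : m.natAbs.primeFactors, ∃ P : ℕ → ℤ → ℤ → Prop,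
      (∀ x y : ℤ, ((p:ℕ):ℤ)^(m.natAbs.factorization p) ∣ x^2-D*y^2 →
        ¬ ((p:ℕ):ℤ)^(m.natAbs.factorization p+1) ∣ x^2-D*y^2 →
        ∃ n < cc p * (m.natAbs.factorization p+1), P n x y) ∧
      (∀ n x y x' y', P n x y → P n x' y' →
        ((p:ℕ):ℤ)^(m.natAbs.factorization p) ∣ x*x'-D*y*y' ∧
        ((p:ℕ):ℤ)^(m.natAbs.factorization p) ∣ x'*y-x*y') := by
    rintro ⟨p, hp⟩
    have hpp := Nat.prime_of_mem_primeFactors hp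
    exact loc D hsf p hpp _
      (hpp.factorization_pos_of_dvd hm' (Nat.dvd_of_mem_primeFactors hp))
  choose P hP1 hP2 using hloc
  have hlab : ∀ (z : {z : ℤ√D // z.norm = m}) (p : m.natAbs.primeFactors),
      ∃ n : Fin (cc p * (m.natAbs.factorization p+1)), P p n z.1.re z.1.im := by
    rintro ⟨z, hz⟩ p
    have hpp := Nat.prime_of_mem_primeFactors p.2
    have e : z.re^2-D*z.im^2 = m := by rw [← hz, Zsqrtd.norm_def]; ring
    obtain ⟨n, hn, h⟩ := hP1 p z.re z.im
      (by
        rw [e, ← Int.natCast_pow, Int.natCast_dvd]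
        exact Nat.ordProj_dvd _ _)
      (by
        rw [e, ← Int.natCast_pow, Int.natCast_dvd]
        exact Nat.pow_succ_factorization_not_dvd hm' hpp)
    exact ⟨⟨n, hn⟩, h⟩
  choose Φ hΦ using hlab
  have hinj : Function.Injective (fun q : T => Φ q.out) := by
    intro q q' hqq
    have hq := hqq
    simp only at hq
    rw [← Quot.out_eq q, ← Quot.out_eq q']
    generalize q.out = z at hq ⊢
    generalize q'.out = w at hq ⊢
    apply Quot.sound
    obtain ⟨z, hz⟩ := z
    obtain ⟨w, hw⟩ := w
    have hd : ∀ p : m.natAbs.primeFactors, _ := fun p =>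
      hP2 p _ _ _ _ _ (hΦ ⟨z, hz⟩ p) (by rw [hq]; exact hΦ ⟨w, hw⟩ p)
    obtain ⟨a, ha⟩ := dvd_glob m _ hm (fun p hp => (hd ⟨p, hp⟩).1)
    obtain ⟨b, hb⟩ := dvd_glob m _ hm (fun p hp => (hd ⟨p, hp⟩).2)
    simp only at ha hb
    have hz' : z.re*z.re-D*z.im*z.im = m := by rw [← hz, Zsqrtd.norm_def]
    have hu : w = (⟨a, -b⟩ : ℤ√D) * z := by
      ext
      · apply mul_left_cancel₀ hm
        simp only [Zsqrtd.re_mul]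
        linear_combination z.re * ha - D*z.im*hb - w.re*hz'
      · apply mul_left_cancel₀ hm
        simp only [Zsqrtd.im_mul]
        linear_combination z.im * ha - z.re*hb - w.im*hz'
    refine ⟨⟨a, -b⟩, ?_, hu⟩
    have := congrArg Zsqrtd.norm hu
    rw [Zsqrtd.norm_mul, hz, hw] at this
    exact mul_right_cancel₀ hm (by rw [one_mul]; exact this.symm)
  refine ⟨Finite.of_injective _ hinj, (Nat.card_le_card_of_injective _ hinj).trans ?_⟩
  rw [Nat.card_eq_fintype_card, Fintype.card_pi]
  simp only [Fintype.card_fin]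
  rw [Finset.prod_coe_sort m.natAbs.primeFactors
    (fun p => cc p * (m.natAbs.factorization p+1)), Finset.prod_mul_distrib, Nat.card_divisors hm']
  exact Nat.mul_le_mul_right _ (prod_cc _)
end

section
/- Fix r with 2 < r < 144/55, η with 0 < η < 1/35, reals ε₁ > ε₂ > 0 and τ₁ > τ₂ > 1. Then there exist c > 0 and B₀ such that for all B ≥ B₀, the number of quadruples (x,y,s,t) of positive integers with gcd(x,y) = gcd(s,t) = 1, y/x > 1, ε₂ < B^(1/r)·(t/s − 1) ≤ ε₁, τ₂ ≤ (t/s − 1)/(y/x − 1) ≤ τ₁, and H(x,y,s,t) ≤ B, is at least c·B^((1+η)(1/2 − 1/r))·(log B)³. (Lower bound for the sub-critical zoom at Q on Y₄.) -/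
lemma pell_aux (X : ℕ) (hX : 1 ≤ X) :
    ∃ p q : ℕ, p ^ 2 = 2 * q ^ 2 + 1 ∧ X ≤ q ∧ q ≤ 6 * X ∧ 2 ≤ q ∧ 2 * p ≤ 3 * q := by
  induction X, hX using Nat.le_induction with
  | base => exact ⟨3, 2, by norm_num⟩
  | succ X hX ih =>
    obtain ⟨p, q, h, h1, h2, h3, h4⟩ := ih
    by_cases hq : X + 1 ≤ q
    · exact ⟨p, q, h, hq, by omega, h3, h4⟩
    · refine ⟨3 * p + 4 * q, 2 * p + 3 * q, by nlinarith, by omega, by omega, by omega, by omega⟩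

lemma frac_core (p q n j u v D : ℝ) (hp : 0 < p) (hq : 0 < q) (hn : 0 < n) (hj : 0 ≤ j)
    (hpq : p ^ 2 = 2 * q ^ 2 + 1) (hu : 0 < u) (hv : 0 < v) (hD : 0 < D)
    (h1 : D / v < (p + √2 * q) * (j * q - n * p) / (j + √2 * n))
    (h2 : (p + √2 * q) * (j * q - n * p) / (j + √2 * n) < D / u) :
    0 < j * q - n * p ∧ 0 < j * p - 2 * n * q ∧
    √2 + u / D < (j * p - 2 * n * q) / (j * q - n * p) ∧
    (j * p - 2 * n * q) / (j * q - n * p) < √2 + v / D := by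
  have hs : √2 * √2 = 2 := Real.mul_self_sqrt (by norm_num)
  have hs0 : 0 < √2 := by positivity
  set w := √2 with hw
  have hl : 0 < p + w * q := by positivity
  have hjn : 0 < j + w * n := by positivity
  have hh : 0 < (p + w * q) * (j * q - n * p) / (j + w * n) := lt_trans (by positivity) h1
  have hQ : 0 < j * q - n * p := by
    by_contra hneg
    push Not at hneg
    have : (p + w * q) * (j * q - n * p) / (j + w * n) ≤ 0 :=
      div_nonpos_of_nonpos_of_nonneg (mul_nonpos_of_nonneg_of_nonpos hl.le hneg) hjn.le
    linarith
  have e1 : (j * p - 2 * n * q) - w * (j * q - n * p) = (j + w * n) / (p + w * q) := by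
    rw [eq_div_iff hl.ne']
    have : (j * p - 2 * n * q - w * (j * q - n * p)) * (p + w * q) =
      (j + w * n) * (p ^ 2 - (w * w) * q ^ 2) + n * (w * w - 2) * (p * q + w * q ^ 2) := by ring
    rw [this, hs, hpq]; ring
  have e2 : (j * p - 2 * n * q) / (j * q - n * p) =
      w + 1 / ((p + w * q) * (j * q - n * p) / (j + w * n)) := by
    have : j * p - 2 * n * q = w * (j * q - n * p) + (j + w * n) / (p + w * q) := by linarith
    rw [this]; field_simp
  refine ⟨hQ, ?_, ?_, ?_⟩
  · have : j * p - 2 * n * q = w * (j * q - n * p) + (j + w * n) / (p + w * q) := by linarith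
    rw [this]; positivity
  · rw [e2]
    have : u / D < 1 / ((p + w * q) * (j * q - n * p) / (j + w * n)) := by
      rw [lt_div_iff₀ hh, div_mul_eq_mul_div, div_lt_iff₀ hD]
      rw [lt_div_iff₀ hu] at h2; linarith
    linarith
  · rw [e2]
    have : 1 / ((p + w * q) * (j * q - n * p) / (j + w * n)) < v / D := by
      rw [div_lt_iff₀ hh, div_mul_eq_mul_div, lt_div_iff₀ hD]
      rw [div_lt_iff₀ hv] at h1; linarith
    linarith

set_option maxHeartbeats 2000000 in
lemma two_fracs (u v : ℝ) (hu : 0 < u) (huv : u < v) : ∃ C : ℝ, 0 < C ∧ ∀ D : ℝ, 1 ≤ D →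
    ∃ P q P' q' : ℕ, 0 < P ∧ 0 < q ∧ 0 < P' ∧ 0 < q' ∧ (q : ℝ) ≤ C * √D ∧ (q' : ℝ) ≤ C * √D ∧
      √2 + u / D < (P : ℝ) / q ∧ (P : ℝ) / q < √2 + v / D ∧
      √2 + u / D < (P' : ℝ) / q' ∧ (P' : ℝ) / q' < √2 + v / D ∧
      (P : ℝ) * q' - P' * q ≠ 0 := by
  have hv : 0 < v := hu.trans huv
  set C1 : ℝ := 6 * (1 / √u + 1) with hC1
  have hC1p : 0 < C1 := by positivity
  have hgap : 0 < 1 / u - 1 / v := by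
    have := one_div_lt_one_div_of_lt hu huv
    linarith
  obtain ⟨n, hn⟩ := exists_nat_gt (14 * C1 ^ 2 / (1 / u - 1 / v))
  have hn0 : (0 : ℝ) < n := lt_trans (by positivity) hn
  refine ⟨(5 * n + 1) * C1, by positivity, fun D hD => ?_⟩
  have hDp : 0 < D := by linarith
  have hsD : 1 ≤ √D := Real.one_le_sqrt.mpr hD
  obtain ⟨p, q, hpq, hXq, hqX, hq2, hpq3⟩ := pell_aux ⌈√(D / u)⌉₊
    (Nat.one_le_iff_ne_zero.mpr (Nat.pos_iff_ne_zero.mp (Nat.ceil_pos.mpr (by positivity))))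
  have hq0 : (0 : ℝ) < q := by exact_mod_cast (by omega : 0 < q)
  have hp0 : (0 : ℝ) < p := by
    have : 0 < p := by
      rcases Nat.eq_zero_or_pos p with h | h
      · subst h; simp at hpq
      · exact h
    exact_mod_cast this
  have hpqR : (p : ℝ) ^ 2 = 2 * (q : ℝ) ^ 2 + 1 := by exact_mod_cast hpq
  have hpq3R : 2 * (p : ℝ) ≤ 3 * q := by exact_mod_cast hpq3
  have hql : √(D / u) ≤ q := (Nat.le_ceil _).trans (by exact_mod_cast hXq)
  have hql2 : D / u ≤ (q : ℝ) ^ 2 := by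
    rw [← Real.sq_sqrt (by positivity : 0 ≤ D / u)]
    gcongr
  have hqu : (q : ℝ) ≤ C1 * √D := by
    have h1 : (q : ℝ) ≤ 6 * (⌈√(D / u)⌉₊ : ℝ) := by exact_mod_cast hqX
    have h2 := Nat.ceil_lt_add_one (by positivity : 0 ≤ √(D / u))
    have h3 : √(D / u) = √D / √u := Real.sqrt_div hDp.le u
    have : C1 * √D = 6 * (√D / √u + √D) := by rw [hC1]; ring
    rw [this]; rw [h3] at h1 h2; linarith
  have hs : √2 * √2 = 2 := Real.mul_self_sqrt (by norm_num)
  have hw1 : 1 < √2 := by nlinarith [Real.sqrt_nonneg 2]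
  have hw2 : √2 < 3 / 2 := by nlinarith [Real.sqrt_nonneg 2]
  have hpw : √2 * q < p := by
    apply lt_of_pow_lt_pow_left₀ 2 hp0.le
    rw [hpqR, mul_pow, Real.sq_sqrt (by norm_num)]; linarith
  obtain ⟨h, hh⟩ : ∃ h : ℕ → ℝ, ∀ j, h j =
    (p + √2 * q) * ((j : ℝ) * q - n * p) / (j + √2 * n) := ⟨_, fun _ => rfl⟩
  have hden : ∀ j : ℕ, 0 < (j : ℝ) + √2 * n := fun j => by positivity
  have hl3 : (p + √2 * q) ≤ 3 * (q : ℝ) := by nlinarith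
  have hl2 : 2 * (q : ℝ) ≤ (p + √2 * q) := by nlinarith
  have hdiff : ∀ j : ℕ, h (j + 1) - h j =
      (p + √2 * q) ^ 2 * n / ((j + √2 * n) * (j + 1 + √2 * n)) := by
    intro j
    have h1 := (hden j).ne'
    have h2 := (hden (j + 1)).ne'
    push_cast at h2
    rw [hh, hh]; push_cast
    rw [div_sub_div _ _ h2 h1, div_eq_div_iff (mul_ne_zero h2 h1) (mul_ne_zero h1 h2)]
    ring
  have hstep0 : ∀ j : ℕ, h j < h (j + 1) := by
    intro j
    have : 0 < h (j + 1) - h j := by rw [hdiff]; positivity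
    linarith
  have hstep : ∀ j : ℕ, h (j + 1) - h j < (D / u - D / v) / 3 := by
    intro j
    rw [hdiff, div_lt_iff₀ (by positivity)]
    have hd : 2 * (n : ℝ) ^ 2 ≤ (j + √2 * n) * (j + 1 + √2 * n) := by
      have hj0 : (0 : ℝ) ≤ j := by positivity
      have : 2 * (n : ℝ) ^ 2 = (√2 * n) * (√2 * n) := by
        linear_combination -(n : ℝ) ^ 2 * hs
      rw [this]
      gcongr <;> linarith
    have e : D / u - D / v = D * (1 / u - 1 / v) := by ring
    rw [e]
    have h1 : 14 * C1 ^ 2 < n * (1 / u - 1 / v) := by rwa [div_lt_iff₀ hgap] at hn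
    have h2 : (p + √2 * q) ^ 2 ≤ 9 * (C1 ^ 2 * D) := by
      calc (p + √2 * q) ^ 2 ≤ (3 * (q : ℝ)) ^ 2 := by gcongr
        _ ≤ (3 * (C1 * √D)) ^ 2 := by gcongr
        _ = 9 * (C1 ^ 2 * D) := by
          rw [mul_pow, mul_pow, Real.sq_sqrt hDp.le]; norm_num
    calc (p + √2 * q) ^ 2 * n ≤ 9 * (C1 ^ 2 * D) * n := by gcongr
      _ < (D * n) * (14 * C1 ^ 2) * (2 / 3) := by
        have : 0 < C1 ^ 2 * D * n := by positivity
        linarith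
      _ < (D * n) * (n * (1 / u - 1 / v)) * (2 / 3) := by gcongr
      _ = D * (1 / u - 1 / v) / 3 * (2 * (n : ℝ) ^ 2) := by ring
      _ ≤ _ := by gcongr
  have hend : D / v < h (5 * n) := by
    have h1 : D / v < D / u := by gcongr
    have h2 : (q : ℝ) ^ 2 ≤ h (5 * n) := by
      rw [hh, le_div_iff₀ (hden _)]; push_cast
      have a1 : (q : ℝ) ^ 2 * (5 * n + √2 * n) ≤ q ^ 2 * (6.5 * n) := by
        gcongr; nlinarith
      have a2 : (2 * (q : ℝ)) * (3.5 * n * q) ≤ (p + √2 * q) * (5 * n * q - n * p) := by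
        gcongr
        nlinarith
      have : 0 < (q : ℝ) ^ 2 * n := by positivity
      nlinarith
    linarith
  have hex : ∃ j, D / v < h j := ⟨_, hend⟩
  classical
  obtain ⟨j, hj1, hj2, hj3⟩ : ∃ j, D / v < h (j + 1) ∧ h j ≤ D / v ∧ j + 1 ≤ 5 * n := by
    have hf := Nat.find_spec hex
    have hle := Nat.find_min' hex hend
    have hmin := fun m => Nat.find_min hex (m := m)
    rcases hk : Nat.find hex with _ | k
    · rw [hk] at hf
      have : h 0 ≤ 0 := by
        rw [hh]
        apply div_nonpos_of_nonpos_of_nonneg _ (hden 0).le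
        apply mul_nonpos_of_nonneg_of_nonpos
        · positivity
        · have : 0 < (n : ℝ) * p := by positivity
          push_cast; linarith
      have : 0 < D / v := by positivity
      linarith
    · rw [hk] at hf hle
      exact ⟨k, hf, not_lt.mp (hmin k (by omega)), hle⟩
  have hb1 := hstep j
  have hb2 := hstep (j + 1)
  have hb3 := hstep0 (j + 1)
  have hg : 0 < D / u - D / v := by
    have : D / u - D / v = D * (1 / u - 1 / v) := by ring
    rw [this]; positivity
  have key : ∀ k : ℕ, D / v < h k → h k < D / u → k ≤ 5 * n + 1 → ∃ P Q : ℕ, 0 < P ∧ 0 < Q ∧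
      (Q : ℝ) ≤ (5 * n + 1) * C1 * √D ∧
      √2 + u / D < (P : ℝ) / Q ∧ (P : ℝ) / Q < √2 + v / D ∧
      (P : ℝ) = k * p - 2 * n * q ∧ (Q : ℝ) = k * q - n * p := by
    intro k h1 h2 hk
    rw [hh] at h1 h2
    obtain ⟨c1, c2, c3, c4⟩ := frac_core p q n k u v D hp0 hq0 hn0 (by positivity) hpqR hu hv hDp h1 h2
    have c1' : (0 : ℤ) < k * q - n * p := by exact_mod_cast c1
    have c2' : (0 : ℤ) < k * p - 2 * n * q := by exact_mod_cast c2
    obtain ⟨Q, hQ⟩ := Int.eq_ofNat_of_zero_le c1'.le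
    obtain ⟨P, hP⟩ := Int.eq_ofNat_of_zero_le c2'.le
    have hQR : (k : ℝ) * q - n * p = Q := by exact_mod_cast hQ
    have hPR : (k : ℝ) * p - 2 * n * q = P := by exact_mod_cast hP
    rw [hQR, hPR] at c3 c4
    refine ⟨P, Q, by omega, by omega, ?_, c3, c4, hPR.symm, hQR.symm⟩
    rw [← hQR]
    have hkR : (k : ℝ) ≤ 5 * n + 1 := by exact_mod_cast hk
    have : (k : ℝ) * q ≤ (5 * n + 1) * (C1 * √D) := by gcongr
    have : 0 < (n : ℝ) * p := by positivity
    linarith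
  obtain ⟨P, Q, a1, a2, a3, a4, a5, a6, a7⟩ := key (j + 1) hj1 (by linarith) (by omega)
  obtain ⟨P', Q', b1, b2, b3, b4, b5, b6, b7⟩ := key (j + 1 + 1) (by linarith) (by linarith) (by omega)
  refine ⟨P, Q, P', Q', a1, a2, b1, b2, a3, b3, a4, a5, b4, b5, ?_⟩
  rw [a6, a7, b6, b7]
  push_cast
  have : ((j + 1 : ℝ) * p - 2 * n * q) * ((j + 1 + 1) * q - n * p) -
      ((j + 1 + 1) * p - 2 * n * q) * ((j + 1) * q - n * p) = n * (p ^ 2 - 2 * q ^ 2) := by ring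
  rw [this, hpqR]
  have : (n : ℝ) * (2 * q ^ 2 + 1 - 2 * q ^ 2) = n := by ring
  rw [this]; exact hn0.ne'


lemma sum_inv_sq' (K : ℕ) : ∑ g ∈ Finset.Icc 2 K, (1 : ℝ) / (g : ℝ) ^ 2 ≤ 3 / 4 := by
  have h : ∀ K : ℕ, ∑ g ∈ Finset.Icc 2 (K + 2), (1 : ℝ) / (g : ℝ) ^ 2 ≤ 3 / 4 - 1 / (K + 2) := by
    intro K
    induction K with
    | zero => norm_num
    | succ K ih =>
      rw [show K + 1 + 2 = (K + 2) + 1 by ring, Finset.sum_Icc_succ_top (by omega)]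
      have : (1 : ℝ) / ((K + 2 + 1 : ℕ) : ℝ) ^ 2 ≤ 1 / (K + 2) - 1 / ((K + 1 : ℕ) + 2) := by
        push_cast
        rw [div_sub_div _ _ (by positivity) (by positivity), div_le_div_iff₀ (by positivity) (by positivity)]
        have : (0 : ℝ) ≤ K := by positivity
        nlinarith
      linarith
  rcases Nat.lt_or_ge K 2 with hK | hK
  · rw [Finset.Icc_eq_empty (by omega)]; norm_num
  · obtain ⟨k, rfl⟩ := Nat.exists_eq_add_of_le' hK
    have := h k
    have : (0 : ℝ) ≤ 1 / (k + 2) := by positivity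
    linarith [h k]

lemma coprime_count (K : ℕ) : (K : ℝ) ^ 2 / 4 ≤
    (((Finset.Ioc 0 K ×ˢ Finset.Ioc 0 K).filter (fun z : ℕ × ℕ => Nat.Coprime z.1 z.2)).card : ℝ) := by
  have h1 := Finset.card_filter_add_card_filter_not (s := Finset.Ioc 0 K ×ˢ Finset.Ioc 0 K)
    (fun z : ℕ × ℕ => Nat.Coprime z.1 z.2)
  rw [Finset.card_product, Nat.card_Ioc] at h1
  have h2 : ((Finset.Ioc 0 K ×ˢ Finset.Ioc 0 K).filter (fun z : ℕ × ℕ => ¬ Nat.Coprime z.1 z.2)) ⊆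
      (Finset.Icc 2 K).biUnion (fun g => (Finset.Ioc 0 K).filter (g ∣ ·) ×ˢ (Finset.Ioc 0 K).filter (g ∣ ·)) := by
    intro z hz
    simp only [Finset.mem_filter, Finset.mem_product, Finset.mem_Ioc, Finset.mem_biUnion, Finset.mem_Icc] at hz ⊢
    obtain ⟨⟨⟨a1, a2⟩, b1, b2⟩, hc⟩ := hz
    refine ⟨Nat.gcd z.1 z.2, ⟨?_, ?_⟩, ⟨⟨a1, a2⟩, Nat.gcd_dvd_left _ _⟩, ⟨b1, b2⟩, Nat.gcd_dvd_right _ _⟩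
    · have : 0 < Nat.gcd z.1 z.2 := Nat.gcd_pos_of_pos_left _ a1
      unfold Nat.Coprime at hc; omega
    · exact (Nat.gcd_le_left _ a1).trans a2
  have h3 := (Finset.card_le_card h2).trans Finset.card_biUnion_le
  simp only [Finset.card_product, Nat.Ioc_filter_dvd_card_eq_div] at h3
  have h4 : ((∑ g ∈ Finset.Icc 2 K, K / g * (K / g) : ℕ) : ℝ) ≤ 3 / 4 * (K : ℝ) ^ 2 := by
    push_cast
    calc ∑ g ∈ Finset.Icc 2 K, (((K / g : ℕ) : ℝ) * ((K / g : ℕ) : ℝ))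
        ≤ ∑ g ∈ Finset.Icc 2 K, (1 / (g : ℝ) ^ 2) * (K : ℝ) ^ 2 := by
          apply Finset.sum_le_sum
          intro g _
          have : ((K / g : ℕ) : ℝ) ≤ (K : ℝ) / g := Nat.cast_div_le
          calc _ ≤ (K : ℝ) / g * ((K : ℝ) / g) := by gcongr
            _ = _ := by ring
      _ = (∑ g ∈ Finset.Icc 2 K, (1 / (g : ℝ) ^ 2)) * (K : ℝ) ^ 2 := by rw [Finset.sum_mul]
      _ ≤ _ := by gcongr; exact sum_inv_sq' K
  have h1R := congrArg (Nat.cast : ℕ → ℝ) h1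
  have h3R : (((Finset.filter (fun z : ℕ × ℕ => ¬ Nat.Coprime z.1 z.2) (Finset.Ioc 0 K ×ˢ Finset.Ioc 0 K)).card : ℕ) : ℝ) ≤ _ :=
    Nat.cast_le.mpr h3
  push_cast at h1R h4 h3R
  simp only [Nat.sub_zero] at h1R
  nlinarith

lemma height_dvd (a b c d x y s t : ℕ) (ha : 0 < a) (hb : 0 < b) (hc : 0 < c) (hd : 0 < d)
    (hx : 0 < x) (hy : 0 < y) (hs : 0 < s) (ht : 0 < t)
    (hxy : Nat.Coprime x y) (hst : Nat.Coprime s t)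
    (h1 : x * (c * d) = y * (a * b)) (h2 : s * (b * d) = t * (2 * (a * c))) :
    t ^ 2 * x * y ∣ (b * d) ^ 2 *
      (Nat.gcd x s * Nat.gcd x t * Nat.gcd y s * Nat.gcd y t) := by
  have g1 : Nat.gcd x s ≠ 0 := (Nat.gcd_pos_of_pos_left _ hx).ne'
  have g2 : Nat.gcd x t ≠ 0 := (Nat.gcd_pos_of_pos_left _ hx).ne'
  have g3 : Nat.gcd y s ≠ 0 := (Nat.gcd_pos_of_pos_left _ hy).ne'
  have g4 : Nat.gcd y t ≠ 0 := (Nat.gcd_pos_of_pos_left _ hy).ne'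
  have ha := ha.ne'
  have hb := hb.ne'
  have hc := hc.ne'
  have hd := hd.ne'
  have hx := hx.ne'
  have hy := hy.ne'
  have hs := hs.ne'
  have ht := ht.ne'
  rw [← Nat.factorization_le_iff_dvd (by positivity) (by positivity)]
  intro p
  have e1 := congrArg (fun z => z.factorization p) h1
  have e2 := congrArg (fun z => z.factorization p) h2
  have e3 := congrArg (fun z => z.factorization p) (show Nat.gcd x y = 1 from hxy)
  have e4 := congrArg (fun z => z.factorization p) (show Nat.gcd s t = 1 from hst)
  rw [Nat.factorization_gcd hx hy] at e3
  rw [Nat.factorization_gcd hs ht] at e4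
  rw [Nat.factorization_mul hx (by positivity), Nat.factorization_mul hc hd,
    Nat.factorization_mul hy (by positivity), Nat.factorization_mul ha hb] at e1
  rw [Nat.factorization_mul hs (by positivity), Nat.factorization_mul hb hd,
    Nat.factorization_mul ht (by positivity), Nat.factorization_mul two_ne_zero (by positivity),
    Nat.factorization_mul ha hc] at e2
  rw [Nat.factorization_mul (by positivity) hy, Nat.factorization_mul (by positivity) hx,
    Nat.factorization_mul (by positivity) (by positivity),
    Nat.factorization_mul (by positivity) g4, Nat.factorization_mul (by positivity) g3,
    Nat.factorization_mul g1 g2, Nat.factorization_gcd hx hs, Nat.factorization_gcd hx ht,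
    Nat.factorization_gcd hy hs, Nat.factorization_gcd hy ht, Nat.factorization_pow,
    Nat.factorization_pow, Nat.factorization_mul hb hd]
  simp only [Finsupp.add_apply, Finsupp.inf_apply, Finsupp.smul_apply, smul_eq_mul,
    Nat.factorization_one, Finsupp.zero_apply] at *
  generalize a.factorization p = A at *
  generalize b.factorization p = B at *
  generalize c.factorization p = C at *
  generalize d.factorization p = D at *
  generalize x.factorization p = X at *
  generalize y.factorization p = Y at *
  generalize s.factorization p = S at *
  generalize t.factorization p = T at *
  generalize (2 : ℕ).factorization p = E at *
  have f1 : X = 0 ∨ Y = 0 := by omega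
  have f2 : S = 0 ∨ T = 0 := by omega
  clear * - e1 e2 f1 f2
  rcases f1 with rfl | rfl <;> rcases f2 with rfl | rfl <;> simp <;> omega

lemma region (ε₁ ε₂ τ₁ τ₂ : ℝ) (hε₂ : 0 < ε₂) (hε : ε₂ < ε₁) (hτ₂ : 1 < τ₂) (hτ : τ₂ < τ₁) :
    ∃ u v u' v' D₀ : ℝ, 0 < u ∧ u < v ∧ 0 < u' ∧ u' < v' ∧ 1 ≤ D₀ ∧ ∀ D : ℝ, D₀ ≤ D → ∀ α β : ℝ,
      √2 + u / D < α → α < √2 + v / D → √2 + u' / D < β → β < √2 + v' / D →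
      α < 2 ∧ β < 2 ∧ 1 < α / β ∧ ε₂ < D * (α * β / 2 - 1) ∧ D * (α * β / 2 - 1) ≤ ε₁ ∧
      τ₂ ≤ (α * β / 2 - 1) / (α / β - 1) ∧ (α * β / 2 - 1) / (α / β - 1) ≤ τ₁ := by
  have hs : √2 * √2 = 2 := Real.mul_self_sqrt (by norm_num)
  have hw1 : 1 < √2 := by nlinarith [Real.sqrt_nonneg 2]
  have hw2 : √2 < 3 / 2 := by nlinarith [Real.sqrt_nonneg 2]
  obtain ⟨ε, he1, he2⟩ := exists_between hε
  obtain ⟨τ, ht1, ht2⟩ := exists_between hτ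
  have he0 : 0 < ε := hε₂.trans he1
  have ht0 : 1 < τ := hτ₂.trans ht1
  have hti : 1 / τ < 1 := by rw [div_lt_one (by linarith)]; exact ht0
  have htp : 0 < 1 / τ := by positivity
  obtain ⟨f0, hf0⟩ : ∃ f0, f0 = √2 * ε * (1 + 1 / τ) / 2 := ⟨_, rfl⟩
  obtain ⟨g0, hg0⟩ : ∃ g0, g0 = √2 * ε * (1 - 1 / τ) / 2 := ⟨_, rfl⟩
  have hg0p : 0 < g0 := by
    have : 0 < 1 - 1 / τ := by linarith
    rw [hg0]; positivity
  have hfg : 0 < f0 - g0 := by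
    have : f0 - g0 = √2 * ε * (1 / τ) := by rw [hf0, hg0]; ring
    rw [this]; positivity
  let Φ : ℝ × ℝ × ℝ → ℝ := fun z => (√2 * (z.1 + z.2.1) + z.1 * z.2.1 * z.2.2) / 2
  let Ψ : ℝ × ℝ × ℝ → ℝ := fun z => Φ z * (√2 + z.2.1 * z.2.2) / (z.1 - z.2.1)
  have cΦ : Continuous Φ := by fun_prop
  have cΨ : ContinuousAt Ψ (f0, g0, 0) := by
    apply ContinuousAt.div
    · fun_prop
    · fun_prop
    · exact hfg.ne'
  have vΦ : Φ (f0, g0, 0) = ε := by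
    simp only [Φ]; rw [hf0, hg0]; linear_combination (ε / 2) * hs
  have vΨ : Ψ (f0, g0, 0) = τ := by
    simp only [Ψ]; rw [vΦ]
    have : f0 - g0 = √2 * ε * (1 / τ) := by rw [hf0, hg0]; ring
    rw [this]; field_simp; try simp
  have ev1 : ∀ᶠ z in nhds ((f0, g0, 0) : ℝ × ℝ × ℝ), Φ z ∈ Set.Ioo ε₂ ε₁ :=
    cΦ.continuousAt.eventually (by rw [vΦ]; exact Ioo_mem_nhds he1 he2)
  have ev2 : ∀ᶠ z in nhds ((f0, g0, 0) : ℝ × ℝ × ℝ), Ψ z ∈ Set.Ioo τ₂ τ₁ :=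
    cΨ.eventually (by rw [vΨ]; exact Ioo_mem_nhds ht1 ht2)
  have ev3 : ∀ᶠ z in nhds ((f0, g0, 0) : ℝ × ℝ × ℝ), 0 < z.1 - z.2.1 :=
    (by fun_prop : Continuous fun z : ℝ × ℝ × ℝ => z.1 - z.2.1).continuousAt.eventually
      (lt_mem_nhds hfg)
  have ev4 : ∀ᶠ z in nhds ((f0, g0, 0) : ℝ × ℝ × ℝ), √2 + z.1 * z.2.2 < 2 :=
    (by fun_prop : Continuous fun z : ℝ × ℝ × ℝ => √2 + z.1 * z.2.2).continuousAt.eventually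
      (gt_mem_nhds (by simp))
  obtain ⟨ρ, hρ, hball⟩ := Metric.eventually_nhds_iff.mp (ev1.and (ev2.and (ev3.and ev4)))
  obtain ⟨ρ', hρ'⟩ : ∃ x, x = min ρ (g0 / 2) := ⟨_, rfl⟩
  have r1 : 0 < ρ' := by rw [hρ']; positivity
  have r2 : ρ' ≤ ρ := by rw [hρ']; exact min_le_left _ _
  have r3 : ρ' ≤ g0 / 2 := by rw [hρ']; exact min_le_right _ _
  refine ⟨f0 - ρ', f0 + ρ', g0 - ρ', g0 + ρ', 1 + 1 / ρ', by linarith, by linarith, by linarith,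
    by linarith, by have : 0 < 1 / ρ' := by positivity
                    linarith, ?_⟩
  intro D hD α β h1 h2 h3 h4
  have hip : 0 < 1 / ρ' := by positivity
  have hDp : 0 < D := by linarith
  have hD1 : 1 / D < ρ' := by
    rw [div_lt_comm₀ hDp r1]; linarith
  obtain ⟨f, hf⟩ : ∃ f, f = D * (α - √2) := ⟨_, rfl⟩
  obtain ⟨g, hg⟩ : ∃ g, g = D * (β - √2) := ⟨_, rfl⟩
  have hα : α = √2 + f * (1 / D) := by rw [hf]; field_simp; ring
  have hβ : β = √2 + g * (1 / D) := by rw [hg]; field_simp; ring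
  have q : ∀ k f : ℝ, √2 + k / D < √2 + f * (1 / D) → k < f := by
    intro k f h
    have : k / D < f / D := by rw [mul_one_div] at h; linarith
    exact (div_lt_div_iff_of_pos_right hDp).mp this
  have q' : ∀ k f : ℝ, √2 + f * (1 / D) < √2 + k / D → f < k := by
    intro k f h
    have : f / D < k / D := by rw [mul_one_div] at h; linarith
    exact (div_lt_div_iff_of_pos_right hDp).mp this
  rw [hα] at h1 h2
  rw [hβ] at h3 h4
  have h1 := q _ _ h1
  have h2 := q' _ _ h2
  have h3 := q _ _ h3
  have h4 := q' _ _ h4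
  have hDi : 0 < 1 / D := by positivity
  have hd : dist ((f, g, 1 / D) : ℝ × ℝ × ℝ) (f0, g0, 0) < ρ := by
    rw [Prod.dist_eq, Prod.dist_eq]
    simp only [Real.dist_eq]
    refine max_lt ?_ (max_lt ?_ ?_) <;> rw [abs_lt] <;> constructor <;> linarith
  obtain ⟨⟨k1, k2⟩, ⟨k3, k4⟩, k5, k6⟩ := hball hd
  simp only at k5 k6
  have hgp : 0 < g := by linarith
  have hβp : 0 < β := by rw [hβ]; positivity
  have hαβ : β < α := by
    have : g * (1 / D) < f * (1 / D) := by gcongr; linarith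
    rw [hα, hβ]; linarith
  have e1 : D * (α * β / 2 - 1) = Φ (f, g, 1 / D) := by
    simp only [Φ]; rw [hα, hβ]; field_simp; linear_combination (D ^ 2) * hs
  have e2 : (α * β / 2 - 1) / (α / β - 1) = Ψ (f, g, 1 / D) := by
    simp only [Ψ]; rw [← e1, ← hβ]
    have : f - g = D * (α - β) := by rw [hf, hg]; ring
    rw [this]
    have : α - β ≠ 0 := by linarith
    have h5 : α / β - 1 = (α - β) / β := by field_simp
    rw [h5]
    field_simp
  rw [e1, e2]
  refine ⟨by rw [hα]; exact k6, lt_trans hαβ (by rw [hα]; exact k6), ?_, k1, k2.le, k3.le, k4.le⟩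
  rw [lt_div_iff₀ hβp]; linarith

def Good (r ε₁ ε₂ τ₁ τ₂ B : ℝ) (q : ℕ × ℕ × ℕ × ℕ) : Prop :=
  0 < q.1 ∧ 0 < q.2.1 ∧ 0 < q.2.2.1 ∧ 0 < q.2.2.2 ∧
        Nat.Coprime q.1 q.2.1 ∧ Nat.Coprime q.2.2.1 q.2.2.2 ∧
        (q.2.1 : ℝ) / q.1 > 1 ∧
        ε₂ < B ^ (1 / r) * ((q.2.2.2 : ℝ) / q.2.2.1 - 1) ∧
        B ^ (1 / r) * ((q.2.2.2 : ℝ) / q.2.2.1 - 1) ≤ ε₁ ∧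
        τ₂ ≤ ((q.2.2.2 : ℝ) / q.2.2.1 - 1) / ((q.2.1 : ℝ) / q.1 - 1) ∧
        ((q.2.2.2 : ℝ) / q.2.2.1 - 1) / ((q.2.1 : ℝ) / q.1 - 1) ≤ τ₁ ∧
        (q.2.2.2 : ℝ) ^ 2 * q.1 * q.2.1 /
            ((Nat.gcd q.1 q.2.2.1 : ℝ) * (Nat.gcd q.1 q.2.2.2 : ℝ) *
              (Nat.gcd q.2.1 q.2.2.1 : ℝ) * (Nat.gcd q.2.1 q.2.2.2 : ℝ)) ≤ B

lemma good_finite (r ε₁ ε₂ τ₁ τ₂ B : ℝ) (hB : 1 ≤ B) (hε₂ : 0 < ε₂) :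
    {q | Good r ε₁ ε₂ τ₁ τ₂ B q}.Finite := by
  obtain ⟨N, hN⟩ := exists_nat_ge B
  apply Set.Finite.subset (Set.Finite.prod (Set.finite_Iic N) (Set.Finite.prod (Set.finite_Iic N)
    (Set.Finite.prod (Set.finite_Iic N) (Set.finite_Iic N))))
  rintro ⟨x, y, s, t⟩ ⟨hx, hy, hs, ht, hxy, hst, h1, h2, h3, h4, h5, h6⟩
  simp only at *
  have hB0 : 0 < B := by linarith
  have hts : s < t := by
    have hp : 0 < B ^ (1 / r) * ((t : ℝ) / s - 1) := hε₂.trans h2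
    have hq : 0 < (t : ℝ) / s - 1 := (mul_pos_iff_of_pos_left (by positivity)).mp hp
    have : 1 < (t : ℝ) / s := by linarith
    rw [one_lt_div (by positivity)] at this
    exact_mod_cast this
  have hG : 0 < Nat.gcd x s * Nat.gcd x t * Nat.gcd y s * Nat.gcd y t := by positivity
  have i1 : Nat.gcd x s * Nat.gcd x t ≤ x := Nat.le_of_dvd hx
    (Nat.Coprime.mul_dvd_of_dvd_of_dvd
      (Nat.Coprime.coprime_dvd_left (Nat.gcd_dvd_right _ _)
        (Nat.Coprime.coprime_dvd_right (Nat.gcd_dvd_right _ _) hst))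
      (Nat.gcd_dvd_left _ _) (Nat.gcd_dvd_left _ _))
  have i2 : Nat.gcd y s * Nat.gcd y t ≤ y := Nat.le_of_dvd hy
    (Nat.Coprime.mul_dvd_of_dvd_of_dvd
      (Nat.Coprime.coprime_dvd_left (Nat.gcd_dvd_right _ _)
        (Nat.Coprime.coprime_dvd_right (Nat.gcd_dvd_right _ _) hst))
      (Nat.gcd_dvd_left _ _) (Nat.gcd_dvd_left _ _))
  have i3 : Nat.gcd x s * Nat.gcd y s ≤ s := Nat.le_of_dvd hs
    (Nat.Coprime.mul_dvd_of_dvd_of_dvd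
      (Nat.Coprime.coprime_dvd_left (Nat.gcd_dvd_left _ _)
        (Nat.Coprime.coprime_dvd_right (Nat.gcd_dvd_left _ _) hxy))
      (Nat.gcd_dvd_right _ _) (Nat.gcd_dvd_right _ _))
  have i4 : Nat.gcd x t * Nat.gcd y t ≤ t := Nat.le_of_dvd ht
    (Nat.Coprime.mul_dvd_of_dvd_of_dvd
      (Nat.Coprime.coprime_dvd_left (Nat.gcd_dvd_left _ _)
        (Nat.Coprime.coprime_dvd_right (Nat.gcd_dvd_left _ _) hxy))
      (Nat.gcd_dvd_right _ _) (Nat.gcd_dvd_right _ _))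
  have hGR : (0 : ℝ) < (Nat.gcd x s : ℝ) * (Nat.gcd x t : ℝ) * (Nat.gcd y s : ℝ) * (Nat.gcd y t : ℝ) := by
    exact_mod_cast hG
  rw [div_le_iff₀ hGR] at h6
  have h7 : t ^ 2 * x * y ≤ N * (Nat.gcd x s * Nat.gcd x t * Nat.gcd y s * Nat.gcd y t) := by
    have : (t : ℝ) ^ 2 * x * y ≤ N * ((Nat.gcd x s : ℝ) * (Nat.gcd x t : ℝ) * (Nat.gcd y s : ℝ) * (Nat.gcd y t : ℝ)) :=
      h6.trans (by gcongr)
    exact_mod_cast this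
  have j1 : Nat.gcd x s * Nat.gcd x t * Nat.gcd y s * Nat.gcd y t ≤ x * y := by
    calc _ = (Nat.gcd x s * Nat.gcd x t) * (Nat.gcd y s * Nat.gcd y t) := by ring
      _ ≤ _ := Nat.mul_le_mul i1 i2
  have j2 : Nat.gcd x s * Nat.gcd x t * Nat.gcd y s * Nat.gcd y t ≤ t * t := by
    calc _ = (Nat.gcd x s * Nat.gcd y s) * (Nat.gcd x t * Nat.gcd y t) := by ring
      _ ≤ _ := Nat.mul_le_mul (i3.trans hts.le) i4
  have k1 : t ^ 2 ≤ N := by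
    have : t ^ 2 * (x * y) ≤ N * (x * y) := by
      calc t ^ 2 * (x * y) = t ^ 2 * x * y := by ring
        _ ≤ _ := h7
        _ ≤ _ := Nat.mul_le_mul_left _ j1
    exact Nat.le_of_mul_le_mul_right this (by positivity)
  have k2 : x * y ≤ N := by
    have : (x * y) * (t * t) ≤ N * (t * t) := by
      calc (x * y) * (t * t) = t ^ 2 * x * y := by ring
        _ ≤ _ := h7
        _ ≤ _ := Nat.mul_le_mul_left _ j2
    exact Nat.le_of_mul_le_mul_right this (by positivity)
  have l1 : t ≤ N := by nlinarith
  have l2 : x ≤ N := by nlinarith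
  have l3 : y ≤ N := by nlinarith
  simp only [Set.mem_prod, Set.mem_Iic]
  exact ⟨l2, l3, by omega, l1⟩

lemma reduce (m n : ℕ) (hm : 0 < m) (hn : 0 < n) : ∃ x y : ℕ, 0 < x ∧ 0 < y ∧ Nat.Coprime x y ∧
    x * m = y * n ∧ (y : ℝ) / x = (m : ℝ) / n := by
  obtain ⟨g, hg⟩ : ∃ g, g = Nat.gcd m n := ⟨_, rfl⟩
  have hg0 : 0 < Nat.gcd m n := Nat.gcd_pos_of_pos_left _ hm
  obtain ⟨y, hy⟩ := Nat.gcd_dvd_left m n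
  obtain ⟨x, hx⟩ := Nat.gcd_dvd_right m n
  have hc : Nat.Coprime (m / Nat.gcd m n) (n / Nat.gcd m n) := Nat.coprime_div_gcd_div_gcd hg0
  rw [Nat.div_eq_of_eq_mul_right hg0 hy, Nat.div_eq_of_eq_mul_right hg0 hx] at hc
  rw [← hg] at hy hx hg0
  have hx0 : 0 < x := Nat.pos_of_ne_zero (by rintro rfl; omega)
  have hy0 : 0 < y := Nat.pos_of_ne_zero (by rintro rfl; omega)
  refine ⟨x, y, hx0, hy0, hc.symm, by rw [hx, hy]; ring, ?_⟩
  rw [hx, hy]; push_cast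
  field_simp

lemma point (r ε₁ ε₂ τ₁ τ₂ B : ℝ) (a b c d : ℕ) (ha : 0 < a) (hb : 0 < b) (hc : 0 < c) (hd : 0 < d)
    (α β : ℝ) (hα : (d : ℝ) / a = α) (hβ : (b : ℝ) / c = β)
    (h1 : 1 < α / β) (h2 : ε₂ < B ^ (1 / r) * (α * β / 2 - 1)) (h3 : B ^ (1 / r) * (α * β / 2 - 1) ≤ ε₁)
    (h4 : τ₂ ≤ (α * β / 2 - 1) / (α / β - 1)) (h5 : (α * β / 2 - 1) / (α / β - 1) ≤ τ₁)
    (h6 : ((b : ℝ) * d) ^ 2 ≤ B) :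
    ∃ q, Good r ε₁ ε₂ τ₁ τ₂ B q ∧ (q.2.1 : ℝ) / q.1 = α / β := by
  obtain ⟨x, y, hx, hy, hxy, e1, e2⟩ := reduce (c * d) (a * b) (by positivity) (by positivity)
  obtain ⟨s, t, hs, ht, hst, e3, e4⟩ := reduce (b * d) (2 * (a * c)) (by positivity) (by positivity)
  have f1 : (y : ℝ) / x = α / β := by
    rw [e2, ← hα, ← hβ]; push_cast; field_simp
  have f2 : (t : ℝ) / s = α * β / 2 := by
    rw [e4, ← hα, ← hβ]; push_cast; field_simp
  refine ⟨(x, y, s, t), ⟨hx, hy, hs, ht, hxy, hst, ?_⟩, f1⟩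
  simp only
  rw [f1, f2]
  refine ⟨h1, h2, h3, h4, h5, ?_⟩
  have hdv := height_dvd a b c d x y s t ha hb hc hd hx hy hs ht hxy hst e1 e3
  have hG : 0 < Nat.gcd x s * Nat.gcd x t * Nat.gcd y s * Nat.gcd y t := by positivity
  have hle := Nat.le_of_dvd (by positivity) hdv
  have hGR : (0 : ℝ) < (Nat.gcd x s : ℝ) * (Nat.gcd x t : ℝ) * (Nat.gcd y s : ℝ) * (Nat.gcd y t : ℝ) := by
    exact_mod_cast hG
  rw [div_le_iff₀ hGR]
  have : (t : ℝ) ^ 2 * x * y ≤ ((b : ℝ) * d) ^ 2 * ((Nat.gcd x s : ℝ) * (Nat.gcd x t : ℝ) * (Nat.gcd y s : ℝ) * (Nat.gcd y t : ℝ)) := by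
    exact_mod_cast hle
  exact this.trans (by gcongr)

lemma mediant (l u m n P q P' q' : ℝ) (hm : 0 < m) (hn : 0 < n) (hq : 0 < q) (hq' : 0 < q')
    (h1 : l < P / q) (h2 : P / q < u) (h3 : l < P' / q') (h4 : P' / q' < u) :
    l < (m * P + n * P') / (m * q + n * q') ∧ (m * P + n * P') / (m * q + n * q') < u := by
  rw [lt_div_iff₀ hq] at h1
  rw [div_lt_iff₀ hq] at h2
  rw [lt_div_iff₀ hq'] at h3
  rw [div_lt_iff₀ hq'] at h4
  rw [lt_div_iff₀ (by positivity), div_lt_iff₀ (by positivity)]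
  constructor <;> nlinarith

set_option maxHeartbeats 1000000 in
lemma count_main (r ε₁ ε₂ τ₁ τ₂ : ℝ) (hr : 2 < r) (hε₂ : 0 < ε₂) (hε : ε₂ < ε₁)
    (hτ₂ : 1 < τ₂) (hτ : τ₂ < τ₁) :
    ∃ c₀ : ℝ, 0 < c₀ ∧ ∃ D₀ : ℝ, ∀ B : ℝ, 1 ≤ B → D₀ ≤ B ^ (1 / r) →
      (⌊c₀ * B ^ (1 / 2 - 1 / r)⌋₊ : ℝ) ^ 2 / 4 ≤ (Set.ncard {q | Good r ε₁ ε₂ τ₁ τ₂ B q} : ℝ) := by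
  obtain ⟨u, v, u', v', D₀, hu, huv, hu', huv', hD₀, hreg⟩ := region ε₁ ε₂ τ₁ τ₂ hε₂ hε hτ₂ hτ
  obtain ⟨C₁, hC₁, hf₁⟩ := two_fracs u v hu huv
  obtain ⟨C₂, hC₂, hf₂⟩ := two_fracs u' v' hu' huv'
  refine ⟨1 / (8 * C₁ * C₂), by positivity, D₀, fun B hB hD => ?_⟩
  have hB0 : 0 < B := by linarith
  obtain ⟨D, hDdef⟩ : ∃ D, D = B ^ (1 / r) := ⟨_, rfl⟩
  rw [← hDdef] at hD
  have hD1 : 1 ≤ D := hD₀.trans hD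
  have hDp : 0 < D := by linarith
  obtain ⟨d, a, -, -, hd, ha, -, -, hab, -, hα1, hα2, -, -, -⟩ := hf₁ D hD1
  obtain ⟨P, q, P', q', hP, hq, hP', hq', hqb, hqb', z1, z2, z3, z4, hdet⟩ := hf₂ D hD1
  obtain ⟨K, hK⟩ : ∃ K, K = ⌊1 / (8 * C₁ * C₂) * B ^ (1 / 2 - 1 / r)⌋₊ := ⟨_, rfl⟩
  rw [← hK]
  have hKle : (K : ℝ) ≤ 1 / (8 * C₁ * C₂) * B ^ (1 / 2 - 1 / r) := by
    rw [hK]; exact Nat.floor_le (by positivity)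
  have hsD : √D * √D = D := Real.mul_self_sqrt hDp.le
  have hBD : B ^ (1 / 2 - 1 / r) * D = B ^ (1 / 2 : ℝ) := by
    rw [hDdef, ← Real.rpow_add hB0]; congr 1; ring
  have hex : ∀ z : ℕ × ℕ, ∃ w, z ∈ ((Finset.Ioc 0 K ×ˢ Finset.Ioc 0 K).filter
      (fun z : ℕ × ℕ => Nat.Coprime z.1 z.2)) → Good r ε₁ ε₂ τ₁ τ₂ B w ∧
      (w.2.1 : ℝ) / w.1 = ((d : ℝ) / a) / (((z.1 : ℝ) * P + z.2 * P') / (z.1 * q + z.2 * q')) := by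
    rintro ⟨m, n⟩
    by_cases hz : (m, n) ∈ ((Finset.Ioc 0 K ×ˢ Finset.Ioc 0 K).filter
      (fun z : ℕ × ℕ => Nat.Coprime z.1 z.2))
    swap
    · exact ⟨(0, 0, 0, 0), fun h => absurd h hz⟩
    simp only [Finset.mem_filter, Finset.mem_product, Finset.mem_Ioc] at hz
    obtain ⟨⟨⟨hm, hmK⟩, hn, hnK⟩, -⟩ := hz
    have hmR : (m : ℝ) ≤ K := by exact_mod_cast hmK
    have hnR : (n : ℝ) ≤ K := by exact_mod_cast hnK
    obtain ⟨w1, w2⟩ := mediant _ _ (m : ℝ) n P q P' q' (by positivity) (by positivity)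
      (by positivity) (by positivity) z1 z2 z3 z4
    obtain ⟨o1, o2, o3, o4, o5, o6, o7⟩ := hreg D hD _ _ hα1 hα2 w1 w2
    rw [hDdef] at o4 o5
    obtain ⟨w, hw1, hw2⟩ := point r ε₁ ε₂ τ₁ τ₂ B a (m * P + n * P') (m * q + n * q') d ha
      (by positivity) (by positivity) hd _ _ rfl (by push_cast; rfl) o3 o4 o5 o6 o7 (by
        have b1 : (d : ℝ) ≤ 2 * (C₁ * √D) := by
          rw [div_lt_iff₀ (by positivity)] at o1
          linarith
        have b2 : ((m * P + n * P' : ℕ) : ℝ) ≤ 4 * K * (C₂ * √D) := by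
          push_cast
          rw [div_lt_iff₀ (by positivity)] at o2
          have c1 : (m : ℝ) * q ≤ K * (C₂ * √D) := by gcongr
          have c2 : (n : ℝ) * q' ≤ K * (C₂ * √D) := by gcongr
          linarith
        have b3 : ((m * P + n * P' : ℕ) : ℝ) * d ≤ B ^ (1 / 2 : ℝ) := by
          calc ((m * P + n * P' : ℕ) : ℝ) * d ≤ (4 * K * (C₂ * √D)) * (2 * (C₁ * √D)) := by gcongr
            _ = (8 * C₁ * C₂) * K * (√D * √D) := by ring
            _ = (8 * C₁ * C₂) * K * D := by rw [hsD]
            _ ≤ (8 * C₁ * C₂) * (1 / (8 * C₁ * C₂) * B ^ (1 / 2 - 1 / r)) * D := by gcongr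
            _ = B ^ (1 / 2 - 1 / r) * D := by field_simp
            _ = _ := hBD
        calc (((m * P + n * P' : ℕ) : ℝ) * d) ^ 2 ≤ (B ^ (1 / 2 : ℝ)) ^ 2 := by gcongr
          _ = B := by rw [← Real.sqrt_eq_rpow, Real.sq_sqrt hB0.le])
    exact ⟨w, fun _ => ⟨hw1, hw2⟩⟩
  choose F hF using hex
  refine (coprime_count K).trans ?_
  rw [← Set.ncard_coe_finset]
  apply Nat.cast_le.mpr
  refine Set.ncard_le_ncard_of_injOn F ?_ ?_ (good_finite r ε₁ ε₂ τ₁ τ₂ B hB hε₂)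
  · intro z hz
    exact (hF z hz).1
  · rintro ⟨m, n⟩ hz ⟨m', n'⟩ hz' he
    have h1 := (hF _ hz).2
    have h2 := (hF _ hz').2
    rw [he, h2] at h1
    have hz := Finset.mem_coe.mp hz
    have hz' := Finset.mem_coe.mp hz'
    simp only [Finset.mem_filter, Finset.mem_product, Finset.mem_Ioc] at hz hz' h1
    obtain ⟨⟨⟨hm, -⟩, hn, -⟩, hmn⟩ := hz
    obtain ⟨⟨⟨hm', -⟩, hn', -⟩, hmn'⟩ := hz'
    have h3 : ((m' : ℝ) * P + n' * P') / (m' * q + n' * q') = ((m : ℝ) * P + n * P') / (m * q + n * q') := by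
      have hda : (d : ℝ) / a ≠ 0 := by positivity
      rw [div_eq_mul_inv ((d : ℝ) / a), div_eq_mul_inv ((d : ℝ) / a)] at h1
      exact inv_injective (mul_left_cancel₀ hda h1)
    rw [div_eq_div_iff (by positivity) (by positivity)] at h3
    have h4 : ((m' : ℝ) * n - m * n') * (P * q' - P' * q) = 0 := by linear_combination h3
    have h5 : (m' : ℝ) * n - m * n' = 0 := (mul_eq_zero.mp h4).resolve_right hdet
    have h6 : m' * n = m * n' := by
      have : (m' : ℝ) * n = m * n' := by linarith
      exact_mod_cast this
    have d1 : m ∣ m' := hmn.dvd_of_dvd_mul_right (Dvd.intro _ h6.symm)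
    have d2 : m' ∣ m := hmn'.dvd_of_dvd_mul_right (Dvd.intro _ h6)
    have hmm : m = m' := Nat.dvd_antisymm d1 d2
    subst hmm
    have hnn := Nat.eq_of_mul_eq_mul_left hm h6
    rw [hnn]

/-- Lower bound for the sub-critical zoom (`2 < r < 144/55`) at `Q = [1:1]×[1:1]` on the
toric surface `Y₄`: for `0 < η < 1/35`, the number of rational points `[x:y]×[s:t]` with
`y/x > 1`, `ε₂ < B^(1/r)(t/s − 1) ≤ ε₁`, `τ₂ ≤ (t/s−1)/(y/x−1) ≤ τ₁` and anticanonical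
height at most `B` is at least `c·B^((1+η)(1/2−1/r))·(log B)³` for all large `B`. -/
theorem stmt_15 (r η ε₁ ε₂ τ₁ τ₂ : ℝ) (hr₁ : 2 < r) (hr₂ : r < 144 / 55)
    (hη₁ : 0 < η) (hη₂ : η < 1 / 35) (hε₂ : 0 < ε₂) (hε : ε₂ < ε₁)
    (hτ₂ : 1 < τ₂) (hτ : τ₂ < τ₁) :
    ∃ c : ℝ, 0 < c ∧ ∃ B₀ : ℝ, ∀ B : ℝ, B ≥ B₀ →
      c * B ^ ((1 + η) * (1 / 2 - 1 / r)) * Real.log B ^ 3 ≤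
      (Set.ncard {q : ℕ × ℕ × ℕ × ℕ |
        0 < q.1 ∧ 0 < q.2.1 ∧ 0 < q.2.2.1 ∧ 0 < q.2.2.2 ∧
        Nat.Coprime q.1 q.2.1 ∧ Nat.Coprime q.2.2.1 q.2.2.2 ∧
        (q.2.1 : ℝ) / q.1 > 1 ∧
        ε₂ < B ^ (1 / r) * ((q.2.2.2 : ℝ) / q.2.2.1 - 1) ∧
        B ^ (1 / r) * ((q.2.2.2 : ℝ) / q.2.2.1 - 1) ≤ ε₁ ∧
        τ₂ ≤ ((q.2.2.2 : ℝ) / q.2.2.1 - 1) / ((q.2.1 : ℝ) / q.1 - 1) ∧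
        ((q.2.2.2 : ℝ) / q.2.2.1 - 1) / ((q.2.1 : ℝ) / q.1 - 1) ≤ τ₁ ∧
        (q.2.2.2 : ℝ) ^ 2 * q.1 * q.2.1 /
            ((Nat.gcd q.1 q.2.2.1 : ℝ) * (Nat.gcd q.1 q.2.2.2 : ℝ) *
              (Nat.gcd q.2.1 q.2.2.1 : ℝ) * (Nat.gcd q.2.1 q.2.2.2 : ℝ)) ≤ B} : ℝ) := by
  obtain ⟨c₀, hc₀, D₀, hmain⟩ := count_main r ε₁ ε₂ τ₁ τ₂ hr₁ hε₂ hε hτ₂ hτ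
  have hδ : 0 < 1 / 2 - 1 / r := by
    have : 1 / r < 1 / 2 := one_div_lt_one_div_of_lt (by norm_num) hr₁
    linarith
  obtain ⟨δ, hδe⟩ : ∃ δ, δ = 1 / 2 - 1 / r := ⟨_, rfl⟩
  rw [← hδe] at hδ hmain ⊢
  have hri : 0 < 1 / r := by
    have : 0 < r := by linarith
    positivity
  have hηδ : 0 < (1 - η) * δ := mul_pos (by linarith) hδ
  have ev1 := (tendsto_rpow_atTop hri).eventually_ge_atTop D₀
  have ev2 := (tendsto_rpow_atTop hδ).eventually_ge_atTop (2 / c₀)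
  have ev3 := (isLittleO_log_rpow_rpow_atTop 3 hηδ).bound (by norm_num : (0 : ℝ) < 1)
  obtain ⟨B₀, hB₀⟩ := Filter.eventually_atTop.mp
    (ev1.and (ev2.and (ev3.and (Filter.eventually_ge_atTop (1 : ℝ)))))
  refine ⟨c₀ ^ 2 / 16, by positivity, B₀, fun B hB => ?_⟩
  obtain ⟨h1, h2, h3, h4⟩ := hB₀ B hB
  have hB0 : 0 < B := by linarith
  have hm := hmain B h4 h1
  have hlog : Real.log B ^ 3 ≤ B ^ ((1 - η) * δ) := by
    have hl : 0 ≤ Real.log B := Real.log_nonneg h4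
    have h3' : Real.log B ^ (3 : ℝ) ≤ B ^ ((1 - η) * δ) := by
      rw [one_mul, Real.norm_of_nonneg (by positivity), Real.norm_of_nonneg (by positivity)] at h3
      exact h3
    have : Real.log B ^ (3 : ℝ) = Real.log B ^ 3 := by exact_mod_cast Real.rpow_natCast (Real.log B) 3
    rwa [this] at h3'
  have hfl : c₀ * B ^ δ / 2 ≤ (⌊c₀ * B ^ δ⌋₊ : ℝ) := by
    have := Nat.lt_floor_add_one (c₀ * B ^ δ)
    rw [div_le_iff₀ hc₀] at h2
    linarith
  calc c₀ ^ 2 / 16 * B ^ ((1 + η) * δ) * Real.log B ^ 3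
      ≤ c₀ ^ 2 / 16 * B ^ ((1 + η) * δ) * B ^ ((1 - η) * δ) := by gcongr
    _ = c₀ ^ 2 / 16 * (B ^ δ * B ^ δ) := by
      rw [mul_assoc, ← Real.rpow_add hB0, ← Real.rpow_add hB0]; congr 2; ring
    _ = (c₀ * B ^ δ / 2) ^ 2 / 4 := by ring
    _ ≤ (⌊c₀ * B ^ δ⌋₊ : ℝ) ^ 2 / 4 := by gcongr
    _ ≤ _ := hm
end
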